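/- arXiv:0811.4102 — 10 statements merged into one kernel-verified Lean document; each statement's English description precedes it below -/
import Mathlib

section
/- For all real numbers μ > 0 and ν > 0 and every complex number z, the series ∑_{i=0}^∞ z^i / Γ(μ·i + ν) is (absolutely) summable; consequently the two-parameter Mittag-Leffler function E_{μ,ν} is well defined on all of ℂ. -/
/-- Lower bound for Gamma obtained by truncating Euler's integral. -/
theorem Gamma_lower_bound (s T : ℝ) (hs : 1 ≤ s) (hT : 1 ≤ T) :
    T ^ (s - 1) * Real.exp (-T) ≤ Real.Gamma s := by
  have hs0 : 0 < s := by linarith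
  have hT0 : 0 < T := by linarith
  have hint := Real.GammaIntegral_convergent hs0
  have hsub : Set.Ioi T ⊆ Set.Ioi (0 : ℝ) := Set.Ioi_subset_Ioi hT0.le
  rw [Real.Gamma_eq_integral hs0]
  calc T ^ (s - 1) * Real.exp (-T)
      = ∫ x in Set.Ioi T, Real.exp (-x) * T ^ (s - 1) := by
        rw [MeasureTheory.integral_mul_const, integral_exp_neg_Ioi, mul_comm]
    _ ≤ ∫ x in Set.Ioi T, Real.exp (-x) * x ^ (s - 1) := by
        refine MeasureTheory.setIntegral_mono_on ?_ (hint.mono_set hsub) measurableSet_Ioi ?_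
        · exact (integrableOn_exp_neg_Ioi T).mul_const _
        · intro x hx
          have hx' : T < x := hx
          have : T ^ (s - 1) ≤ x ^ (s - 1) :=
            Real.rpow_le_rpow hT0.le hx'.le (by linarith)
          exact mul_le_mul_of_nonneg_left this (Real.exp_pos _).le
    _ ≤ ∫ x in Set.Ioi 0, Real.exp (-x) * x ^ (s - 1) := by
        refine MeasureTheory.setIntegral_mono_set hint ?_ hsub.eventuallyLE
        filter_upwards [MeasureTheory.ae_restrict_mem measurableSet_Ioi] with x hx
        have hx' : 0 < x := hx
        exact mul_nonneg (Real.exp_pos _).le (Real.rpow_nonneg hx'.le _)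

/-- The two-parameter Mittag-Leffler series `∑ zⁱ / Γ(μ i + ν)` is absolutely
summable for every `z : ℂ`, whenever `μ > 0` and `ν > 0`; hence `E_{μ,ν}` is
well defined on all of `ℂ`. -/
theorem mittagLeffler_summable (μ ν : ℝ) (hμ : 0 < μ) (hν : 0 < ν) (z : ℂ) :
    Summable (fun i : ℕ => ‖z ^ i / (Real.Gamma (μ * i + ν) : ℂ)‖) := by
  have hz := norm_nonneg z
  set R : ℝ := 2 * ‖z‖ + 1 with hR
  have hR1 : 1 ≤ R := by linarith
  set T : ℝ := R ^ (1 / μ) with hTdef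
  have hT1 : 1 ≤ T := Real.one_le_rpow hR1 (by positivity)
  have hT0 : 0 < T := by linarith
  have hTμ : T ^ μ = R := by
    rw [hTdef, ← Real.rpow_mul (by linarith), one_div_mul_cancel hμ.ne', Real.rpow_one]
  have hr1 : ‖z‖ / R < 1 := by rw [div_lt_one (by linarith)]; linarith
  have hgeo := (summable_geometric_of_lt_one (by positivity) hr1).mul_left
    (T ^ (ν - 1) * Real.exp (-T))⁻¹
  refine Summable.of_norm_bounded_eventually_nat hgeo ?_
  filter_upwards [Filter.eventually_ge_atTop ⌈1 / μ⌉₊] with i hi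
  have hi' : 1 / μ ≤ i := Nat.ceil_le.mp hi
  have hi2 : 1 ≤ μ * i := by
    rw [div_le_iff₀ hμ] at hi'; linarith
  have hG := Gamma_lower_bound (μ * i + ν) T (by linarith) hT1
  have hpow : T ^ (μ * i + ν - 1) = R ^ i * T ^ (ν - 1) := by
    rw [add_sub_assoc, Real.rpow_add hT0, Real.rpow_mul hT0.le, hTμ, Real.rpow_natCast]
  rw [hpow] at hG
  have hpos : 0 < R ^ i * T ^ (ν - 1) * Real.exp (-T) := by positivity
  rw [norm_norm, norm_div, norm_pow, Complex.norm_real, Real.norm_eq_abs,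
    abs_of_pos (hpos.trans_le hG)]
  calc ‖z‖ ^ i / Real.Gamma (μ * i + ν)
      ≤ ‖z‖ ^ i / (R ^ i * T ^ (ν - 1) * Real.exp (-T)) := by gcongr
    _ = (T ^ (ν - 1) * Real.exp (-T))⁻¹ * (‖z‖ / R) ^ i := by
        rw [div_pow, mul_assoc, div_mul_eq_div_div, div_eq_mul_inv _ (T ^ (ν - 1) * _), mul_comm]
end

section
/- Let q be a real number with 0 < q < 2 and let λ be a nonzero complex number with |arg λ| < π(1 − q/2). Then the function t ↦ t^{q−1} · E_{q,q}(−λ t^q), defined for t > 0, tends to 0 as t → ∞. (Stability of a single fractional mode: the pole condition |arg λ| < π(1 − q/2) implies the impulse response of 1/(s^q + λ) decays to zero.) -/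
open Real Filter

/-- The two-parameter Mittag-Leffler function `E_{μ,ν}(z) = ∑ zⁱ / Γ(μ i + ν)`. -/
noncomputable def mittagLeffler (μ ν : ℝ) (z : ℂ) : ℂ :=
  ∑' i : ℕ, z ^ i / (Real.Gamma (μ * i + ν) : ℂ)




open MeasureTheory in
lemma ml_integrable_aux (a : ℝ) (ha : -1 < a) (s : ℂ) (hs : 0 < s.re) :
    IntegrableOn (fun x : ℝ => ((x ^ a : ℝ) : ℂ) * Complex.exp (-s * x)) (Set.Ioi 0) := by
  have h := integrableOn_rpow_mul_exp_neg_mul_rpow (p := 1) (s := a) (b := s.re) ha one_pos hs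
  refine Integrable.mono' h ?_ ?_
  · apply Measurable.aestronglyMeasurable
    fun_prop
  · filter_upwards [ae_restrict_mem measurableSet_Ioi] with x hx
    have hx' : (0:ℝ) < x := hx
    rw [norm_mul, Complex.norm_exp, Complex.norm_real, Real.norm_of_nonneg (by positivity)]
    simp

open MeasureTheory in
lemma ml_gamma_differentiable (a : ℝ) (ha : 0 < a) (s : ℂ) (hs : 0 < s.re) :
    DifferentiableAt ℂ (fun s : ℂ => ∫ x in Set.Ioi (0:ℝ),
      ((x ^ (a - 1) : ℝ) : ℂ) * Complex.exp (-s * x)) s := by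
  have hε : 0 < s.re / 2 := by linarith
  have hb := integrableOn_rpow_mul_exp_neg_mul_rpow (p := 1) (s := a) (b := s.re / 2)
    (by linarith) one_pos hε
  have key := hasDerivAt_integral_of_dominated_loc_of_deriv_le (μ := volume.restrict (Set.Ioi (0:ℝ)))
    (F := fun (s : ℂ) (x : ℝ) => ((x ^ (a - 1) : ℝ) : ℂ) * Complex.exp (-s * x))
    (F' := fun (s : ℂ) (x : ℝ) => ((x ^ (a - 1) : ℝ) : ℂ) * (Complex.exp (-s * x) * (-x)))
    (x₀ := s) (bound := fun x : ℝ => x ^ a * rexp (-(s.re / 2) * x ^ (1:ℝ)))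
    (s := Metric.ball s (s.re / 2)) (Metric.ball_mem_nhds _ hε) ?_ ?_ ?_ ?_ hb ?_
  · exact key.2.differentiableAt
  · refine Eventually.of_forall fun z => ?_
    apply Measurable.aestronglyMeasurable
    fun_prop
  · exact ml_integrable_aux (a - 1) (by linarith) s hs
  · apply Measurable.aestronglyMeasurable
    fun_prop
  · filter_upwards [ae_restrict_mem measurableSet_Ioi] with x hx z hz
    have hx' : (0:ℝ) < x := hx
    have hz1 : s.re / 2 ≤ z.re := by
      have h1 : ‖z - s‖ < s.re / 2 := by simpa [dist_eq_norm] using hz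
      have h2 := (abs_le.1 (Complex.abs_re_le_norm (z - s))).1
      simp at h2
      linarith
    rw [norm_mul, norm_mul, Complex.norm_exp, Complex.norm_real,
      Real.norm_of_nonneg (by positivity), norm_neg, Complex.norm_real,
      Real.norm_of_nonneg hx'.le]
    have h3 : x ^ a = x ^ (a - 1) * x := by
      rw [Real.rpow_sub_one hx'.ne']; field_simp
    rw [h3, mul_assoc, mul_comm (rexp _) x]
    rw [← mul_assoc, ← mul_assoc, Real.rpow_one]
    gcongr
    simp
    gcongr
  · filter_upwards with x z hz
    have h1 : HasDerivAt (fun z : ℂ => -z * (x:ℂ)) (-(x:ℂ)) z := by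
      simpa using (hasDerivAt_id z).neg.mul_const (x:ℂ)
    exact (h1.cexp).const_mul _

open MeasureTheory in
lemma ml_gamma_int (a : ℝ) (ha : 0 < a) (s : ℂ) (hs : 0 < s.re) :
    ∫ x in Set.Ioi (0:ℝ), ((x ^ (a - 1) : ℝ) : ℂ) * Complex.exp (-s * x) =
      (Real.Gamma a : ℂ) * s ^ (-(a:ℂ)) := by
  have hopen : IsOpen {z : ℂ | 0 < z.re} := isOpen_lt continuous_const Complex.continuous_re
  have hconv : Convex ℝ {z : ℂ | 0 < z.re} := convex_halfSpace_re_gt 0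
  have h1 : AnalyticOnNhd ℂ (fun s : ℂ => ∫ x in Set.Ioi (0:ℝ),
      ((x ^ (a - 1) : ℝ) : ℂ) * Complex.exp (-s * x)) {z : ℂ | 0 < z.re} :=
    DifferentiableOn.analyticOnNhd
      (fun z hz => (ml_gamma_differentiable a ha z hz).differentiableWithinAt) hopen
  have h2 : AnalyticOnNhd ℂ (fun s : ℂ => (Real.Gamma a : ℂ) * s ^ (-(a:ℂ))) {z : ℂ | 0 < z.re} := by
    refine DifferentiableOn.analyticOnNhd (fun z hz => ?_) hopen
    have : z ∈ Complex.slitPlane := Or.inl hz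
    exact ((differentiableAt_id.cpow_const this).const_mul _).differentiableWithinAt
  refine h1.eqOn_of_preconnected_of_frequently_eq h2 hconv.isPreconnected
    (z₀ := 1) (by simp) ?_ hs
  have hreal : ∀ r : ℝ, 0 < r → (∫ x in Set.Ioi (0:ℝ), ((x ^ (a - 1) : ℝ) : ℂ) *
      Complex.exp (-(r:ℂ) * x)) = (Real.Gamma a : ℂ) * (r:ℂ) ^ (-(a:ℂ)) := by
    intro r hr
    have := Real.integral_rpow_mul_exp_neg_mul_Ioi ha hr
    have h3 : (∫ x in Set.Ioi (0:ℝ), ((x ^ (a - 1) : ℝ) : ℂ) *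
      Complex.exp (-(r:ℂ) * x)) = ((∫ x in Set.Ioi (0:ℝ), x ^ (a - 1) * rexp (-(r * x)) : ℝ) : ℂ) := by
      rw [← integral_complex_ofReal]
      congr 1
      ext x
      push_cast
      simp
    rw [h3, this, ← Complex.ofReal_neg, ← Complex.ofReal_cpow hr.le, mul_comm (Real.Gamma a : ℂ),
      Complex.ofReal_mul, one_div, Real.inv_rpow hr.le, Real.rpow_neg hr.le]
  have ht : Tendsto (fun n : ℕ => ((1 + 1 / ((n:ℝ) + 1) : ℝ) : ℂ)) atTop (nhdsWithin 1 {1}ᶜ) := by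
    refine tendsto_nhdsWithin_iff.2 ⟨?_, Eventually.of_forall fun n => ?_⟩
    · have := (tendsto_one_div_add_atTop_nhds_zero_nat (𝕜 := ℝ)).const_add 1
      have h5 := (Complex.continuous_ofReal.tendsto _).comp this
      simpa [Function.comp_def] using h5
    · have : (0:ℝ) < 1 / ((n:ℝ) + 1) := by positivity
      simp only [Set.mem_compl_iff, Set.mem_singleton_iff]
      intro h
      have h' : (1 + 1 / ((n:ℝ) + 1) : ℝ) = 1 := by exact_mod_cast h
      linarith
  refine ht.frequently (Frequently.of_forall fun n => ?_)
  exact hreal _ (by positivity)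

lemma ml_norm_ge_re (σ ω : ℝ) (_hσ : 0 < σ) : σ ≤ ‖(σ + ω * Complex.I : ℂ)‖ := by
  have := Complex.abs_re_le_norm (σ + ω * Complex.I : ℂ)
  simp at this
  exact (le_abs_self _).trans this

lemma ml_norm_ge_im (σ ω : ℝ) : |ω| ≤ ‖(σ + ω * Complex.I : ℂ)‖ := by
  have := Complex.abs_im_le_norm (σ + ω * Complex.I : ℂ)
  simpa using this

open MeasureTheory in
lemma ml_integrable_rpow (a σ : ℝ) (ha : 1 < a) (hσ : 0 < σ) :
    Integrable (fun ω : ℝ => ‖(σ + ω * Complex.I : ℂ)‖ ^ (-a)) := by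
  have h := integrable_one_add_norm (E := ℝ) (μ := volume) (r := a) (by simpa using ha)
  refine Integrable.mono' (h.const_mul ((σ / (1 + σ)) ^ (-a))) ?_ ?_
  · apply Measurable.aestronglyMeasurable
    fun_prop
  · filter_upwards with ω
    rw [Real.norm_of_nonneg (by positivity), ← Real.mul_rpow (by positivity) (by positivity)]
    apply Real.rpow_le_rpow_of_nonpos (by positivity) _ (by linarith)
    have h1 := ml_norm_ge_re σ ω hσ
    have h2 := ml_norm_ge_im σ ω
    rw [div_mul_eq_mul_div, div_le_iff₀ (by positivity), Real.norm_eq_abs]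
    nlinarith

open MeasureTheory in
lemma ml_inversion (a σ t : ℝ) (ha : 1 < a) (hσ : 0 < σ) (ht : 0 < t) :
    ∫ ω : ℝ, Complex.exp ((σ + ω * Complex.I) * t) * (σ + ω * Complex.I : ℂ) ^ (-(a:ℂ)) =
      2 * π * ((t ^ (a - 1) : ℝ) : ℂ) / (Real.Gamma a : ℂ) := by
  set f : ℝ → ℂ := (Set.Ioi (0:ℝ)).indicator
    (fun x : ℝ => ((x ^ (a - 1) : ℝ) : ℂ) * Complex.exp (-(σ:ℂ) * x)) with hf
  have hΓ : (Real.Gamma a : ℂ) ≠ 0 := by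
    exact_mod_cast (Real.Gamma_pos_of_pos (by linarith)).ne'
  have hfint : Integrable f :=
    (integrable_indicator_iff measurableSet_Ioi).2
      (ml_integrable_aux (a - 1) (by linarith) σ (by simpa using hσ))
  have hFf : FourierTransform.fourier f = fun ξ : ℝ => (Real.Gamma a : ℂ) *
      (σ + ((2 * π * ξ : ℝ) : ℂ) * Complex.I : ℂ) ^ (-(a:ℂ)) := by
    ext ξ
    rw [Real.fourier_real_eq_integral_exp_smul, ← ml_gamma_int a (by linarith) _ (by simpa using hσ),
      ← integral_indicator measurableSet_Ioi]
    congr 1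
    ext x
    by_cases hx : x ∈ Set.Ioi (0:ℝ)
    · simp only [hf, Set.indicator_of_mem hx, smul_eq_mul]
      rw [mul_left_comm, ← Complex.exp_add]
      congr 2
      push_cast
      ring
    · simp only [hf, Set.indicator_of_notMem hx, smul_zero]
  have hFint : Integrable (FourierTransform.fourier f) := by
    rw [hFf]
    apply Integrable.const_mul
    have h0 : Integrable (fun ω : ℝ => (σ + (ω : ℂ) * Complex.I : ℂ) ^ (-(a:ℂ))) := by
      refine Integrable.mono' (ml_integrable_rpow a σ ha hσ) ?_ ?_
      · apply Measurable.aestronglyMeasurable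
        fun_prop
      · filter_upwards with ω
        rw [← Complex.ofReal_neg, Complex.norm_cpow_real]
    exact h0.comp_mul_left' (by positivity : (2 * π : ℝ) ≠ 0)
  have hcont : ContinuousAt f t := by
    have h1 : f =ᶠ[nhds t] (fun x : ℝ => ((x ^ (a - 1) : ℝ) : ℂ) * Complex.exp (-(σ:ℂ) * x)) := by
      filter_upwards [Ioi_mem_nhds ht] with x hx
      simp [hf, Set.indicator_of_mem hx]
    refine ContinuousAt.congr ?_ h1.symm
    refine ContinuousAt.mul ?_ (by fun_prop)
    exact Complex.continuous_ofReal.continuousAt.comp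
      (Real.continuousAt_rpow_const _ _ (Or.inl ht.ne'))
  have hinv := hfint.fourierInv_fourier_eq hFint hcont
  rw [Real.fourierInv_eq', hFf] at hinv
  simp only [hf, Set.indicator_of_mem (show t ∈ Set.Ioi (0:ℝ) from ht)] at hinv
  have hcv := Measure.integral_comp_mul_left (fun ω : ℝ =>
    Complex.exp ((σ + ω * Complex.I) * t) * (σ + ω * Complex.I : ℂ) ^ (-(a:ℂ))) (2 * π)
  have hl : (∫ ξ : ℝ, Complex.exp ((σ + ((2 * π * ξ : ℝ) : ℂ) * Complex.I) * t) *
      (σ + ((2 * π * ξ : ℝ) : ℂ) * Complex.I : ℂ) ^ (-(a:ℂ))) =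
      Complex.exp (σ * t) / (Real.Gamma a : ℂ) *
        (((t ^ (a - 1) : ℝ) : ℂ) * Complex.exp (-(σ:ℂ) * t)) := by
    rw [← hinv, ← integral_const_mul]
    congr 1
    ext ξ
    have h2 : Complex.exp ((σ + ((2 * π * ξ : ℝ) : ℂ) * Complex.I) * t) =
      Complex.exp (σ * t) * Complex.exp (((2 * π * (inner ℝ ξ t) : ℝ) : ℂ) * Complex.I) := by
      rw [← Complex.exp_add]
      congr 1
      simp
      ring
    rw [h2, smul_eq_mul]
    field_simp
  rw [hl] at hcv
  have h3 : Complex.exp (σ * t) * Complex.exp (-(σ:ℂ) * t) = 1 := by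
    rw [← Complex.exp_add]; simp
  have h4 : Complex.exp (σ * t) / (Real.Gamma a : ℂ) *
        (((t ^ (a - 1) : ℝ) : ℂ) * Complex.exp (-(σ:ℂ) * t)) =
        ((t ^ (a - 1) : ℝ) : ℂ) / (Real.Gamma a : ℂ) := by
    rw [div_mul_eq_mul_div, mul_left_comm, h3, mul_one]
  rw [h4, abs_of_pos (by positivity), Complex.real_smul] at hcv
  have h5 : 2 * (π : ℂ) * (((2 * π)⁻¹ : ℝ) : ℂ) = 1 := by
    have : (π : ℂ) ≠ 0 := by exact_mod_cast Real.pi_ne_zero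
    push_cast
    field_simp
  rw [mul_div_assoc, hcv, ← mul_assoc, h5, one_mul]

/-- dominating function -/
noncomputable def mlDom (p ω : ℝ) : ℝ := min (|ω| ^ (p - 1)) (|ω| ^ (-p - 1))

open MeasureTheory in
lemma mlDom_integrable (p : ℝ) (hp : 0 < p) : Integrable (mlDom p) := by
  have hmeas : Measurable (mlDom p) := by
    unfold mlDom; fun_prop
  have hpos : IntegrableOn (mlDom p) (Set.Ioi 0) := by
    rw [← Set.Ioc_union_Ioi_eq_Ioi (zero_le_one (α := ℝ)), integrableOn_union]
    constructor
    · have h := (intervalIntegral.intervalIntegrable_rpow' (a := 0) (b := 1) (r := p - 1)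
        (by linarith))
      rw [intervalIntegrable_iff_integrableOn_Ioc_of_le zero_le_one] at h
      refine Integrable.mono' h hmeas.aestronglyMeasurable ?_
      filter_upwards [ae_restrict_mem measurableSet_Ioc] with x hx
      rw [Real.norm_of_nonneg (by unfold mlDom; positivity)]
      unfold mlDom
      rw [abs_of_pos hx.1]
      exact min_le_left _ _
    · have h := integrableOn_Ioi_rpow_of_lt (a := -p - 1) (c := 1) (by linarith) one_pos
      refine Integrable.mono' h hmeas.aestronglyMeasurable ?_
      filter_upwards [ae_restrict_mem measurableSet_Ioi] with x hx
      rw [Real.norm_of_nonneg (by unfold mlDom; positivity)]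
      unfold mlDom
      rw [abs_of_pos (zero_lt_one.trans hx)]
      exact min_le_right _ _
  have hneg : IntegrableOn (mlDom p) (Set.Iic 0) := by
    have h1 : IntegrableOn (fun x => mlDom p (-x)) (Set.Iio 0) := by
      apply IntegrableOn.comp_neg_Iio
      simpa using hpos
    have h2 : (fun x => mlDom p (-x)) = mlDom p := by
      ext x; simp [mlDom]
    rw [h2] at h1
    exact Iff.mpr integrableOn_Iic_iff_integrableOn_Iio h1
  have := hneg.union hpos
  rwa [Set.Iic_union_Ioi, integrableOn_univ] at this

/-- minus the derivative of `1/(s^q+λ)` -/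
noncomputable def mlH (q : ℝ) (lambda s : ℂ) : ℂ :=
  q * s ^ ((q:ℂ) - 1) / (s ^ (q:ℂ) + lambda) ^ 2

lemma ml_lower (q : ℝ) (hq0 : 0 < q)
    (lambda : ℂ) (hl : lambda ≠ 0)
    (harg : |Complex.arg lambda| < π * (1 - q / 2)) :
    ∃ κ : ℝ, 0 < κ ∧ ∀ s : ℂ, 0 < s.re →
      κ * (‖s‖ ^ q + ‖lambda‖) ^ 2 ≤ ‖s ^ (q:ℂ) + lambda‖ ^ 2 := by
  set ψ := q * (π / 2) + |Complex.arg lambda| with hψ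
  have hψπ : ψ < π := by nlinarith
  have hψ0 : 0 ≤ ψ := by positivity
  have hcos : -1 < Real.cos ψ := by
    rw [← Real.cos_pi]
    exact Real.cos_lt_cos_of_nonneg_of_le_pi hψ0 le_rfl hψπ
  refine ⟨(1 + Real.cos ψ) / 2, by linarith, fun s hs => ?_⟩
  have hs0 : s ≠ 0 := by rintro rfl; simp at hs
  set A := ‖s‖ ^ q with hA
  have hApos : 0 < A := by have := norm_pos_iff.2 hs0; positivity
  set b := ‖lambda‖ with hb
  have hbpos : 0 < b := norm_pos_iff.2 hl
  have e1 : s ^ (q:ℂ) = (A : ℂ) * Complex.exp (((q * s.arg : ℝ) : ℂ) * Complex.I) := by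
    have h1 : Complex.log s * q = ((Real.log ‖s‖ * q : ℝ) : ℂ) +
        ((q * s.arg : ℝ) : ℂ) * Complex.I := by
      rw [Complex.log]; push_cast; ring
    rw [Complex.cpow_def_of_ne_zero hs0, h1, Complex.exp_add, ← Complex.ofReal_exp, hA,
      Real.rpow_def_of_pos (norm_pos_iff.2 hs0)]
  have e2 : lambda = (b : ℂ) * Complex.exp ((lambda.arg : ℂ) * Complex.I) :=
    (Complex.norm_mul_exp_arg_mul_I lambda).symm
  have e3 : ‖s ^ (q:ℂ) + lambda‖ ^ 2 = A ^ 2 + b ^ 2 +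
      2 * A * b * Real.cos (q * s.arg - lambda.arg) := by
    rw [e1]
    conv_lhs => rw [e2]
    rw [Complex.sq_norm, Complex.normSq_apply]
    simp only [Complex.add_re, Complex.add_im, Complex.re_ofReal_mul, Complex.im_ofReal_mul,
      Complex.exp_ofReal_mul_I_re, Complex.exp_ofReal_mul_I_im]
    rw [Real.cos_sub]
    have c1 := Real.sin_sq_add_cos_sq (q * s.arg)
    have c2 := Real.sin_sq_add_cos_sq lambda.arg
    linear_combination A ^ 2 * c1 + b ^ 2 * c2
  have hle : |q * s.arg - lambda.arg| ≤ ψ := by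
    refine (abs_sub _ _).trans ?_
    rw [abs_mul, abs_of_pos hq0, hψ]
    have := Complex.abs_arg_le_pi_div_two_iff.2 hs.le
    gcongr
  have hc : Real.cos ψ ≤ Real.cos (q * s.arg - lambda.arg) := by
    rw [← Real.cos_abs (q * s.arg - lambda.arg)]
    exact Real.cos_le_cos_of_nonneg_of_le_pi (abs_nonneg _) hψπ.le hle
  rw [e3]
  have h5 : 2 * A * b * Real.cos ψ ≤ 2 * A * b * Real.cos (q * s.arg - lambda.arg) := by gcongr
  have h6 := Real.cos_le_one ψ
  nlinarith [mul_nonneg (sub_nonneg.2 h6) (sq_nonneg (A - b))]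

lemma mlH_bound (q : ℝ) (hq0 : 0 < q) (hq2 : q < 2)
    (lambda : ℂ) (hl : lambda ≠ 0)
    (harg : |Complex.arg lambda| < π * (1 - q / 2)) :
    ∃ C : ℝ, 0 < C ∧ ∀ σ ω : ℝ, 0 < σ → ω ≠ 0 →
      ‖mlH q lambda (σ + ω * Complex.I)‖ ≤ C * mlDom (q / 2) ω := by
  obtain ⟨κ, hκ, hlow⟩ := ml_lower q hq0 lambda hl harg
  set β := Real.sqrt ‖lambda‖ with hβ
  have hβ0 : 0 < β := Real.sqrt_pos.2 (norm_pos_iff.2 hl)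
  have hβ2 : ‖lambda‖ = β ^ 2 := (Real.sq_sqrt (norm_nonneg _)).symm
  set D := 1 / β ^ 3 + 1 / β with hD
  have hD0 : 0 < D := by positivity
  refine ⟨q / κ * D, by positivity, fun σ ω hσ hω => ?_⟩
  set s : ℂ := σ + ω * Complex.I with hs
  have hsre : 0 < s.re := by simpa [hs] using hσ
  have h1 := hlow s hsre
  have hr1 : |ω| ≤ ‖s‖ := ml_norm_ge_im σ ω
  have hω0 : 0 < |ω| := abs_pos.2 hω
  set r := ‖s‖ with hr
  have hr0 : 0 < r := hω0.trans_le hr1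
  set x := r ^ (q / 2) with hx
  have hx0 : 0 < x := by positivity
  have hxq : r ^ q = x ^ 2 := by
    rw [hx, ← Real.rpow_natCast, ← Real.rpow_mul hr0.le]; congr 1; push_cast; ring
  rw [hxq, hβ2] at h1
  have hnorm : ‖mlH q lambda s‖ = q * (x ^ 2 / r) / ‖s ^ (q:ℂ) + lambda‖ ^ 2 := by
    unfold mlH
    have : ((q:ℂ) - 1) = ((q - 1 : ℝ) : ℂ) := by push_cast; ring
    rw [norm_div, norm_mul, norm_pow, this, Complex.norm_cpow_real, Complex.norm_real,
      Real.norm_of_nonneg hq0.le, ← hr, Real.rpow_sub_one hr0.ne', hxq]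
  have hbd : ‖mlH q lambda s‖ ≤ q / κ * (x ^ 2 / (x ^ 2 + β ^ 2) ^ 2 / r) := by
    rw [hnorm]
    calc q * (x ^ 2 / r) / ‖s ^ (q:ℂ) + lambda‖ ^ 2
        ≤ q * (x ^ 2 / r) / (κ * (x ^ 2 + β ^ 2) ^ 2) := by gcongr
      _ = _ := by field_simp
  have hD1 : D * β ^ 3 = 1 + β ^ 2 := by rw [hD]; field_simp
  have hDβ : 1 ≤ D * β ∧ 1 ≤ D * β ^ 3 := by
    constructor
    · rw [hD]
      have : (1 / β ^ 3 + 1 / β) * β = 1 / β ^ 2 + 1 := by field_simp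
      rw [this]
      have : 0 < 1 / β ^ 2 := by positivity
      linarith
    · rw [hD1]; nlinarith
  have hq1 : (2 * β * x) ≤ x ^ 2 + β ^ 2 := by nlinarith [sq_nonneg (x - β)]
  have b1 : x ^ 2 / (x ^ 2 + β ^ 2) ^ 2 ≤ D * x := by
    rw [div_le_iff₀ (by positivity)]
    have : x * β ^ 3 ≤ (x ^ 2 + β ^ 2) ^ 2 := by
      have : β ^ 2 * (2 * β * x) ≤ (x ^ 2 + β ^ 2) * (x ^ 2 + β ^ 2) := by gcongr; nlinarith
      have : 0 < x * β ^ 3 := by positivity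
      nlinarith
    calc x ^ 2 = 1 * x ^ 2 := by ring
      _ ≤ (D * β ^ 3) * x ^ 2 := by gcongr; exact hDβ.2
      _ = D * x * (x * β ^ 3) := by ring
      _ ≤ _ := by gcongr
  have b2 : x ^ 2 / (x ^ 2 + β ^ 2) ^ 2 ≤ D * x⁻¹ := by
    rw [div_le_iff₀ (by positivity)]
    have : x ^ 3 * β ≤ (x ^ 2 + β ^ 2) ^ 2 := by
      have : x ^ 2 * (2 * β * x) ≤ (x ^ 2 + β ^ 2) * (x ^ 2 + β ^ 2) := by gcongr; nlinarith
      have : 0 < x ^ 3 * β := by positivity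
      nlinarith
    calc x ^ 2 = 1 * x ^ 2 := by ring
      _ ≤ (D * β) * x ^ 2 := by gcongr; exact hDβ.1
      _ = D * x⁻¹ * (x ^ 3 * β) := by field_simp
      _ ≤ _ := by gcongr
  have m1 : x / r ≤ |ω| ^ (q / 2 - 1) := by
    rw [hx, ← Real.rpow_sub_one hr0.ne']
    exact Real.rpow_le_rpow_of_nonpos hω0 hr1 (by linarith)
  have m2 : x⁻¹ / r ≤ |ω| ^ (-(q / 2) - 1) := by
    rw [hx, ← Real.rpow_neg hr0.le, ← Real.rpow_sub_one hr0.ne']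
    exact Real.rpow_le_rpow_of_nonpos hω0 hr1 (by linarith)
  have hfin : x ^ 2 / (x ^ 2 + β ^ 2) ^ 2 / r ≤ D * mlDom (q / 2) ω := by
    unfold mlDom
    rw [mul_min_of_nonneg _ _ hD0.le]
    refine le_min ?_ ?_
    · calc _ ≤ D * x / r := by gcongr
        _ = D * (x / r) := by ring
        _ ≤ _ := by gcongr
    · calc _ ≤ D * x⁻¹ / r := by gcongr
        _ = D * (x⁻¹ / r) := by ring
        _ ≤ _ := by gcongr
  calc _ ≤ _ := hbd
    _ ≤ q / κ * (D * mlDom (q / 2) ω) := by gcongr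
    _ = _ := by ring

lemma ml_norm_exp (σ ω t : ℝ) :
    ‖Complex.exp ((σ + ω * Complex.I) * t)‖ = rexp (σ * t) := by
  rw [Complex.norm_exp]; simp

lemma ml_measurable (q : ℝ) (lambda : ℂ) (σ t : ℝ) : Measurable (fun ω : ℝ =>
    Complex.exp ((σ + ω * Complex.I) * t) * mlH q lambda (σ + ω * Complex.I)) := by
  unfold mlH; fun_prop

open MeasureTheory in
lemma ml_ae_bound (q : ℝ) (lambda : ℂ) (C : ℝ)
    (hC : ∀ σ ω : ℝ, 0 < σ → ω ≠ 0 →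
      ‖mlH q lambda (σ + ω * Complex.I)‖ ≤ C * mlDom (q / 2) ω) (σ t : ℝ) (hσ : 0 < σ) :
    ∀ᵐ ω : ℝ, ‖Complex.exp ((σ + ω * Complex.I) * t) * mlH q lambda (σ + ω * Complex.I)‖ ≤
      rexp (σ * t) * (C * mlDom (q / 2) ω) := by
  have : ∀ᵐ ω : ℝ, ω ≠ 0 := Measure.ae_ne volume 0
  filter_upwards [this] with ω hω
  rw [norm_mul, ml_norm_exp]
  gcongr
  exact hC σ ω hσ hω

open MeasureTheory in
lemma ml_shift (q : ℝ) (hq0 : 0 < q)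
    (lambda : ℂ) (C : ℝ) (hC0 : 0 < C)
    (hne : ∀ s : ℂ, 0 < s.re → s ^ (q:ℂ) + lambda ≠ 0)
    (hC : ∀ σ ω : ℝ, 0 < σ → ω ≠ 0 →
      ‖mlH q lambda (σ + ω * Complex.I)‖ ≤ C * mlDom (q / 2) ω) (t σ₁ σ₂ : ℝ) (ht : 0 < t)
    (hσ : 0 < σ₁) (hσ₁ : σ₁ ≤ σ₂) :
    ∫ ω : ℝ, Complex.exp ((σ₁ + ω * Complex.I) * t) * mlH q lambda (σ₁ + ω * Complex.I) =
    ∫ ω : ℝ, Complex.exp ((σ₂ + ω * Complex.I) * t) * mlH q lambda (σ₂ + ω * Complex.I) := by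
  have hint : ∀ σ : ℝ, 0 < σ → Integrable (fun ω : ℝ =>
      Complex.exp ((σ + ω * Complex.I) * t) * mlH q lambda (σ + ω * Complex.I)) := fun σ hσ =>
    Integrable.mono' (((mlDom_integrable (q / 2) (by linarith)).const_mul C).const_mul _)
      (ml_measurable q lambda σ t).aestronglyMeasurable (ml_ae_bound q lambda C hC σ t hσ)
  set g : ℂ → ℂ := fun s => Complex.exp (s * t) * mlH q lambda s with hg
  have hdiff : ∀ s : ℂ, 0 < s.re → DifferentiableAt ℂ g s := by
    intro s hs
    have h1 : s ∈ Complex.slitPlane := Or.inl hs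
    have h2 := hne s hs
    have d1 : DifferentiableAt ℂ (fun s : ℂ => s ^ ((q:ℂ) - 1)) s :=
      differentiableAt_id.cpow_const h1
    have d2 : DifferentiableAt ℂ (fun s : ℂ => s ^ (q:ℂ)) s :=
      differentiableAt_id.cpow_const h1
    have d3 : DifferentiableAt ℂ (fun s : ℂ => Complex.exp (s * t)) s := by fun_prop
    refine d3.mul ?_
    unfold mlH
    exact (d1.const_mul _).div ((d2.add_const _).pow 2) (pow_ne_zero 2 h2)
  have hrect : ∀ T : ℝ, (Complex.I * ∫ y in (-T)..T, g (σ₂ + y * Complex.I)) -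
      Complex.I * ∫ y in (-T)..T, g (σ₁ + y * Complex.I) =
      (∫ x in σ₁..σ₂, g (x + T * Complex.I)) -
        ∫ x in σ₁..σ₂, g (x + ((-T : ℝ) : ℂ) * Complex.I) := by
    intro T
    have h := Complex.integral_boundary_rect_eq_zero_of_differentiableOn g
      (⟨σ₁, -T⟩ : ℂ) (⟨σ₂, T⟩ : ℂ) (by
        intro z hz
        refine (hdiff z ?_).differentiableWithinAt
        have h3 := hz.1
        simp only [Set.mem_preimage, Set.uIcc_of_le hσ₁] at h3
        exact hσ.trans_le h3.1)
    simp only [smul_eq_mul] at h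
    linear_combination h
  have hh : ∀ T : ℝ, T ≠ 0 → ‖∫ x in σ₁..σ₂, g (x + T * Complex.I)‖ ≤
      (rexp (σ₂ * t) * (C * |T| ^ (-(q / 2) - 1))) * |σ₂ - σ₁| := by
    intro T hT
    apply intervalIntegral.norm_integral_le_of_norm_le_const
    intro x hx
    rw [Set.uIoc_of_le hσ₁] at hx
    simp only [hg]
    rw [norm_mul, ml_norm_exp]
    have hb := hC x T (hσ.trans hx.1) hT
    have : mlDom (q / 2) T ≤ |T| ^ (-(q / 2) - 1) := min_le_right _ _
    have hx2 := hx.2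
    gcongr
    exact hb.trans (by gcongr)
  have hz0 : Tendsto (fun T : ℝ => (rexp (σ₂ * t) * (C * |T| ^ (-(q / 2) - 1))) * |σ₂ - σ₁|)
      atTop (nhds 0) := by
    have h1 : Tendsto (fun T : ℝ => |T| ^ (-(q / 2) - 1)) atTop (nhds 0) := by
      have h2 := (tendsto_rpow_neg_atTop (y := q / 2 + 1) (by positivity)).comp
        tendsto_abs_atTop_atTop
      refine h2.congr fun T => ?_
      simp only [Function.comp]
      congr 1; ring
    simpa using ((h1.const_mul C).const_mul (rexp (σ₂ * t))).mul_const |σ₂ - σ₁|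
  have hz1 : Tendsto (fun T : ℝ => ∫ x in σ₁..σ₂, g (x + T * Complex.I)) atTop (nhds 0) := by
    refine squeeze_zero_norm' ?_ hz0
    filter_upwards [eventually_gt_atTop 0] with T hT using hh T hT.ne'
  have hz2 : Tendsto (fun T : ℝ => ∫ x in σ₁..σ₂, g (x + ((-T : ℝ) : ℂ) * Complex.I))
      atTop (nhds 0) := by
    refine squeeze_zero_norm' ?_ hz0
    filter_upwards [eventually_gt_atTop 0] with T hT
    simpa using hh (-T) (neg_ne_zero.2 hT.ne')
  have hv : ∀ σ : ℝ, 0 < σ → Tendsto (fun T : ℝ => ∫ y in (-T)..T, g (σ + y * Complex.I)) atTop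
      (nhds (∫ y : ℝ, g (σ + y * Complex.I))) := fun σ hσ =>
    intervalIntegral_tendsto_integral (hint σ hσ) tendsto_neg_atTop_atBot tendsto_id
  have hlim := ((hv σ₂ (hσ.trans_le hσ₁)).const_mul Complex.I).sub
    ((hv σ₁ hσ).const_mul Complex.I)
  have hlim2 := hz1.sub hz2
  have heq := tendsto_nhds_unique (hlim.congr hrect) hlim2
  have h7 : Complex.I * ((∫ y : ℝ, g (σ₂ + y * Complex.I)) - ∫ y : ℝ, g (σ₁ + y * Complex.I)) = 0 := by
    rw [mul_sub, heq, sub_zero]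
  have h8 := (mul_eq_zero.1 h7).resolve_left Complex.I_ne_zero
  exact (sub_eq_zero.1 h8).symm

open MeasureTheory in
lemma ml_series (q : ℝ) (hq0 : 0 < q) (lambda : ℂ) (σ t : ℝ) (hσ : 0 < σ) (ht : 0 < t)
    (hbig : ‖lambda‖ < σ ^ q) :
    ∫ ω : ℝ, Complex.exp ((σ + ω * Complex.I) * t) * mlH q lambda (σ + ω * Complex.I) =
      2 * π * (t * (((t ^ (q - 1) : ℝ) : ℂ) * mittagLeffler q q (-(lambda * (t ^ q : ℝ))))) := by
  set F : ℕ → ℝ → ℂ := fun k ω => (q * (k + 1) * (-lambda) ^ k) *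
    (Complex.exp ((σ + ω * Complex.I) * t) *
      (σ + ω * Complex.I : ℂ) ^ (-((q * (k + 1) + 1 : ℝ) : ℂ))) with hF
  set ρ := ‖lambda‖ / σ ^ q with hρ
  have hσq : 0 < σ ^ q := by positivity
  have hρ0 : 0 ≤ ρ := by positivity
  have hρ1 : ρ < 1 := by rw [hρ, div_lt_one hσq]; exact hbig
  have hbase := ml_integrable_rpow (q + 1) σ (by linarith) hσ
  have hFb : ∀ k ω, ‖F k ω‖ ≤ (q * rexp (σ * t) * (((k:ℝ) + 1) * ρ ^ k)) *
      ‖(σ + ω * Complex.I : ℂ)‖ ^ (-(q + 1)) := by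
    intro k ω
    have hr := ml_norm_ge_re σ ω hσ
    set s : ℂ := σ + ω * Complex.I with hs
    have hr0 : 0 < ‖s‖ := hσ.trans_le hr
    have e1 : ‖F k ω‖ = (q * (k + 1) * ‖lambda‖ ^ k) * (rexp (σ * t) *
        ‖s‖ ^ (-(q * (k + 1) + 1))) := by
      simp only [hF]
      rw [norm_mul, norm_mul, norm_mul, norm_mul, ml_norm_exp, norm_pow, norm_neg,
        ← Complex.ofReal_neg, Complex.norm_cpow_real, Complex.norm_real,
        Real.norm_of_nonneg hq0.le]
      have : ‖((k:ℂ) + 1)‖ = (k:ℝ) + 1 := by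
        have := Complex.norm_natCast (k + 1)
        push_cast at this
        exact this
      rw [this]
    have e2 : ‖s‖ ^ (-(q * (k + 1) + 1)) = ((‖s‖ ^ q)⁻¹) ^ k * ‖s‖ ^ (-(q + 1)) := by
      rw [← Real.rpow_neg hr0.le, ← Real.rpow_natCast, ← Real.rpow_mul hr0.le,
        ← Real.rpow_add hr0]
      congr 1; ring
    have e3 : (‖s‖ ^ q)⁻¹ ≤ (σ ^ q)⁻¹ := by gcongr
    rw [e1, e2, hρ, div_pow]
    calc _ ≤ (q * (k + 1) * ‖lambda‖ ^ k) * (rexp (σ * t) *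
        (((σ ^ q)⁻¹) ^ k * ‖s‖ ^ (-(q + 1)))) := by gcongr
      _ = _ := by rw [inv_pow]; ring
  have hFint : ∀ k, Integrable (F k) := by
    intro k
    refine Integrable.mono' (hbase.const_mul _) ?_ (Eventually.of_forall (hFb k))
    apply Measurable.aestronglyMeasurable
    simp only [hF]
    fun_prop
  have hgeo : Summable (fun k : ℕ => ((k:ℝ) + 1) * ρ ^ k) := by
    have := (hasSum_choose_mul_geometric_of_norm_lt_one 1
      (r := ρ) (by rwa [Real.norm_of_nonneg hρ0])).summable
    simpa using this
  have hFsum : Summable (fun k => ∫ ω, ‖F k ω‖) := by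
    refine Summable.of_nonneg_of_le (fun k => integral_nonneg fun ω => norm_nonneg _) (fun k => ?_)
      ((hgeo.mul_left (q * rexp (σ * t))).mul_right
        (∫ ω : ℝ, ‖(σ + ω * Complex.I : ℂ)‖ ^ (-(q + 1))))
    rw [← integral_const_mul]
    exact integral_mono (hFint k).norm (hbase.const_mul _) (hFb k)
  have hmain := (hasSum_integral_of_summable_integral_norm hFint hFsum).tsum_eq
  have hpt : ∀ ω : ℝ, ∑' k, F k ω =
      Complex.exp ((σ + ω * Complex.I) * t) * mlH q lambda (σ + ω * Complex.I) := by
    intro ω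
    have hr := ml_norm_ge_re σ ω hσ
    simp only [hF]
    set s : ℂ := σ + ω * Complex.I with hs
    have hr0 : 0 < ‖s‖ := hσ.trans_le hr
    have hs0 : s ≠ 0 := norm_pos_iff.1 hr0
    set w := s ^ (q:ℂ) with hw
    have hw0 : w ≠ 0 := by rw [hw, Complex.cpow_ne_zero_iff]; exact Or.inl hs0
    have hwn : ‖lambda‖ < ‖w‖ := by
      rw [hw, Complex.norm_cpow_real]
      exact hbig.trans_le (by gcongr)
    have hrn : ‖-lambda / w‖ < 1 := by
      rw [norm_div, norm_neg, div_lt_one (norm_pos_iff.2 hw0)]; exact hwn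
    have hsum := (hasSum_choose_mul_geometric_of_norm_lt_one 1 hrn).mul_left
      (Complex.exp (s * t) * (q * s ^ ((q:ℂ) - 1) / w ^ 2))
    have hwl : w + lambda ≠ 0 := by
      intro h
      have : w = -lambda := by linear_combination h
      rw [this, norm_neg] at hwn
      exact lt_irrefl _ hwn
    have hval : Complex.exp (s * t) * (q * s ^ ((q:ℂ) - 1) / w ^ 2) *
        (1 / (1 - -lambda / w) ^ (1 + 1)) = Complex.exp (s * t) * mlH q lambda s := by
      unfold mlH
      rw [← hw]
      have : 1 - -lambda / w = (w + lambda) / w := by field_simp; ring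
      rw [this, div_pow]
      field_simp
      ring
    rw [hval] at hsum
    rw [← hsum.tsum_eq]
    congr 1
    ext k
    have hexp : s ^ (-((q * (k + 1) + 1 : ℝ) : ℂ)) = s ^ ((q:ℂ) - 1) / w ^ 2 / w ^ k := by
      have h1 : w ^ 2 = s ^ ((q:ℂ) * 2) := by
        have := Complex.cpow_mul_nat s (q:ℂ) 2
        rw [hw, ← this]; norm_num
      have h2 : w ^ k = s ^ ((q:ℂ) * k) := by rw [hw, Complex.cpow_mul_nat]
      rw [h1, h2, ← Complex.cpow_sub _ _ hs0, ← Complex.cpow_sub _ _ hs0]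
      congr 1
      push_cast
      ring
    rw [hexp, div_pow]
    simp
    ring
  simp only [hpt] at hmain
  rw [← hmain]
  unfold mittagLeffler
  rw [← tsum_mul_left, ← tsum_mul_left, ← tsum_mul_left]
  congr 1
  ext k
  simp only [hF]
  have hk : (0:ℝ) < q * (k + 1) := by positivity
  rw [integral_const_mul, ml_inversion _ σ t (by linarith) hσ ht, Real.Gamma_add_one hk.ne']
  have hΓ : (Real.Gamma (q * (k + 1)) : ℂ) ≠ 0 := by
    exact_mod_cast (Real.Gamma_pos_of_pos hk).ne'
  have e1 : q * k + q = q * (k + 1) := by ring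
  have e2 : t ^ (q * (k + 1) + 1 - 1) = t * (t ^ (q - 1) * (t ^ q) ^ k) := by
    rw [Real.rpow_sub_one ht.ne' q, ← Real.rpow_natCast, ← Real.rpow_mul ht.le]
    have : t ^ (q * (k + 1) + 1 - 1) = t ^ q * t ^ (q * k) := by
      rw [← Real.rpow_add ht]; congr 1; ring
    rw [this]; field_simp
  rw [e1, e2, ← neg_mul, mul_pow]
  have hq' : (q:ℂ) ≠ 0 := by exact_mod_cast hq0.ne'
  have hk' : ((k:ℂ) + 1) ≠ 0 := by exact_mod_cast Nat.succ_ne_zero k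
  push_cast
  field_simp

/-- Stability of a single fractional mode: if `0 < q < 2` and the pole `λ ≠ 0`
satisfies `|arg λ| < π (1 - q/2)`, then the impulse response
`t ↦ t^{q-1} E_{q,q}(-λ t^q)` of `1/(s^q + λ)` tends to `0` as `t → ∞`. -/
theorem fractional_mode_stable (q : ℝ) (hq0 : 0 < q) (hq2 : q < 2)
    (lambda : ℂ) (hl : lambda ≠ 0)
    (harg : |Complex.arg lambda| < π * (1 - q / 2)) :
    Tendsto (fun t : ℝ => ((t ^ (q - 1) : ℝ) : ℂ) *
        mittagLeffler q q (-(lambda * (t ^ q : ℝ)))) atTop (nhds 0) := by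
  obtain ⟨κ, hκ, hlow⟩ := ml_lower q hq0 lambda hl harg
  obtain ⟨C, hC0, hC⟩ := mlH_bound q hq0 hq2 lambda hl harg
  have hne : ∀ s : ℂ, 0 < s.re → s ^ (q:ℂ) + lambda ≠ 0 := by
    intro s hs h
    have h1 := hlow s hs
    rw [h] at h1
    have h2 : 0 < ‖lambda‖ := norm_pos_iff.2 hl
    have h3 : 0 < κ * (‖s‖ ^ q + ‖lambda‖) ^ 2 := by positivity
    simp at h1
    linarith
  obtain ⟨σ₂, hσ₂, hσ₂'⟩ : ∃ σ₂ : ℝ, 1 ≤ σ₂ ∧ ‖lambda‖ < σ₂ ^ q := by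
    have := (tendsto_rpow_atTop hq0).eventually_gt_atTop ‖lambda‖
    obtain ⟨σ, h1, h2⟩ := (this.and (eventually_ge_atTop 1)).exists
    exact ⟨σ, h2, h1⟩
  set M := ∫ ω, rexp 1 * (C * mlDom (q / 2) ω) with hM
  have hbd : ∀ t : ℝ, 1 ≤ t → ‖((t ^ (q - 1) : ℝ) : ℂ) *
        mittagLeffler q q (-(lambda * (t ^ q : ℝ)))‖ ≤ M / (2 * π) * t⁻¹ := by
    intro t ht1
    have ht : 0 < t := by linarith
    have h1 := ml_series q hq0 lambda σ₂ t (by linarith) ht hσ₂'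
    have hti : t⁻¹ ≤ σ₂ := (inv_le_one_of_one_le₀ ht1).trans hσ₂
    rw [← ml_shift q hq0 lambda C hC0 hne hC t t⁻¹ σ₂ ht (by positivity) hti] at h1
    have h2 : ‖∫ ω : ℝ, Complex.exp (((t⁻¹ : ℝ) + ω * Complex.I) * t) *
        mlH q lambda ((t⁻¹ : ℝ) + ω * Complex.I)‖ ≤ M := by
      refine MeasureTheory.norm_integral_le_of_norm_le
        (((mlDom_integrable (q / 2) (by linarith)).const_mul C).const_mul _) ?_
      have := ml_ae_bound q lambda C hC t⁻¹ t (by positivity)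
      rwa [inv_mul_cancel₀ ht.ne'] at this
    rw [h1, norm_mul, norm_mul (t:ℂ)] at h2
    have h3 : ‖(2 * π : ℂ)‖ = 2 * π := by
      simp [abs_of_pos Real.pi_pos]
    rw [h3, Complex.norm_real, Real.norm_of_nonneg ht.le] at h2
    rw [← div_eq_mul_inv, le_div_iff₀ ht, le_div_iff₀ (by positivity)]
    linarith
  refine squeeze_zero_norm' (a := fun t : ℝ => M / (2 * π) * t⁻¹) ?_ ?_
  · filter_upwards [eventually_ge_atTop 1] with t ht using hbd t ht
  · simpa using tendsto_inv_atTop_zero.const_mul (M / (2 * π))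
end

section
/- Let q be a real number with 0 < q < 2 and let λ be a nonzero complex number with |arg(−λ)| < qπ/2 (equivalently, |arg λ| > π(1 − q/2) when λ is not a negative real). Then the function t ↦ |t^{q−1} · E_{q,q}(−λ t^q)|, defined for t > 0, tends to +∞ as t → ∞. (Instability of a single fractional mode when the pole lies in the unstable sector.) -/
open Real Filter

lemma gamma_lower (a X : ℝ) (ha : 1 ≤ a) (hX : 0 < X) :
    X ^ (a - 1) * Real.exp (-X) ≤ Real.Gamma a := by
  rw [Real.Gamma_eq_integral (by linarith)]
  have hintg := Real.GammaIntegral_convergent (s := a) (by linarith)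
  have hsub : Set.Ioi X ⊆ Set.Ioi (0:ℝ) := Set.Ioi_subset_Ioi hX.le
  calc X ^ (a - 1) * Real.exp (-X) = ∫ x in Set.Ioi X, Real.exp (-x) * X ^ (a - 1) := by
        rw [MeasureTheory.integral_mul_const, integral_exp_neg_Ioi, mul_comm]
    _ ≤ ∫ x in Set.Ioi X, Real.exp (-x) * x ^ (a - 1) := by
        apply MeasureTheory.setIntegral_mono_on
        · exact (integrableOn_exp_neg_Ioi X).mul_const _
        · exact hintg.mono_set hsub
        · exact measurableSet_Ioi
        · intro x hx
          have hx : X < x := hx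
          gcongr
    _ ≤ _ := by
        apply MeasureTheory.setIntegral_mono_set hintg
        · filter_upwards [MeasureTheory.ae_restrict_mem measurableSet_Ioi] with x hx
          have hx : 0 < x := hx
          simp only [Pi.zero_apply]
          positivity
        · exact hsub.eventuallyLE

lemma integrable_rpow_exp (b c : ℝ) (hb : -1 < b) (hc : 0 < c) :
    MeasureTheory.IntegrableOn (fun t : ℝ => t ^ b * Real.exp (-c * t)) (Set.Ioi 0) := by
  have := integrableOn_rpow_mul_exp_neg_mul_rpow (p := 1) hb one_pos hc
  simpa using this

lemma laplace_pow_diff (a : ℝ) (ha : 1 ≤ a) :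
    DifferentiableOn ℂ (fun s : ℂ => ∫ t in Set.Ioi (0:ℝ),
      ((t ^ (a - 1) : ℝ) : ℂ) * Complex.exp (-(s * t))) {s | 0 < s.re} := by
  intro s hs
  have hs : 0 < s.re := hs
  apply DifferentiableAt.differentiableWithinAt
  have cont : ∀ b : ℝ, 0 ≤ b → Continuous (fun t : ℝ => ((t ^ b : ℝ) : ℂ)) := fun b hb =>
    Complex.continuous_ofReal.comp (Real.continuous_rpow_const hb)
  have key : ∀ b : ℝ, 0 ≤ b → ∀ z : ℂ, ∀ t ∈ Set.Ioi (0:ℝ), s.re / 2 ≤ z.re →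
      ‖((t ^ b : ℝ) : ℂ) * Complex.exp (-(z * t))‖ ≤ t ^ b * Real.exp (-(s.re/2) * t) := by
    intro b hb z t ht hz
    have ht : 0 < t := ht
    rw [norm_mul, Complex.norm_real, Complex.norm_exp, Real.norm_of_nonneg (by positivity)]
    simp only [Complex.neg_re, Complex.mul_re, Complex.ofReal_re, Complex.ofReal_im, mul_zero,
      sub_zero]
    gcongr
    nlinarith
  refine (hasDerivAt_integral_of_dominated_loc_of_deriv_le (𝕜 := ℂ)
    (F' := fun (s:ℂ) (t:ℝ) => -(((t ^ a : ℝ) : ℂ) * Complex.exp (-(s * t))))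
    (bound := fun t => t ^ a * Real.exp (-(s.re/2) * t))
    (s := Metric.ball s (s.re/2)) (Metric.ball_mem_nhds s (by linarith)) ?_ ?_ ?_ ?_ ?_ ?_).2.differentiableAt
  · refine Filter.Eventually.of_forall fun z => ?_
    have := cont (a-1) (by linarith)
    exact Continuous.aestronglyMeasurable (by fun_prop)
  · refine (integrable_rpow_exp (a-1) (s.re/2) (by linarith) (by linarith)).mono' ?_ ?_
    · have := cont (a-1) (by linarith)
      exact Continuous.aestronglyMeasurable (by fun_prop)
    · filter_upwards [MeasureTheory.ae_restrict_mem measurableSet_Ioi] with t ht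
      exact key (a-1) (by linarith) s t ht (by linarith)
  · have := cont a (by linarith)
    exact Continuous.aestronglyMeasurable (by fun_prop)
  · filter_upwards [MeasureTheory.ae_restrict_mem measurableSet_Ioi] with t ht z hz
    rw [norm_neg]
    apply key a (by linarith) z t ht
    have h1 : ‖z - s‖ < s.re / 2 := by simpa [dist_eq_norm] using hz
    have h2 := (abs_le.1 (Complex.abs_re_le_norm (z - s))).1
    rw [Complex.sub_re] at h2
    linarith
  · exact (integrable_rpow_exp a (s.re/2) (by linarith) (by linarith))
  · filter_upwards [MeasureTheory.ae_restrict_mem measurableSet_Ioi] with t ht z hz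
    have ht : 0 < t := ht
    have h1 : HasDerivAt (fun z : ℂ => -(z * t)) (-(1 * t)) z := ((hasDerivAt_id z).mul_const (t:ℂ)).neg
    have h2 := (h1.cexp).const_mul ((t ^ (a-1) : ℝ) : ℂ)
    refine h2.congr_deriv ?_
    have : t ^ a = t ^ (a - 1) * t := by
      rw [← Real.rpow_add_one ht.ne']; ring_nf
    rw [this]
    push_cast
    ring

lemma laplace_pow (a : ℝ) (ha : 1 ≤ a) (s : ℂ) (hs : 0 < s.re) :
    ∫ t in Set.Ioi (0:ℝ), ((t ^ (a - 1) : ℝ) : ℂ) * Complex.exp (-(s * t)) =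
      (s⁻¹) ^ (a : ℂ) * (Real.Gamma a : ℂ) := by
  have hopen : IsOpen {s : ℂ | 0 < s.re} := isOpen_lt continuous_const Complex.continuous_re
  have hconv : Convex ℝ {s : ℂ | 0 < s.re} := convex_halfSpace_re_gt 0
  have h1 := (laplace_pow_diff a ha).analyticOnNhd hopen
  have h2 : AnalyticOnNhd ℂ (fun s : ℂ => (s⁻¹) ^ (a : ℂ) * (Real.Gamma a : ℂ)) {s | 0 < s.re} := by
    apply DifferentiableOn.analyticOnNhd _ hopen
    intro z hz
    have hz : 0 < z.re := hz
    have hz0 : z ≠ 0 := by rintro rfl; simp at hz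
    have : z⁻¹ ∈ Complex.slitPlane := by
      left
      rw [Complex.inv_re]
      exact div_pos hz (Complex.normSq_pos.2 hz0)
    apply DifferentiableAt.differentiableWithinAt
    apply DifferentiableAt.mul_const
    exact (differentiableAt_inv hz0).cpow_const this
  refine h1.eqOn_of_preconnected_of_frequently_eq h2 hconv.isPreconnected (z₀ := 1) (by simp) ?_ hs
  have hreal : ∀ r : ℝ, 0 < r → (∫ t in Set.Ioi (0:ℝ), ((t ^ (a - 1) : ℝ) : ℂ) *
      Complex.exp (-((r:ℂ) * t))) = ((r:ℂ)⁻¹) ^ (a : ℂ) * (Real.Gamma a : ℂ) := by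
    intro r hr
    have h3 := Complex.integral_cpow_mul_exp_neg_mul_Ioi (a := a) (r := r) (by simp; linarith) hr
    rw [one_div, Complex.Gamma_ofReal] at h3
    rw [← h3]
    apply MeasureTheory.setIntegral_congr_fun measurableSet_Ioi
    intro t ht
    have ht : 0 < t := ht
    simp only
    rw [Complex.ofReal_cpow ht.le]
    push_cast
    rfl
  have htend : Tendsto (fun n : ℕ => (((1 + 1 / ((n:ℝ) + 1) : ℝ)) : ℂ)) atTop (nhdsWithin 1 {1}ᶜ) := by
    apply tendsto_nhdsWithin_iff.2
    constructor
    · have := (tendsto_one_div_add_atTop_nhds_zero_nat (𝕜 := ℝ)).const_add 1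
      have h4 := (Complex.continuous_ofReal.tendsto _).comp this
      simpa [Function.comp_def] using h4
    · refine Filter.Eventually.of_forall fun n => ?_
      have : (1 + 1 / ((n:ℝ) + 1)) ≠ 1 := by
        have : 0 < 1 / ((n:ℝ) + 1) := by positivity
        linarith
      simp only [Set.mem_compl_iff, Set.mem_singleton_iff]
      exact_mod_cast this
  refine htend.frequently ?_
  refine (Filter.Eventually.of_forall fun n => ?_).frequently
  exact hreal _ (by positivity)

lemma integrable_of_decay (f : ℝ → ℂ) (hf : Continuous f) (K R : ℝ) (hR : 1 ≤ R)
    (hK : ∀ y, R ≤ |y| → ‖f y‖ ≤ K / y ^ 2) : MeasureTheory.Integrable f := by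
  obtain ⟨M, hM⟩ := (isCompact_Icc (a := -R) (b := R)).exists_bound_of_continuousOn hf.continuousOn
  have hM0 : 0 ≤ M := (norm_nonneg _).trans (hM 0 ⟨by linarith, by linarith⟩)
  have hK0 : 0 ≤ K := by
    have h := (norm_nonneg _).trans (hK R (by rw [abs_of_nonneg]; linarith))
    by_contra hneg
    push Not at hneg
    have : K / R ^ 2 < 0 := div_neg_of_neg_of_pos hneg (by positivity)
    linarith
  refine (integrable_inv_one_add_sq.const_mul (M * (1 + R ^ 2) + 2 * K)).mono'
    hf.aestronglyMeasurable (Filter.Eventually.of_forall fun y => ?_)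
  rw [← div_eq_mul_inv, le_div_iff₀ (by positivity)]
  rcases le_total R |y| with h | h
  · have hy : 1 ≤ y ^ 2 := by rw [← sq_abs]; nlinarith
    have h1 := hK y h
    rw [le_div_iff₀ (by linarith)] at h1
    have := norm_nonneg (f y)
    nlinarith [mul_nonneg hM0 (by positivity : 0 ≤ 1 + R^2)]
  · have h1 := hM y (abs_le.1 h)
    have hy : y ^ 2 ≤ R ^ 2 := by rw [← sq_abs]; gcongr
    have : ‖f y‖ * (1 + y ^ 2) ≤ M * (1 + R ^ 2) := by gcongr
    linarith

lemma contour_shift (Φ : ℂ → ℂ) (hΦ : DifferentiableOn ℂ Φ {s | 0 < s.re}) (c σ K R : ℝ)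
    (hc : 0 < c) (hcσ : c ≤ σ) (hR : 1 ≤ R)
    (hK : ∀ x : ℝ, c ≤ x → x ≤ σ → ∀ y : ℝ, R ≤ |y| → ‖Φ (x + y * Complex.I)‖ ≤ K / y ^ 2) :
    ∀ x : ℝ, c ≤ x → x ≤ σ → MeasureTheory.Integrable (fun y : ℝ => Φ (x + y * Complex.I)) ∧
    ∫ y : ℝ, Φ (x + y * Complex.I) = ∫ y : ℝ, Φ (c + y * Complex.I) := by
  have hintg : ∀ x : ℝ, c ≤ x → x ≤ σ →
      MeasureTheory.Integrable (fun y : ℝ => Φ (x + y * Complex.I)) := by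
    intro x h1 h2
    refine integrable_of_decay _ ?_ K R hR (hK x h1 h2)
    exact hΦ.continuousOn.comp_continuous (by fun_prop) (fun y => by simp; linarith)
  intro x hx1 hx2
  refine ⟨hintg x hx1 hx2, ?_⟩
  have hrect : ∀ T : ℝ, (∫ u : ℝ in c..x, Φ (u + (-T : ℝ) * Complex.I)) -
      (∫ u : ℝ in c..x, Φ (u + T * Complex.I)) +
      Complex.I • (∫ y : ℝ in (-T)..T, Φ (x + y * Complex.I)) -
      Complex.I • (∫ y : ℝ in (-T)..T, Φ (c + y * Complex.I)) = 0 := by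
    intro T
    have := Complex.integral_boundary_rect_eq_zero_of_differentiableOn Φ ⟨c, -T⟩ ⟨x, T⟩
      (hΦ.mono ?_)
    · simpa using this
    · intro z hz
      have := hz.1
      simp only [Set.mem_preimage, Set.uIcc_of_le hx1] at this
      have h := this.1
      show 0 < z.re
      linarith
  have hhor : ∀ ε : ℝ, |ε| = 1 → Tendsto (fun T : ℝ => ∫ u : ℝ in c..x, Φ (u + (ε * T : ℝ) * Complex.I))
      atTop (nhds 0) := by
    intro ε hε
    have hb : Tendsto (fun T : ℝ => K / T ^ 2 * |x - c|) atTop (nhds 0) := by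
      have : Tendsto (fun T : ℝ => K / T ^ 2) atTop (nhds 0) :=
        tendsto_const_nhds.div_atTop (tendsto_pow_atTop (by norm_num))
      simpa using this.mul_const |x - c|
    refine squeeze_zero_norm' ?_ hb
    filter_upwards [eventually_ge_atTop R] with T hT
    apply intervalIntegral.norm_integral_le_of_norm_le_const
    intro u hu
    rw [Set.uIoc_of_le hx1] at hu
    have hε2 : ε ^ 2 = 1 := by rw [← sq_abs, hε]; norm_num
    have h1 := hK u hu.1.le (hu.2.trans hx2) (ε * T) (by
      rw [abs_mul, hε, one_mul]; exact hT.trans (le_abs_self T))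
    rwa [mul_pow, hε2, one_mul] at h1
  have hp := hhor 1 (by norm_num)
  have hm := hhor (-1) (by norm_num)
  have v1 := MeasureTheory.intervalIntegral_tendsto_integral (hintg x hx1 hx2)
    tendsto_neg_atTop_atBot tendsto_id
  have v2 := MeasureTheory.intervalIntegral_tendsto_integral (hintg c le_rfl hcσ)
    tendsto_neg_atTop_atBot tendsto_id
  have htot := ((hm.sub hp).add (v1.const_smul Complex.I)).sub (v2.const_smul Complex.I)
  have hz : (0 - 0 + Complex.I • (∫ y : ℝ, Φ (x + y * Complex.I)) -
      Complex.I • (∫ y : ℝ, Φ (c + y * Complex.I))) = 0 := by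
    refine tendsto_nhds_unique htot ?_
    refine tendsto_const_nhds.congr fun T => ?_
    have := hrect T
    simpa using this.symm
  have : Complex.I * ((∫ y : ℝ, Φ (x + y * Complex.I)) - (∫ y : ℝ, Φ (c + y * Complex.I))) = 0 := by
    simp only [smul_eq_mul] at hz
    linear_combination hz
  rcases mul_eq_zero.1 this with h | h
  · exact absurd h Complex.I_ne_zero
  · exact sub_eq_zero.1 h

lemma laplace_growth (g : ℝ → ℂ) (hg : ContinuousOn g (Set.Ioi 0)) (B σ₁ σ c K R : ℝ)
    (hB : ∀ t, 0 < t → ‖g t‖ ≤ B * Real.exp (σ₁ * t)) (hσ : σ₁ < σ) (hc : 0 < c) (hcσ : c ≤ σ)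
    (hR : 1 ≤ R) (hK0 : 0 ≤ K) (G : ℂ → ℂ) (hG : DifferentiableOn ℂ G {s | 0 < s.re})
    (hGK : ∀ s : ℂ, c ≤ s.re → R ≤ ‖s‖ → ‖G s‖ ≤ K / ‖s‖ ^ 2)
    (hL : ∀ s : ℂ, s.re = σ → ∫ t in Set.Ioi (0:ℝ), g t * Complex.exp (-(s * t)) = G s) :
    ∃ C : ℝ, ∀ t, 0 < t → ‖g t‖ ≤ C * Real.exp (c * t) := by
  have hGy : ∀ x : ℝ, c ≤ x → x ≤ σ → ∀ y : ℝ, R ≤ |y| →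
      ‖G (x + y * Complex.I)‖ ≤ K / y ^ 2 := by
    intro x hx _ y hy
    have h1 : |y| ≤ ‖(x + y * Complex.I : ℂ)‖ := by
      have := Complex.abs_im_le_norm (x + y * Complex.I : ℂ)
      simpa using this
    refine (hGK _ (by simpa using hx) (hy.trans h1)).trans ?_
    rw [← sq_abs y]
    have : 0 < |y| := by linarith
    gcongr
  set f : ℝ → ℂ := Set.indicator (Set.Ioi 0) (fun t => g t * Complex.exp (-((σ:ℂ) * t))) with hf
  have hfint : MeasureTheory.Integrable f := by
    rw [hf, MeasureTheory.integrable_indicator_iff measurableSet_Ioi]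
    refine MeasureTheory.Integrable.mono' (g := fun t => B * Real.exp (-(σ - σ₁) * t)) ?_ ?_ ?_
    · exact (exp_neg_integrableOn_Ioi 0 (by linarith)).const_mul B
    · exact ContinuousOn.aestronglyMeasurable (hg.mul (by fun_prop)) measurableSet_Ioi
    · filter_upwards [MeasureTheory.ae_restrict_mem measurableSet_Ioi] with t ht
      rw [norm_mul, Complex.norm_exp]
      have : (-((σ:ℂ) * t)).re = - (σ * t) := by simp
      rw [this]
      calc ‖g t‖ * Real.exp (-(σ * t)) ≤ B * Real.exp (σ₁ * t) * Real.exp (-(σ * t)) := by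
            gcongr; exact hB t ht
        _ = _ := by rw [mul_assoc, ← Real.exp_add]; ring_nf
  have hfour : ∀ ξ : ℝ, FourierTransform.fourier f ξ = G (σ + (2 * π * ξ : ℝ) * Complex.I) := by
    intro ξ
    rw [Real.fourier_real_eq_integral_exp_smul, ← hL _ (by simp),
      ← MeasureTheory.integral_indicator measurableSet_Ioi]
    congr 1
    ext t
    rw [hf]
    by_cases ht : t ∈ Set.Ioi (0:ℝ)
    · rw [Set.indicator_of_mem ht, Set.indicator_of_mem ht, smul_eq_mul, mul_left_comm,
        ← Complex.exp_add]
      congr 2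
      push_cast
      ring
    · rw [Set.indicator_of_notMem ht, Set.indicator_of_notMem ht, smul_zero]
  have hσG := (contour_shift G hG c σ K R hc hcσ hR hGy σ hcσ le_rfl).1
  have hfourint : MeasureTheory.Integrable (FourierTransform.fourier f) := by
    have h1 := hσG.comp_mul_left' (R := 2 * π) (by positivity)
    refine h1.congr (Filter.Eventually.of_forall fun ξ => ?_)
    simp only [hfour]
  have hcG := (contour_shift G hG c σ K R hc hcσ hR hGy c le_rfl hcσ).1
  refine ⟨(2 * π)⁻¹ * ∫ y : ℝ, ‖G (c + y * Complex.I)‖, fun t ht => ?_⟩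
  have hcont : ContinuousAt f t := by
    have h1 : ContinuousAt (fun t => g t * Complex.exp (-((σ:ℂ) * t))) t :=
      (hg.continuousAt (Ioi_mem_nhds ht)).mul (by fun_prop)
    refine h1.congr ?_
    filter_upwards [Ioi_mem_nhds ht] with u hu
    rw [hf, Set.indicator_of_mem hu]
  have hinv := hfint.fourierInv_fourier_eq hfourint hcont
  rw [Real.fourierInv_eq'] at hinv
  set Φ : ℂ → ℂ := fun s => G s * Complex.exp (s * t) with hΦ
  have hshift := (contour_shift Φ (hG.mul (by fun_prop)) c σ (K * Real.exp (σ * t)) R hc hcσ hR (by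
    intro x hx1 hx2 y hy
    rw [hΦ]
    simp only
    rw [norm_mul, Complex.norm_exp]
    have : (((x:ℂ) + y * Complex.I) * t).re = x * t := by simp
    rw [this, mul_div_right_comm]
    have h3 := hGy x hx1 hx2 y hy
    have h4 : 0 ≤ K / y ^ 2 := by positivity
    gcongr) σ hcσ le_rfl).2
  have h5 : ∫ v : ℝ, Complex.exp (↑(2 * π * inner ℝ v t) * Complex.I) • FourierTransform.fourier f v
      = Complex.exp (-((σ:ℂ) * t)) * ∫ v : ℝ, Φ (σ + (2 * π * v : ℝ) * Complex.I) := by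
    rw [← MeasureTheory.integral_const_mul]
    congr 1
    ext v
    rw [hfour, hΦ]
    simp only
    rw [mul_left_comm, ← Complex.exp_add, smul_eq_mul, mul_comm]
    congr 2
    simp only [RCLike.inner_apply, conj_trivial]
    push_cast
    ring
  rw [h5, hf, Set.indicator_of_mem (show t ∈ Set.Ioi (0:ℝ) from ht), mul_comm (g t)] at hinv
  have h6 := mul_left_cancel₀ (Complex.exp_ne_zero _) hinv
  rw [MeasureTheory.Measure.integral_comp_mul_left (fun y : ℝ => Φ (σ + (y : ℝ) * Complex.I)) (2 * π),
    hshift] at h6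
  rw [← h6, norm_smul, Real.norm_eq_abs, abs_abs, abs_of_pos (by positivity), mul_assoc]
  gcongr
  rw [← MeasureTheory.integral_mul_const]
  refine (MeasureTheory.norm_integral_le_integral_norm _).trans (le_of_eq ?_)
  congr 1
  ext y
  rw [hΦ]
  simp only
  rw [norm_mul, Complex.norm_exp]
  congr 2
  simp

lemma arg_lt_of_re_pos (s : ℂ) (hs : 0 < s.re) : |s.arg| < π / 2 :=
  Complex.abs_arg_lt_pi_div_two_iff.2 (Or.inl hs)

lemma cpow_inj (q : ℝ) (hq0 : 0 < q) (hq2 : q < 2) (s z : ℂ) (hs : 0 < s.re) (hz : 0 < z.re)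
    (h : s ^ (q:ℂ) = z ^ (q:ℂ)) : s = z := by
  have hlog : ∀ s : ℂ, 0 < s.re → Complex.log (s ^ (q:ℂ)) = Complex.log s * q := by
    intro s hs
    have hs0 : s ≠ 0 := by rintro rfl; simp at hs
    rw [Complex.cpow_def_of_ne_zero hs0]
    have h1 := abs_lt.1 (arg_lt_of_re_pos s hs)
    have him : (Complex.log s * q).im = s.arg * q := by simp [Complex.log_im]
    apply Complex.log_exp
    · rw [him]; nlinarith [Real.pi_pos]
    · rw [him]; nlinarith [Real.pi_pos]
  have hs0 : s ≠ 0 := by rintro rfl; simp at hs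
  have hz0 : z ≠ 0 := by rintro rfl; simp at hz
  have h1 : Complex.log s * q = Complex.log z * q := by rw [← hlog s hs, ← hlog z hz, h]
  have hqc : (q:ℂ) ≠ 0 := by exact_mod_cast hq0.ne'
  have h2 := mul_right_cancel₀ hqc h1
  rw [← Complex.exp_log hs0, ← Complex.exp_log hz0, h2]

lemma transform_ext (q : ℝ) (hq0 : 0 < q) (hq2 : q < 2) (w s₀ : ℂ) (hw : w ≠ 0)
    (hs₀ : 0 < s₀.re) (hsw : s₀ ^ (q:ℂ) = w) (N : ℕ) (hN : 2 ≤ q * (N + 1)) :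
    ∃ A : ℂ, A ≠ 0 ∧ ∃ G : ℂ → ℂ, DifferentiableOn ℂ G {s | 0 < s.re} ∧
      (∀ s : ℂ, 0 < s.re → s ≠ s₀ →
        G s = 1 / ((s ^ (q:ℂ)) ^ N * (s ^ (q:ℂ) - w)) - A * (1 / (s - s₀) - 1 / (s + 1))) ∧
      ∃ K R : ℝ, 0 ≤ K ∧ 1 ≤ R ∧ ∀ s : ℂ, 0 < s.re → R ≤ ‖s‖ → ‖G s‖ ≤ K / ‖s‖ ^ 2 := by
  have hopen : IsOpen {s : ℂ | 0 < s.re} := isOpen_lt continuous_const Complex.continuous_re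
  have hnhds : {s : ℂ | 0 < s.re} ∈ nhds s₀ := hopen.mem_nhds hs₀
  have hne : ∀ s : ℂ, 0 < s.re → s ≠ 0 := by rintro s hs rfl; simp at hs
  have hqc : (q:ℂ) ≠ 0 := by exact_mod_cast hq0.ne'
  have hpne : ∀ s : ℂ, 0 < s.re → s ^ (q:ℂ) ≠ 0 := fun s hs => by
    rw [Complex.cpow_def_of_ne_zero (hne s hs)]; exact Complex.exp_ne_zero _
  have hne1 : ∀ s : ℂ, 0 < s.re → s + 1 ≠ 0 := by
    intro s hs h
    have := congrArg Complex.re h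
    simp at this
    linarith
  set P : ℂ → ℂ := fun s => s ^ (q:ℂ) with hP
  have hPd : DifferentiableOn ℂ P {s | 0 < s.re} := by
    intro s hs
    exact (differentiableAt_id.cpow_const (Or.inl hs)).differentiableWithinAt
  set D : ℂ → ℂ := dslope P s₀ with hD
  have hDd : DifferentiableOn ℂ D {s | 0 < s.re} := (Complex.differentiableOn_dslope hnhds).2 hPd
  have hDs : ∀ s, s ≠ s₀ → D s = (P s - w) / (s - s₀) := by
    intro s hs
    rw [hD, dslope_of_ne _ hs, slope_def_field]
    simp only [hP, hsw]
  have hD0 : D s₀ ≠ 0 := by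
    rw [hD, dslope_same]
    have h1 := ((hasDerivAt_id s₀).cpow_const (c := (q:ℂ)) (Or.inl hs₀)).deriv
    have h2 : deriv P s₀ = (q:ℂ) * s₀ ^ ((q:ℂ) - 1) * 1 := h1
    rw [h2, Complex.cpow_def_of_ne_zero (hne s₀ hs₀)]
    simp [hqc, Complex.exp_ne_zero]
  have hDne : ∀ s, 0 < s.re → D s ≠ 0 := by
    intro s hs
    by_cases h : s = s₀
    · rw [h]; exact hD0
    · rw [hDs s h]
      apply div_ne_zero _ (sub_ne_zero.2 h)
      intro h2
      apply h
      apply cpow_inj q hq0 hq2 s s₀ hs hs₀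
      rw [hsw]
      exact sub_eq_zero.1 h2
  set A : ℂ := 1 / (w ^ N * D s₀) with hA
  set H : ℂ → ℂ := fun s => 1 / ((P s) ^ N * D s) - A * (s₀ + 1) / (s + 1) with hH
  have hHd : DifferentiableOn ℂ H {s | 0 < s.re} := by
    apply DifferentiableOn.sub
    · apply (differentiableOn_const _).div ((hPd.pow N).mul hDd)
      intro s hs
      exact mul_ne_zero (pow_ne_zero _ (hpne s hs)) (hDne s hs)
    · apply (differentiableOn_const _).div (by fun_prop)
      intro s hs
      exact hne1 s hs
  have hH0 : H s₀ = 0 := by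
    simp only [hH, hA, hP, hsw]
    rw [mul_div_assoc, div_self (hne1 s₀ hs₀)]
    ring
  have hGs : ∀ s : ℂ, 0 < s.re → s ≠ s₀ → dslope H s₀ s =
      1 / ((s ^ (q:ℂ)) ^ N * (s ^ (q:ℂ) - w)) - A * (1 / (s - s₀) - 1 / (s + 1)) := by
    intro s hs hss
    have hd : s - s₀ ≠ 0 := sub_ne_zero.2 hss
    have h1 := hDne s hs
    have h3 := hne1 s hs
    have h4 := hpne s hs
    have h2 : P s - w ≠ 0 := by
      intro h
      rw [hDs s hss, h, zero_div] at h1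
      exact h1 rfl
    rw [dslope_of_ne _ hss, slope_def_field, hH0]
    change ((1 / ((P s) ^ N * D s) - A * (s₀ + 1) / (s + 1)) - 0) / (s - s₀) =
      1 / ((P s) ^ N * (P s - w)) - A * (1 / (s - s₀) - 1 / (s + 1))
    have h4 : P s ≠ 0 := h4
    rw [hDs s hss]
    generalize P s = p at *
    field_simp
    ring
  refine ⟨A, one_div_ne_zero (mul_ne_zero (pow_ne_zero _ hw) hD0), dslope H s₀,
    (Complex.differentiableOn_dslope hnhds).2 hHd, hGs, ?_⟩
  refine ⟨2 + ‖A * (s₀ + 1)‖ * 2, max (max 1 (2 * ‖s₀‖ + 1)) ((2 * ‖w‖) ^ (1 / q)), by positivity,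
    le_max_of_le_left (le_max_left _ _), ?_⟩
  intro s hs hR
  have hR1 : 1 ≤ ‖s‖ := ((le_max_left _ _).trans (le_max_left _ _)).trans hR
  have hR2 : 2 * ‖s₀‖ + 1 ≤ ‖s‖ := ((le_max_right _ _).trans (le_max_left _ _)).trans hR
  have hR3 : (2 * ‖w‖) ^ (1 / q) ≤ ‖s‖ := (le_max_right _ _).trans hR
  have hss : s ≠ s₀ := by
    rintro rfl
    have := norm_nonneg s
    linarith
  have hd : s - s₀ ≠ 0 := sub_ne_zero.2 hss
  have h3 := hne1 s hs
  have hSn : ‖s ^ (q:ℂ)‖ = ‖s‖ ^ q := Complex.norm_cpow_real s q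
  have hSw : 2 * ‖w‖ ≤ ‖s‖ ^ q := by
    calc 2 * ‖w‖ = ((2 * ‖w‖) ^ (1 / q)) ^ q := by
          rw [← Real.rpow_mul (by positivity), one_div_mul_cancel hq0.ne', Real.rpow_one]
      _ ≤ ‖s‖ ^ q := by gcongr
  have hSpos : 0 < ‖s‖ ^ q := by positivity
  have b1 : ‖1 / ((s ^ (q:ℂ)) ^ N * (s ^ (q:ℂ) - w))‖ ≤ 2 / ‖s‖ ^ 2 := by
    rw [norm_div, norm_mul, norm_pow, hSn, norm_one]
    have h5 : ‖s‖ ^ q / 2 ≤ ‖s ^ (q:ℂ) - w‖ := by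
      have := norm_sub_norm_le (s ^ (q:ℂ)) w
      rw [hSn] at this
      linarith
    have h6 : ‖s‖ ^ 2 / 2 ≤ (‖s‖ ^ q) ^ N * ‖s ^ (q:ℂ) - w‖ := by
      calc ‖s‖ ^ 2 / 2 ≤ ‖s‖ ^ (q * (N + 1)) / 2 := by
            rw [← Real.rpow_natCast]
            gcongr
            exact_mod_cast hN
        _ = (‖s‖ ^ q) ^ N * (‖s‖ ^ q / 2) := by
            rw [Real.rpow_mul (by positivity)]
            have : ((N:ℝ) + 1) = ((N + 1 : ℕ) : ℝ) := by push_cast; ring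
            rw [this, Real.rpow_natCast, pow_succ]
            ring
        _ ≤ _ := by gcongr
    have h7 : 0 < ‖s‖ ^ 2 / 2 := by positivity
    calc 1 / ((‖s‖ ^ q) ^ N * ‖s ^ (q:ℂ) - w‖) ≤ 1 / (‖s‖ ^ 2 / 2) := by gcongr
      _ = _ := by rw [one_div_div]
  have b2 : ‖A * (1 / (s - s₀) - 1 / (s + 1))‖ ≤ ‖A * (s₀ + 1)‖ * 2 / ‖s‖ ^ 2 := by
    have h8 : A * (1 / (s - s₀) - 1 / (s + 1)) = A * (s₀ + 1) / ((s - s₀) * (s + 1)) := by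
      field_simp; ring
    rw [h8, norm_div, norm_mul (s - s₀)]
    have h9 : ‖s‖ / 2 ≤ ‖s - s₀‖ := by
      have := norm_sub_norm_le s s₀
      linarith
    have h10 : ‖s‖ ≤ ‖s + 1‖ := by
      rw [Complex.norm_def, Complex.norm_def]
      apply Real.sqrt_le_sqrt
      rw [Complex.normSq_apply, Complex.normSq_apply]
      simp
      nlinarith
    have h11 : 0 < ‖s‖ := by linarith
    calc ‖A * (s₀ + 1)‖ / (‖s - s₀‖ * ‖s + 1‖) ≤ ‖A * (s₀ + 1)‖ / (‖s‖ / 2 * ‖s‖) := by gcongr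
      _ = _ := by field_simp
  rw [hGs s hs hss, add_div]
  exact (norm_sub_le _ _).trans (add_le_add b1 b2)

/-- Terms of the tail series. -/
noncomputable def mlTerm (q : ℝ) (w : ℂ) (N i : ℕ) (t : ℝ) : ℂ :=
  w ^ i * ((t ^ (q * (i + (N + 1)) - 1) : ℝ) : ℂ) / (Real.Gamma (q * (i + (N + 1))) : ℂ)

lemma mlTerm_bound (q : ℝ) (hq0 : 0 < q) (w : ℂ) (N : ℕ) (hN : 2 ≤ q * (N + 1))
    (σ : ℝ) (hσ : 0 < σ) (hσw : σ ^ q = 2 * ‖w‖) (hw : w ≠ 0) (i : ℕ) (t : ℝ) (ht : 0 < t) :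
    ‖mlTerm q w N i t‖ ≤ σ ^ (1 - q * (N + 1)) * (1 / 2) ^ i * Real.exp (σ * t) := by
  have ha : 1 ≤ q * (i + (N + 1)) := by
    have : 0 ≤ q * (i:ℝ) := by positivity
    rw [mul_add]; linarith
  have hG := gamma_lower (q * (i + (N + 1))) (σ * t) ha (by positivity)
  have hGpos : 0 < Real.Gamma (q * (i + (N + 1))) := Real.Gamma_pos_of_pos (by linarith)
  have hwpos : 0 < ‖w‖ := norm_pos_iff.2 hw
  rw [mlTerm, norm_div, norm_mul, norm_pow, Complex.norm_real, Complex.norm_real,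
    Real.norm_of_nonneg (by positivity), Real.norm_of_nonneg hGpos.le, div_le_iff₀ hGpos]
  refine le_trans (le_of_eq ?_) (mul_le_mul_of_nonneg_left hG (by positivity))
  rw [Real.mul_rpow hσ.le ht.le]
  have h1 : Real.exp (σ * t) * Real.exp (-(σ * t)) = 1 := by rw [← Real.exp_add]; simp
  have h2 : σ ^ (1 - q * (N + 1)) * σ ^ (q * (i + (N + 1)) - 1) = (2 * ‖w‖) ^ i := by
    rw [← Real.rpow_add hσ, ← hσw, ← Real.rpow_natCast, ← Real.rpow_mul hσ.le]
    ring_nf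
  calc _ = (1/2)^i * (2 * ‖w‖) ^ i * t ^ (q * (i + (N + 1)) - 1) * 1 := by
        rw [← mul_pow]; ring_nf
    _ = _ := by rw [← h2, ← h1]; ring

lemma mlTerm_cont (q : ℝ) (hq0 : 0 < q) (w : ℂ) (N : ℕ) (hN : 2 ≤ q * (N + 1)) (i : ℕ) :
    Continuous (mlTerm q w N i) := by
  have ha : 0 ≤ q * (i + (N + 1)) - 1 := by
    have : 0 ≤ q * (i:ℝ) := by positivity
    rw [mul_add]; linarith
  have : Continuous (fun t : ℝ => ((t ^ (q * (i + (N + 1)) - 1) : ℝ) : ℂ)) :=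
    Complex.continuous_ofReal.comp (Real.continuous_rpow_const ha)
  unfold mlTerm
  exact (this.const_mul _).div_const _

lemma mlTerm_laplace (q : ℝ) (hq0 : 0 < q) (w : ℂ) (N : ℕ) (hN : 2 ≤ q * (N + 1)) (i : ℕ)
    (s : ℂ) (hs : 0 < s.re) :
    ∫ t in Set.Ioi (0:ℝ), mlTerm q w N i t * Complex.exp (-(s * t)) =
      ((s ^ (q:ℂ))⁻¹) ^ (N + 1) * (w * (s ^ (q:ℂ))⁻¹) ^ i := by
  have ha : 1 ≤ q * (i + (N + 1)) := by
    have : 0 ≤ q * (i:ℝ) := by positivity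
    rw [mul_add]; linarith
  have hGpos : 0 < Real.Gamma (q * (i + (N + 1))) := Real.Gamma_pos_of_pos (by linarith)
  have hG : (Real.Gamma (q * (i + (N + 1))) : ℂ) ≠ 0 := by exact_mod_cast hGpos.ne'
  have h := laplace_pow _ ha s hs
  have h1 : ∀ t : ℝ, mlTerm q w N i t * Complex.exp (-(s * t)) =
      (w ^ i / (Real.Gamma (q * (i + (N + 1))) : ℂ)) *
      (((t ^ (q * (i + (N + 1)) - 1) : ℝ) : ℂ) * Complex.exp (-(s * t))) := by
    intro t; rw [mlTerm]; ring
  simp_rw [h1]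
  rw [MeasureTheory.integral_const_mul, h]
  have h2 : (s⁻¹) ^ ((q * (i + (N + 1)) : ℝ) : ℂ) = ((s ^ (q:ℂ))⁻¹) ^ (i + (N + 1)) := by
    have : ((q * (i + (N + 1)) : ℝ) : ℂ) = (q:ℂ) * ((i + (N + 1) : ℕ) : ℂ) := by push_cast; ring
    rw [this, Complex.cpow_mul_nat, Complex.inv_cpow]
    have h3 := arg_lt_of_re_pos s hs
    intro h4
    rw [h4, abs_of_pos Real.pi_pos] at h3
    linarith [Real.pi_pos]
  rw [h2, pow_add, mul_pow]
  field_simp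

lemma ml_tail_asymp (q : ℝ) (hq0 : 0 < q) (hq2 : q < 2) (w s₀ : ℂ) (hw : w ≠ 0)
    (hs₀ : 0 < s₀.re) (hsw : s₀ ^ (q:ℂ) = w) (N : ℕ) (hN : 2 ≤ q * (N + 1)) :
    ∃ A : ℂ, A ≠ 0 ∧ ∃ C : ℝ, ∀ t : ℝ, 0 < t → Summable (fun i => mlTerm q w N i t) ∧
      ‖(∑' i, mlTerm q w N i t) - A * (Complex.exp (s₀ * t) - Complex.exp (-t))‖ ≤
        C * Real.exp (s₀.re / 2 * t) := by
  obtain ⟨A, hA, G, hGd, hGs, K, R, hK, hR, hGK⟩ := transform_ext q hq0 hq2 w s₀ hw hs₀ hsw N hN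
  have hwpos : 0 < ‖w‖ := norm_pos_iff.2 hw
  set σ : ℝ := (2 * ‖w‖) ^ (1 / q) with hσdef
  have hσ : 0 < σ := by positivity
  have hσw : σ ^ q = 2 * ‖w‖ := by
    rw [hσdef, ← Real.rpow_mul (by positivity), one_div_mul_cancel hq0.ne', Real.rpow_one]
  have hs₀σ : s₀.re ≤ σ := by
    refine (Complex.re_le_norm s₀).trans ?_
    by_contra hcon
    push Not at hcon
    have h1 : σ ^ q < ‖s₀‖ ^ q := Real.rpow_lt_rpow hσ.le hcon hq0
    rw [← Complex.norm_cpow_real, hsw, hσw] at h1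
    linarith
  have hbound := fun i t ht => mlTerm_bound q hq0 w N hN σ hσ hσw hw i t ht
  have hgeo : Summable (fun i : ℕ => σ ^ (1 - q * (N + 1)) * (1 / 2 : ℝ) ^ i) :=
    summable_geometric_two.mul_left _
  have hsum : ∀ t : ℝ, 0 < t → Summable (fun i => mlTerm q w N i t) := fun t ht =>
    Summable.of_norm_bounded (hgeo.mul_right (Real.exp (σ * t))) (fun i => hbound i t ht)
  set B : ℝ := ∑' i : ℕ, σ ^ (1 - q * (N + 1)) * (1 / 2 : ℝ) ^ i with hBdef
  set F : ℝ → ℂ := fun t => ∑' i, mlTerm q w N i t with hF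
  have hFb : ∀ t, 0 < t → ‖F t‖ ≤ B * Real.exp (σ * t) := fun t ht =>
    tsum_of_norm_bounded (hgeo.hasSum.mul_right (Real.exp (σ * t))) (fun i => hbound i t ht)
  have hFc : ContinuousOn F (Set.Ioi 0) := by
    intro t ht
    have ht : 0 < t := ht
    have h1 : ContinuousOn F (Set.Ioo 0 (t + 1)) := by
      refine continuousOn_tsum (fun i => (mlTerm_cont q hq0 w N hN i).continuousOn)
        (hgeo.mul_right (Real.exp (σ * (t + 1)))) ?_
      intro i x hx
      refine (hbound i x hx.1).trans ?_
      gcongr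
      exact hx.2.le
    exact (h1.continuousAt (Ioo_mem_nhds ht (by linarith))).continuousWithinAt
  refine ⟨A, hA, ?_⟩
  have hFL : ∀ s : ℂ, s.re = σ + 1 → ∫ t in Set.Ioi (0:ℝ), F t * Complex.exp (-(s * t)) =
      1 / ((s ^ (q:ℂ)) ^ N * (s ^ (q:ℂ) - w)) := by
    intro s hs
    have hs0 : 0 < s.re := by linarith
    have hsn : σ < ‖s‖ := by linarith [Complex.re_le_norm s]
    have hSn : 2 * ‖w‖ < ‖s ^ (q:ℂ)‖ := by
      rw [Complex.norm_cpow_real, ← hσw]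
      exact Real.rpow_lt_rpow hσ.le hsn hq0
    set S : ℂ := s ^ (q:ℂ) with hS
    have hSpos : 0 < ‖S‖ := by linarith
    have hS0 : S ≠ 0 := norm_pos_iff.1 hSpos
    have hSw : S - w ≠ 0 := by
      intro h
      rw [sub_eq_zero.1 h] at hSn
      linarith
    have hr : ‖w * S⁻¹‖ < 1 := by
      rw [norm_mul, norm_inv, ← div_eq_mul_inv, div_lt_one hSpos]
      linarith
    have hg1 := (hasSum_geometric_of_norm_lt_one hr).mul_left ((S⁻¹) ^ (N + 1))
    have hg2 := MeasureTheory.hasSum_integral_of_dominated_convergence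
      (μ := MeasureTheory.volume.restrict (Set.Ioi (0:ℝ)))
      (F := fun i t => mlTerm q w N i t * Complex.exp (-(s * t)))
      (f := fun t => F t * Complex.exp (-(s * t)))
      (fun i t => σ ^ (1 - q * (N + 1)) * (1 / 2 : ℝ) ^ i * Real.exp (-1 * t)) ?_ ?_ ?_ ?_ ?_
    · simp_rw [mlTerm_laplace q hq0 w N hN _ s hs0] at hg2
      rw [hg2.unique hg1, inv_pow, pow_succ]
      have h1w : 1 - w * S⁻¹ ≠ 0 := by
        intro h
        apply hSw
        have : S * (1 - w * S⁻¹) = S - w := by field_simp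
        rw [← this, h, mul_zero]
      field_simp
    · intro i
      have := mlTerm_cont q hq0 w N hN i
      exact Continuous.aestronglyMeasurable (by fun_prop)
    · intro i
      filter_upwards [MeasureTheory.ae_restrict_mem measurableSet_Ioi] with t ht
      rw [norm_mul, Complex.norm_exp]
      have h1 : (-(s * t)).re = - ((σ + 1) * t) := by simp [hs]
      rw [h1]
      calc _ ≤ σ ^ (1 - q * (N + 1)) * (1 / 2 : ℝ) ^ i * Real.exp (σ * t) *
            Real.exp (- ((σ + 1) * t)) := by gcongr; exact hbound i t ht
        _ = _ := by rw [mul_assoc, ← Real.exp_add]; ring_nf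
    · exact Filter.Eventually.of_forall fun t => hgeo.mul_right _
    · simp_rw [tsum_mul_right]
      exact (exp_neg_integrableOn_Ioi 0 one_pos).const_mul B
    · filter_upwards [MeasureTheory.ae_restrict_mem measurableSet_Ioi] with t ht
      exact (hsum t ht).hasSum.mul_right _
  have hFint : ∀ s : ℂ, s.re = σ + 1 → MeasureTheory.IntegrableOn
      (fun t : ℝ => F t * Complex.exp (-(s * t))) (Set.Ioi 0) := by
    intro s hs
    refine MeasureTheory.Integrable.mono' (g := fun t => B * Real.exp (-1 * t)) ?_ ?_ ?_
    · exact (exp_neg_integrableOn_Ioi 0 one_pos).const_mul B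
    · exact ContinuousOn.aestronglyMeasurable (hFc.mul (by fun_prop)) measurableSet_Ioi
    · filter_upwards [MeasureTheory.ae_restrict_mem measurableSet_Ioi] with t ht
      rw [norm_mul, Complex.norm_exp]
      have h1 : (-(s * t)).re = - ((σ + 1) * t) := by simp [hs]
      rw [h1]
      calc _ ≤ B * Real.exp (σ * t) * Real.exp (- ((σ + 1) * t)) := by gcongr; exact hFb t ht
        _ = _ := by rw [mul_assoc, ← Real.exp_add]; ring_nf
  have hC := laplace_growth (fun t => F t - A * (Complex.exp (s₀ * t) - Complex.exp (-t)))
    (hFc.sub (by fun_prop)) (B + ‖A‖ * 2) σ (σ + 1) (s₀.re / 2) K R ?_ (by linarith) (by linarith)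
    (by linarith) hR hK G hGd (fun s hs h => hGK s (by linarith) h) ?_
  · obtain ⟨C, hC⟩ := hC
    exact ⟨C, fun t ht => ⟨hsum t ht, hC t ht⟩⟩
  · intro t ht
    have e1 : ‖Complex.exp (s₀ * t)‖ ≤ Real.exp (σ * t) := by
      rw [Complex.norm_exp]
      have : (s₀ * t).re = s₀.re * t := by simp
      rw [this]; gcongr
    have e2 : ‖Complex.exp (-t)‖ ≤ Real.exp (σ * t) := by
      rw [Complex.norm_exp]
      have : (-(t:ℂ)).re = -t := by simp
      rw [this]; gcongr; nlinarith
    calc _ ≤ ‖F t‖ + ‖A‖ * (‖Complex.exp (s₀ * t)‖ + ‖Complex.exp (-t)‖) := by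
          refine (norm_sub_le _ _).trans ?_
          rw [norm_mul]
          gcongr
          exact norm_sub_le _ _
      _ ≤ B * Real.exp (σ * t) + ‖A‖ * (Real.exp (σ * t) + Real.exp (σ * t)) := by
          gcongr; exact hFb t ht
      _ = _ := by ring
  · intro s hs
    have hss : s ≠ s₀ := by rintro rfl; linarith
    rw [hGs s (by linarith) hss, ← hFL s hs]
    have r1 : (-(s - s₀)).re < 0 := by simp; linarith
    have r2 : (-(s + 1)).re < 0 := by simp; linarith
    have i1 := integral_exp_mul_complex_Ioi r1 0
    have i2 := integral_exp_mul_complex_Ioi r2 0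
    have j1 := integrableOn_exp_mul_complex_Ioi r1 0
    have j2 := integrableOn_exp_mul_complex_Ioi r2 0
    have hd : s - s₀ ≠ 0 := sub_ne_zero.2 hss
    have h1 : s + 1 ≠ 0 := by intro h; rw [h] at r2; simp at r2
    have k1 : 1 / (s - s₀) = ∫ x : ℝ in Set.Ioi 0, Complex.exp (-(s - s₀) * x) := by
      rw [i1]; simp; rw [← neg_sub s s₀, neg_div, div_neg, neg_neg, one_div]
    have k2 : 1 / (s + 1) = ∫ x : ℝ in Set.Ioi 0, Complex.exp (-(s + 1) * x) := by
      rw [i2, neg_div_neg_eq]; simp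
    have j3 : MeasureTheory.IntegrableOn (fun x : ℝ => A * (Complex.exp (-(s - s₀) * x) -
        Complex.exp (-(s + 1) * x))) (Set.Ioi 0) := (j1.sub j2).const_mul A
    rw [k1, k2, ← MeasureTheory.integral_sub j1 j2, ← MeasureTheory.integral_const_mul,
      ← MeasureTheory.integral_sub (hFint s hs) j3]
    congr 1
    ext t
    have m1 : Complex.exp (-(s - s₀) * t) = Complex.exp (s₀ * t) * Complex.exp (-(s * t)) := by
      rw [← Complex.exp_add]; ring_nf
    have m2 : Complex.exp (-(s + 1) * t) = Complex.exp (-t) * Complex.exp (-(s * t)) := by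
      rw [← Complex.exp_add]; ring_nf
    rw [m1, m2]
    ring

/-- Instability of a single fractional mode: if `0 < q < 2` and the pole `λ ≠ 0`
satisfies `|arg (-λ)| < q π / 2`, then the modulus of the impulse response
`t ↦ t^{q-1} E_{q,q}(-λ t^q)` of `1/(s^q + λ)` tends to `+∞` as `t → ∞`. -/
theorem fractional_mode_unstable (q : ℝ) (hq0 : 0 < q) (hq2 : q < 2)
    (lambda : ℂ) (hl : lambda ≠ 0)
    (harg : |Complex.arg (-lambda)| < q * π / 2) :
    Tendsto (fun t : ℝ => ‖((t ^ (q - 1) : ℝ) : ℂ) *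
        mittagLeffler q q (-(lambda * (t ^ q : ℝ)))‖) atTop atTop := by
  set w : ℂ := -lambda with hwdef
  have hw : w ≠ 0 := neg_ne_zero.2 hl
  have hqc : (q:ℂ) ≠ 0 := by exact_mod_cast hq0.ne'
  set s₀ : ℂ := w ^ ((1 / q : ℝ) : ℂ) with hs₀def
  have himlog : (Complex.log w * ((1 / q : ℝ) : ℂ)).im = w.arg / q := by
    rw [Complex.im_mul_ofReal, Complex.log_im]; ring
  have hs₀exp : s₀ = Complex.exp (Complex.log w * ((1 / q : ℝ) : ℂ)) := by
    rw [hs₀def, Complex.cpow_def_of_ne_zero hw]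
  have habs := abs_lt.1 harg
  have ha1 : -(π / 2) < w.arg / q := by rw [lt_div_iff₀ hq0]; linarith [habs.1]
  have ha2 : w.arg / q < π / 2 := by rw [div_lt_iff₀ hq0]; linarith [habs.2]
  have hs₀ : 0 < s₀.re := by
    rw [hs₀exp, Complex.exp_re, himlog]
    exact mul_pos (Real.exp_pos _) (Real.cos_pos_of_mem_Ioo ⟨ha1, ha2⟩)
  have hsw : s₀ ^ (q:ℂ) = w := by
    have hs00 : s₀ ≠ 0 := by rw [hs₀exp]; exact Complex.exp_ne_zero _
    rw [Complex.cpow_def_of_ne_zero hs00, hs₀exp, Complex.log_exp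
      (by rw [himlog]; linarith [Real.pi_pos]) (by rw [himlog]; linarith [Real.pi_pos])]
    have : Complex.log w * ((1 / q : ℝ) : ℂ) * q = Complex.log w := by
      push_cast; field_simp
    rw [this, Complex.exp_log hw]
  obtain ⟨N, hN'⟩ := exists_nat_ge (2 / q)
  have hN : 2 ≤ q * (N + 1) := by
    rw [div_le_iff₀ hq0] at hN'
    nlinarith
  obtain ⟨A, hA, C, hC⟩ := ml_tail_asymp q hq0 hq2 w s₀ hw hs₀ hsw N hN
  set u : ℕ → ℝ → ℂ := fun i t =>
    w ^ i * ((t ^ (q * (i + 1) - 1) : ℝ) : ℂ) / (Real.Gamma (q * (i + 1)) : ℂ) with hu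
  have hdecomp : ∀ t : ℝ, 0 < t → ((t ^ (q - 1) : ℝ) : ℂ) *
      mittagLeffler q q (-(lambda * (t ^ q : ℝ))) =
      ∑ i ∈ Finset.range N, u i t + w ^ N * ∑' i, mlTerm q w N i t := by
    intro t ht
    rw [mittagLeffler, ← tsum_mul_left, ← tsum_mul_left]
    have e1 : ∀ i : ℕ, ((t ^ (q - 1) : ℝ) : ℂ) *
        ((-(lambda * (t ^ q : ℝ))) ^ i / (Real.Gamma (q * i + q) : ℂ)) = u i t := by
      intro i
      have h1 : -(lambda * ((t ^ q : ℝ) : ℂ)) = w * ((t ^ q : ℝ) : ℂ) := by rw [hwdef]; ring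
      have h2 : t ^ (q * (i + 1) - 1) = t ^ (q - 1) * (t ^ q) ^ i := by
        rw [← Real.rpow_natCast, ← Real.rpow_mul ht.le, ← Real.rpow_add ht]
        ring_nf
      rw [h1, hu]
      simp only
      rw [h2, mul_pow, show q * (i:ℝ) + q = q * (i + 1) by ring]
      push_cast
      ring
    have e2 : ∀ i : ℕ, w ^ N * mlTerm q w N i t = u (i + N) t := by
      intro i
      rw [hu, mlTerm]
      simp only
      push_cast
      rw [show (i:ℝ) + (N + 1) = i + N + 1 by ring, pow_add]
      ring
    simp_rw [e1, e2]
    refine (Summable.sum_add_tsum_nat_add' ?_).symm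
    simp_rw [← e2]
    exact (hC t ht).1.mul_left _
  have hlim : Tendsto (fun t : ℝ => (((t ^ (q - 1) : ℝ) : ℂ) *
      mittagLeffler q q (-(lambda * (t ^ q : ℝ)))) * Complex.exp (-(s₀ * t))) atTop
      (nhds (w ^ N * A)) := by
    have nexp : ∀ t : ℝ, ‖Complex.exp (-(s₀ * t))‖ = Real.exp (-s₀.re * t) := by
      intro t
      rw [Complex.norm_exp]; simp
    have t1 : Tendsto (fun t : ℝ => ∑ i ∈ Finset.range N, u i t * Complex.exp (-(s₀ * t))) atTop
        (nhds (∑ i ∈ Finset.range N, (0:ℂ))) := by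
      refine tendsto_finsetSum _ fun i _ => ?_
      have h1 := (tendsto_rpow_mul_exp_neg_mul_atTop_nhds_zero (q * (i + 1) - 1) s₀.re hs₀).const_mul
        (‖w ^ i‖ / ‖(Real.Gamma (q * (i + 1)) : ℂ)‖)
      rw [mul_zero] at h1
      refine squeeze_zero_norm' ?_ h1
      filter_upwards [eventually_gt_atTop 0] with t ht
      rw [norm_mul, nexp, hu]
      simp only
      rw [norm_div, norm_mul, Complex.norm_real, Real.norm_of_nonneg (by positivity)]
      apply le_of_eq
      ring
    have t2 : Tendsto (fun t : ℝ => ((∑' i, mlTerm q w N i t) -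
        A * (Complex.exp (s₀ * t) - Complex.exp (-t))) * Complex.exp (-(s₀ * t))) atTop
        (nhds 0) := by
      have h1 := (tendsto_rpow_mul_exp_neg_mul_atTop_nhds_zero 0 (s₀.re / 2) (by linarith)).const_mul C
      rw [mul_zero] at h1
      refine squeeze_zero_norm' ?_ h1
      filter_upwards [eventually_gt_atTop 0] with t ht
      rw [norm_mul, nexp, Real.rpow_zero, one_mul]
      calc _ ≤ C * Real.exp (s₀.re / 2 * t) * Real.exp (-s₀.re * t) := by
            gcongr; exact (hC t ht).2
        _ = _ := by rw [mul_assoc, ← Real.exp_add]; ring_nf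
    have t3 : Tendsto (fun t : ℝ => Complex.exp (-t) * Complex.exp (-(s₀ * t))) atTop
        (nhds 0) := by
      have h1 := tendsto_rpow_mul_exp_neg_mul_atTop_nhds_zero 0 (1 + s₀.re) (by linarith)
      refine squeeze_zero_norm' ?_ h1
      filter_upwards [eventually_gt_atTop 0] with t ht
      rw [norm_mul, nexp, Real.rpow_zero, one_mul, Complex.norm_exp, ← Real.exp_add]
      apply le_of_eq
      congr 1
      simp
      ring
    have t4 := t1.add ((t2.add ((tendsto_const_nhds (x := (1:ℂ))).sub t3 |>.const_mul A)).const_mul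
      (w ^ N))
    have t5 : (∑ i ∈ Finset.range N, (0:ℂ)) + w ^ N * (0 + A * (1 - 0)) = w ^ N * A := by simp
    rw [t5] at t4
    refine t4.congr' ?_
    filter_upwards [eventually_gt_atTop 0] with t ht
    rw [hdecomp t ht, ← Finset.sum_mul]
    have h1 : Complex.exp (s₀ * t) * Complex.exp (-(s₀ * t)) = 1 := by
      rw [← Complex.exp_add]; simp
    linear_combination (-w ^ N * A) * h1
  have hexp : Tendsto (fun t : ℝ => Real.exp (s₀.re * t)) atTop atTop :=
    Real.tendsto_exp_atTop.comp (tendsto_id.const_mul_atTop hs₀)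
  have hfin := hlim.norm.pos_mul_atTop
    (norm_pos_iff.2 (mul_ne_zero (pow_ne_zero N hw) hA)) hexp
  refine hfin.congr fun t => ?_
  rw [norm_mul _ (Complex.exp (-(s₀ * t))), Complex.norm_exp, mul_assoc, ← Real.exp_add]
  simp
end

section
/- Let q be a real number with 0 < q < 2 and let λ be a nonzero complex number with |arg λ| < π(1 − q/2). Then the function t ↦ t^{q−1} · E_{q,q}(−λ t^q) is integrable on (0, ∞). (BIBO stability of the fractional transfer function 1/(s^q + λ): its impulse response is absolutely integrable.) -/
open Real MeasureTheory Set

open Filter Topology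

namespace FM

/-- The Hankel integrand in logarithmic coordinates. -/
noncomputable def F (a w : ℂ) : ℂ := Complex.exp (Complex.exp w + (1 - a) * w)

/-- The Hankel-type contour integral around the half strip `re w ≥ c`, `|im w| ≤ θ`. -/
noncomputable def J (θ c : ℝ) (f : ℂ → ℂ) : ℂ :=
  (∫ u in Ioi c, f (u + (θ : ℝ) * Complex.I)) - (∫ u in Ioi c, f (u + ((-θ : ℝ) : ℂ) * Complex.I))
    + Complex.I * ∫ v in (-θ)..θ, f (c + v * Complex.I)

lemma int_Ioi (k : ℝ) (hk : k < 0) (b c : ℝ) :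
    IntegrableOn (fun u : ℝ => rexp (k * rexp u + b * u)) (Ioi c) := by
  refine integrable_of_isBigO_exp_neg (b := 1) one_pos (by fun_prop) ?_
  refine Asymptotics.IsBigO.of_bound 1 ?_
  have h := (tendsto_rpow_mul_exp_neg_mul_atTop_nhds_zero (b + 1) (-k) (by linarith)).comp
    Real.tendsto_exp_atTop
  have h2 := h.eventually (ge_mem_nhds one_pos)
  filter_upwards [h2] with u hu
  simp only [Function.comp, ← Real.exp_mul, ← Real.exp_add, neg_neg] at hu
  rw [Real.norm_of_nonneg (Real.exp_pos _).le, Real.norm_of_nonneg (Real.exp_pos _).le, one_mul]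
  rw [Real.exp_le_one_iff] at hu
  apply Real.exp_le_exp.2
  linarith

lemma int_all (k : ℝ) (hk : k < 0) (b : ℝ) (hb : 0 < b) :
    Integrable (fun u : ℝ => rexp (k * rexp u + b * u)) := by
  rw [← integrableOn_univ, ← Iic_union_Ioi (a := (0:ℝ))]
  refine IntegrableOn.union ?_ (int_Ioi k hk b 0)
  refine (integrableOn_exp_mul_Iic hb 0).mono' (by fun_prop) ?_
  refine ae_of_all _ fun u => ?_
  rw [Real.norm_of_nonneg (Real.exp_pos _).le]
  apply Real.exp_le_exp.2
  nlinarith [Real.exp_pos u]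

lemma J_shift (θ c c' : ℝ) (hθ : 0 ≤ θ) (hc : c ≤ c') (f : ℂ → ℂ)
    (hf : ∀ w : ℂ, |w.im| ≤ θ → DifferentiableAt ℂ f w)
    (h1 : IntegrableOn (fun u : ℝ => f (u + (θ : ℝ) * Complex.I)) (Ioi c))
    (h2 : IntegrableOn (fun u : ℝ => f (u + ((-θ : ℝ) : ℂ) * Complex.I)) (Ioi c)) :
    J θ c f = J θ c' f := by
  have key := Complex.integral_boundary_rect_eq_zero_of_differentiableOn f (⟨c, -θ⟩ : ℂ) ⟨c', θ⟩ (by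
    intro w hw
    refine (hf w ?_).differentiableWithinAt
    rw [Complex.mem_reProdIm] at hw
    have := hw.2
    simp only [uIcc_of_le (by linarith : -θ ≤ θ)] at this
    exact abs_le.2 this)
  have e1 : ∀ g : ℝ → ℂ, IntegrableOn g (Ioi c) →
      ∫ u in Ioi c, g u = (∫ u in c..c', g u) + ∫ u in Ioi c', g u := by
    intro g hg
    rw [intervalIntegral.integral_of_le hc, ← setIntegral_union (Ioc_disjoint_Ioi le_rfl)
      measurableSet_Ioi (hg.mono_set Ioc_subset_Ioi_self) (hg.mono_set (Ioi_subset_Ioi hc)),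
      Ioc_union_Ioi_eq_Ioi hc]
  unfold J
  rw [e1 _ h1, e1 _ h2]
  simp only [smul_eq_mul] at key
  linear_combination -key

lemma imb (x v : ℝ) (hv : |v| ≤ π) : x * v ≤ |x| * π :=
  (le_abs_self _).trans (by rw [abs_mul]; gcongr)

lemma rot (θ₁ θ₂ c : ℝ) (f : ℂ → ℂ) (hf : Differentiable ℂ f)
    (h1 : IntegrableOn (fun u : ℝ => f (u + (θ₁ : ℝ) * Complex.I)) (Ioi c))
    (h2 : IntegrableOn (fun u : ℝ => f (u + (θ₂ : ℝ) * Complex.I)) (Ioi c))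
    (hlim : Tendsto (fun R : ℝ => ∫ v in θ₁..θ₂, f (R + v * Complex.I)) atTop (𝓝 0)) :
    (∫ u in Ioi c, f (u + (θ₁ : ℝ) * Complex.I)) - (∫ u in Ioi c, f (u + (θ₂ : ℝ) * Complex.I))
      - Complex.I * (∫ v in θ₁..θ₂, f (c + v * Complex.I)) = 0 := by
  have key := fun R : ℝ => Complex.integral_boundary_rect_eq_zero_of_differentiableOn f
    (⟨c, θ₁⟩ : ℂ) ⟨R, θ₂⟩ hf.differentiableOn
  have l1 := intervalIntegral_tendsto_integral_Ioi c h1 tendsto_id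
  have l2 := intervalIntegral_tendsto_integral_Ioi c h2 tendsto_id
  have l := ((l1.sub l2).add (hlim.const_mul Complex.I)).sub
    (tendsto_const_nhds (x := Complex.I * (∫ v in θ₁..θ₂, f (c + v * Complex.I))))
  simp only [smul_eq_mul] at key
  have := tendsto_nhds_unique l (tendsto_const_nhds.congr (fun R => (key R).symm))
  simpa using this

lemma F_norm (a : ℂ) (u v : ℝ) :
    ‖F a (u + v * Complex.I)‖ = rexp (Real.cos v * rexp u + (1 - a.re) * u) * rexp (a.im * v) := by
  rw [F, Complex.norm_exp, ← Real.exp_add]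
  congr 1
  simp [Complex.exp_re]
  ring

lemma F_diff (a : ℂ) : Differentiable ℂ (F a) := by
  unfold F; fun_prop

lemma F_int (a : ℂ) (v c : ℝ) (hv : Real.cos v < 0) :
    IntegrableOn (fun u : ℝ => F a (u + (v : ℝ) * Complex.I)) (Ioi c) := by
  refine ((int_Ioi _ hv (1 - a.re) c).mul_const (rexp (a.im * v))).mono' ?_ ?_
  · have := (F_diff a).continuous
    fun_prop
  · exact ae_of_all _ fun u => (F_norm a u v).le

lemma F_int_all (a : ℂ) (ha : a.re < 1) (v : ℝ) (hv : Real.cos v < 0) :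
    Integrable (fun u : ℝ => F a (u + (v : ℝ) * Complex.I)) := by
  refine ((int_all _ hv (1 - a.re) (by linarith)).mul_const (rexp (a.im * v))).mono' ?_ ?_
  · have := (F_diff a).continuous
    fun_prop
  · exact ae_of_all _ fun u => (F_norm a u v).le

lemma lim_exp (k : ℝ) (hk : k < 0) (b : ℝ) :
    Tendsto (fun u : ℝ => rexp (k * rexp u + b * u)) atTop (𝓝 0) := by
  have h := (tendsto_rpow_mul_exp_neg_mul_atTop_nhds_zero b (-k) (by linarith)).comp
    Real.tendsto_exp_atTop
  refine h.congr fun u => ?_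
  simp only [Function.comp, ← Real.exp_mul, ← Real.exp_add, neg_neg]
  ring_nf

lemma F_lim (a : ℂ) (θ₁ θ₂ k : ℝ) (hk : k < 0) (h12 : θ₁ ≤ θ₂)
    (hv : ∀ v ∈ Icc θ₁ θ₂, Real.cos v ≤ k) (hpi : ∀ v ∈ Icc θ₁ θ₂, |v| ≤ π) :
    Tendsto (fun R : ℝ => ∫ v in θ₁..θ₂, F a (R + v * Complex.I)) atTop (𝓝 0) := by
  have h := ((lim_exp k hk (1 - a.re)).mul_const (rexp (|a.im| * π))).mul_const |θ₂ - θ₁|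
  rw [zero_mul, zero_mul] at h
  refine squeeze_zero_norm (fun R => ?_) h
  refine intervalIntegral.norm_integral_le_of_norm_le_const fun v hv' => ?_
  rw [uIoc_of_le h12] at hv'
  have hv'' := Ioc_subset_Icc_self hv'
  rw [F_norm]
  refine mul_le_mul (Real.exp_le_exp.2 ?_) (Real.exp_le_exp.2 (imb _ _ (hpi v hv'')))
    (Real.exp_pos _).le (Real.exp_pos _).le
  gcongr
  exact hv v hv''

lemma J_rot (a : ℂ) (θ c : ℝ) (h1 : π / 2 < θ) (h2 : θ ≤ π) : J θ c (F a) = J π c (F a) := by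
  have hk : Real.cos θ < 0 := Real.cos_neg_of_pi_div_two_lt_of_lt h1 (by linarith [Real.pi_pos])
  have r1 := rot θ π c (F a) (F_diff a) (F_int a θ c hk) (F_int a π c (by simp))
    (F_lim a θ π _ hk h2 (fun v hv => Real.cos_le_cos_of_nonneg_of_le_pi
      (by linarith [Real.pi_pos]) hv.2 hv.1) (fun v hv => abs_le.2 ⟨by linarith [Real.pi_pos, hv.1], hv.2⟩))
  have r2 := rot (-π) (-θ) c (F a) (F_diff a) (F_int a (-π) c (by simp)) (F_int a (-θ) c (by simpa))
    (F_lim a (-π) (-θ) _ hk (by linarith) (fun v hv => by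
      rw [← Real.cos_neg v]
      exact Real.cos_le_cos_of_nonneg_of_le_pi
        (by linarith [Real.pi_pos]) (by linarith [hv.1]) (by linarith [hv.2]))
      (fun v hv => abs_le.2 ⟨hv.1, by linarith [Real.pi_pos, hv.2]⟩))
  have hc : Continuous fun v : ℝ => F a (c + v * Complex.I) := by
    have := (F_diff a).continuous
    fun_prop
  have e1 := intervalIntegral.integral_add_adjacent_intervals
    (hc.intervalIntegrable (μ := volume) (-π) (-θ)) (hc.intervalIntegrable (-θ) θ)
  have e2 := intervalIntegral.integral_add_adjacent_intervals
    (hc.intervalIntegrable (μ := volume) (-π) θ) (hc.intervalIntegrable θ π)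
  unfold J
  linear_combination r1 + r2 + Complex.I * e1 + Complex.I * e2

/-- The Gamma integral in logarithmic coordinates. -/
lemma gamma_log (s : ℂ) (hs : 0 < s.re) :
    ∫ u : ℝ, Complex.exp (-Complex.exp u + s * u) = Complex.Gamma s := by
  rw [Complex.Gamma_eq_integral hs, Complex.GammaIntegral, ← Real.range_exp, ← image_univ,
    integral_image_eq_integral_abs_deriv_smul MeasurableSet.univ
      (fun x _ => (Real.hasDerivAt_exp x).hasDerivWithinAt) Real.exp_injective.injOn]
  rw [Measure.restrict_univ]
  refine integral_congr_ae (ae_of_all _ fun u => ?_)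
  have : ((rexp u : ℝ) : ℂ) ^ (s - 1) = Complex.exp (u * (s - 1)) := by
    rw [Complex.cpow_def_of_ne_zero (by exact_mod_cast (Real.exp_pos u).ne'),
      ← Complex.ofReal_log (Real.exp_pos u).le, Real.log_exp]
  simp only [abs_of_pos (Real.exp_pos u), this, Complex.real_smul]
  rw [Complex.ofReal_exp, Complex.ofReal_exp, ← Complex.exp_add, ← Complex.exp_add]
  congr 1
  push_cast
  ring

lemma F_pi (a : ℂ) (u : ℝ) : F a (u + (π : ℝ) * Complex.I) =
    Complex.exp ((1 - a) * (π * Complex.I)) * Complex.exp (-Complex.exp u + (1 - a) * u) := by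
  rw [F, Complex.exp_add u, Complex.exp_pi_mul_I, ← Complex.exp_add]
  ring_nf

lemma F_neg_pi (a : ℂ) (u : ℝ) : F a (u + ((-π : ℝ) : ℂ) * Complex.I) =
    Complex.exp (-((1 - a) * (π * Complex.I))) * Complex.exp (-Complex.exp u + (1 - a) * u) := by
  have : Complex.exp (((-π : ℝ) : ℂ) * Complex.I) = -1 := by
    rw [Complex.ofReal_neg, neg_mul, Complex.exp_neg, Complex.exp_pi_mul_I]; norm_num
  rw [F, Complex.exp_add u, this, ← Complex.exp_add]
  push_cast
  ring_nf

lemma J_lim (a : ℂ) (ha : a.re < 1) : Tendsto (fun c => J π c (F a)) atBot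
    (𝓝 ((∫ u : ℝ, F a (u + (π : ℝ) * Complex.I)) - ∫ u : ℝ, F a (u + ((-π : ℝ) : ℂ) * Complex.I))) := by
  have l1 := (aecover_Ioi (μ := volume) (tendsto_id (α := ℝ) (x := atBot))).integral_tendsto_of_countably_generated
    (F_int_all a ha π (by simp))
  have l2 := (aecover_Ioi (μ := volume) (tendsto_id (α := ℝ) (x := atBot))).integral_tendsto_of_countably_generated
    (F_int_all a ha (-π) (by simp))
  have l3 : Tendsto (fun c : ℝ => ∫ v in (-π)..π, F a (c + v * Complex.I)) atBot (𝓝 0) := by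
    have h0 : Tendsto (fun c : ℝ => rexp (rexp c + (1 - a.re) * c)) atBot (𝓝 0) := by
      apply Real.tendsto_exp_atBot.comp
      apply Real.tendsto_exp_atBot.add_atBot
      exact tendsto_id.const_mul_atBot (by linarith)
    have h := (h0.mul_const (rexp (|a.im| * π))).mul_const |π - -π|
    rw [zero_mul, zero_mul] at h
    refine squeeze_zero_norm (fun R => ?_) h
    refine intervalIntegral.norm_integral_le_of_norm_le_const fun v hv' => ?_
    rw [uIoc_of_le (by linarith [Real.pi_pos])] at hv'
    rw [F_norm]
    refine mul_le_mul (Real.exp_le_exp.2 ?_)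
      (Real.exp_le_exp.2 (imb _ _ (abs_le.2 ⟨hv'.1.le, hv'.2⟩)))
      (Real.exp_pos _).le (Real.exp_pos _).le
    nlinarith [Real.cos_le_one v, Real.exp_pos R]
  have := (l1.sub l2).add (l3.const_mul Complex.I)
  simpa [J] using this

lemma J_indep (a : ℂ) (c c' : ℝ) : J π c (F a) = J π c' (F a) := by
  have : ∀ c c' : ℝ, c ≤ c' → J π c (F a) = J π c' (F a) := fun c c' h =>
    J_shift π c c' Real.pi_pos.le h _ (fun w _ => F_diff a w) (F_int a π c (by simp))
      (F_int a (-π) c (by simp))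
  rcases le_total c c' with h | h
  · exact this _ _ h
  · exact (this _ _ h).symm

lemma hankel_strip (a : ℂ) (h0 : 0 < a.re) (h1 : a.re < 1) (c : ℝ) :
    J π c (F a) = 2 * π * Complex.I * (Complex.Gamma a)⁻¹ := by
  have l := tendsto_nhds_unique (J_lim a h1) (tendsto_const_nhds.congr (fun c' => J_indep a c c'))
  rw [← l]
  simp only [F_pi, F_neg_pi, integral_const_mul]
  rw [gamma_log (1 - a) (by simpa using h1)]
  have hg := Complex.Gamma_mul_Gamma_one_sub a
  have g0 : Complex.Gamma a ≠ 0 := Complex.Gamma_ne_zero_of_re_pos h0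
  have g1 : Complex.Gamma (1 - a) ≠ 0 := Complex.Gamma_ne_zero_of_re_pos (by simpa using h1)
  have hs : Complex.sin (π * a) ≠ 0 := by
    intro h
    rw [h, div_zero] at hg
    exact mul_ne_zero g0 g1 hg
  have hsin : Complex.exp ((1 - a) * (π * Complex.I)) - Complex.exp (-((1 - a) * (π * Complex.I))) =
      2 * Complex.I * Complex.sin (π * a) := by
    have : Complex.sin (π * a) = Complex.sin ((1 - a) * π) := by
      rw [← Complex.sin_pi_sub]; ring_nf
    rw [this, Complex.sin]
    have hI := Complex.I_mul_I
    ring_nf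
    simp only [Complex.I_sq]
    ring
  have hπ : (π : ℂ) ≠ 0 := by exact_mod_cast Real.pi_ne_zero
  rw [← sub_mul, hsin]
  rw [eq_div_iff hs] at hg
  field_simp
  linear_combination hg

lemma K_diff : Differentiable ℂ
    (fun a : ℂ => ∫ u : ℝ in Ioi 0, Complex.exp (-Complex.exp u + (1 - a) * u)) := by
  intro a₀
  have hn : ∀ (a : ℂ) (u : ℝ), ‖Complex.exp (-Complex.exp u + (1 - a) * u)‖ =
      rexp (-1 * rexp u + (1 - a.re) * u) := by
    intro a u
    rw [Complex.norm_exp]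
    simp [Complex.exp_re]
  refine (hasDerivAt_integral_of_dominated_loc_of_deriv_le
    (F' := fun a u => Complex.exp (-Complex.exp u + (1 - a) * u) * (-u))
    (bound := fun u => rexp (-1 * rexp u + (1 - a₀.re + 2) * u))
    (Metric.ball_mem_nhds a₀ one_pos) (Eventually.of_forall fun a => by fun_prop) ?_ (by fun_prop) ?_
    (int_Ioi _ (by norm_num) _ _) ?_).2.differentiableAt
  · exact (int_Ioi _ (by norm_num) (1 - a₀.re) 0).mono' (by fun_prop) (ae_of_all _ fun u => (hn _ u).le)
  · filter_upwards [ae_restrict_mem measurableSet_Ioi] with u hu a ha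
    have hu : 0 < u := hu
    have hre : |(a - a₀).re| ≤ 1 := (Complex.abs_re_le_norm _).trans (by
      rw [Metric.mem_ball, dist_eq_norm] at ha; exact ha.le)
    rw [Complex.sub_re] at hre
    have h1 : u ≤ rexp u := by linarith [Real.add_one_le_exp u]
    rw [norm_mul, hn, norm_neg, Complex.norm_real, Real.norm_of_nonneg hu.le]
    calc _ ≤ rexp (-1 * rexp u + (1 - a.re) * u) * rexp u := by gcongr
      _ = rexp (-1 * rexp u + (1 - a.re) * u + u) := by rw [Real.exp_add _ u]
      _ ≤ _ := by
        apply Real.exp_le_exp.2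
        nlinarith [(abs_le.1 hre).1]
  · refine ae_of_all _ fun u a _ => ?_
    have : HasDerivAt (fun a : ℂ => -Complex.exp u + (1 - a) * u) (-u) a := by
      simpa using ((((hasDerivAt_id a).const_sub 1).mul_const (u : ℂ)).const_add (-Complex.exp u))
    exact this.cexp

lemma V_diff : Differentiable ℂ (fun a : ℂ => ∫ v in (-π)..π, F a ((0 : ℝ) + v * Complex.I)) := by
  intro a₀
  have hFc : ∀ a, Continuous fun v : ℝ => F a ((0 : ℝ) + v * Complex.I) := fun a => by
    have := (F_diff a).continuous
    fun_prop
  refine (intervalIntegral.hasDerivAt_integral_of_dominated_loc_of_deriv_le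
    (F' := fun a v => F a ((0 : ℝ) + v * Complex.I) * (-((0 : ℝ) + v * Complex.I)))
    (bound := fun v => rexp 1 * rexp ((|a₀.im| + 1) * π) * π)
    (Metric.ball_mem_nhds a₀ one_pos) (Eventually.of_forall fun a => (hFc a).aestronglyMeasurable)
    ((hFc a₀).intervalIntegrable _ _) ?_ ?_ (by simp) ?_).2.differentiableAt
  · refine Continuous.aestronglyMeasurable ?_
    have := hFc a₀
    fun_prop
  · refine ae_of_all _ fun v hv a ha => ?_
    rw [uIoc_of_le (by linarith [Real.pi_pos])] at hv
    have hv' : |v| ≤ π := abs_le.2 ⟨hv.1.le, hv.2⟩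
    have him : |(a - a₀).im| ≤ 1 := (Complex.abs_im_le_norm _).trans (by
      rw [Metric.mem_ball, dist_eq_norm] at ha; exact ha.le)
    rw [Complex.sub_im] at him
    have him2 : |a.im| ≤ |a₀.im| + 1 := by
      have := abs_sub_abs_le_abs_sub a.im a₀.im
      linarith
    rw [norm_mul, F_norm]
    have e : ‖-(((0 : ℝ) : ℂ) + v * Complex.I)‖ = |v| := by simp
    rw [e]
    refine mul_le_mul (mul_le_mul (Real.exp_le_exp.2 ?_) (Real.exp_le_exp.2 ?_)
      (Real.exp_pos _).le (Real.exp_pos _).le) hv' (abs_nonneg _) (by positivity)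
    · simpa using Real.cos_le_one v
    · exact (imb _ _ hv').trans (by gcongr)
  · refine ae_of_all _ fun v _ a _ => ?_
    have : HasDerivAt (fun a : ℂ => Complex.exp (((0 : ℝ) : ℂ) + v * Complex.I)
        + (1 - a) * (((0 : ℝ) : ℂ) + v * Complex.I)) (-(((0 : ℝ) : ℂ) + v * Complex.I)) a := by
      simpa using ((((hasDerivAt_id a).const_sub 1).mul_const (((0 : ℝ) : ℂ) + v * Complex.I)).const_add
        (Complex.exp (((0 : ℝ) : ℂ) + v * Complex.I)))
    exact this.cexp

lemma J_diff : Differentiable ℂ (fun a : ℂ => J π 0 (F a)) := by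
  have e : (fun a : ℂ => J π 0 (F a)) = fun a =>
      Complex.exp ((1 - a) * (π * Complex.I)) *
        (∫ u : ℝ in Ioi 0, Complex.exp (-Complex.exp u + (1 - a) * u)) -
      Complex.exp (-((1 - a) * (π * Complex.I))) *
        (∫ u : ℝ in Ioi 0, Complex.exp (-Complex.exp u + (1 - a) * u)) +
      Complex.I * ∫ v in (-π)..π, F a ((0 : ℝ) + v * Complex.I) := by
    funext a
    unfold J
    simp only [F_pi, F_neg_pi, integral_const_mul]
  rw [e]
  have h1 := K_diff
  have h2 := V_diff
  fun_prop

/-- Hankel's formula for the reciprocal Gamma function. -/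
lemma hankel (a : ℂ) (θ c : ℝ) (h1 : π / 2 < θ) (h2 : θ ≤ π) :
    J θ c (F a) = 2 * π * Complex.I * (Complex.Gamma a)⁻¹ := by
  rw [J_rot a θ c h1 h2, J_indep a c 0]
  have hA := Complex.analyticOnNhd_univ_iff_differentiable.mpr J_diff
  have hB := Complex.analyticOnNhd_univ_iff_differentiable.mpr
    (Complex.differentiable_one_div_Gamma.const_mul (2 * π * Complex.I))
  refine congrFun (hA.eq_of_eventuallyEq hB (z₀ := (1 / 2 : ℂ)) ?_) a
  have o1 : IsOpen {a : ℂ | 0 < a.re ∧ a.re < 1} :=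
    (isOpen_lt continuous_const Complex.continuous_re).inter
      (isOpen_lt Complex.continuous_re continuous_const)
  filter_upwards [o1.mem_nhds (by norm_num : (1 / 2 : ℂ) ∈ {a : ℂ | 0 < a.re ∧ a.re < 1})] with z hz
  exact hankel_strip z hz.1 hz.2 0

/-- The summed integrand. -/
noncomputable def H (q : ℝ) (z w : ℂ) : ℂ := F 0 w * (1 - z * Complex.exp (-(q * w)))⁻¹

lemma term_eq (q : ℝ) (z w : ℂ) (j : ℕ) :
    z ^ j * F ((q * j : ℝ) : ℂ) w = F 0 w * (z * Complex.exp (-(q * w))) ^ j := by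
  rw [mul_pow, ← Complex.exp_nat_mul, mul_left_comm, F, F, ← Complex.exp_add]
  congr 2
  push_cast
  ring

lemma ratio_le (q : ℝ) (hq : 0 < q) (z w : ℂ) (c : ℝ) (hc : ‖z‖ * rexp (-(q * c)) ≤ 1 / 2)
    (hw : c ≤ w.re) : ‖z * Complex.exp (-(q * w))‖ ≤ 1 / 2 := by
  refine le_trans ?_ hc
  rw [norm_mul, Complex.norm_exp]
  gcongr
  simp only [Complex.neg_re, Complex.re_ofReal_mul]
  nlinarith

lemma term_sum (q : ℝ) (hq : 0 < q) (z w : ℂ) (c : ℝ) (hc : ‖z‖ * rexp (-(q * c)) ≤ 1 / 2)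
    (hw : c ≤ w.re) : HasSum (fun j : ℕ => z ^ j * F ((q * j : ℝ) : ℂ) w) (H q z w) := by
  simp only [term_eq]
  exact (hasSum_geometric_of_norm_lt_one
    ((ratio_le q hq z w c hc hw).trans_lt (by norm_num))).mul_left _

lemma term_norm (q : ℝ) (hq : 0 < q) (z w : ℂ) (c : ℝ) (hc : ‖z‖ * rexp (-(q * c)) ≤ 1 / 2)
    (hw : c ≤ w.re) (j : ℕ) : ‖z ^ j * F ((q * j : ℝ) : ℂ) w‖ ≤ ‖F 0 w‖ * (1 / 2) ^ j := by
  rw [term_eq, norm_mul, norm_pow]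
  gcongr
  exact ratio_le q hq z w c hc hw

lemma J_sum (q : ℝ) (hq : 0 < q) (z : ℂ) (θ c : ℝ) (hθ : Real.cos θ < 0)
    (hc : ‖z‖ * rexp (-(q * c)) ≤ 1 / 2) :
    HasSum (fun j : ℕ => z ^ j * J θ c (F ((q * j : ℝ) : ℂ))) (J θ c (H q z)) := by
  have hs : ∀ x : ℝ, Summable fun j : ℕ => x * (1 / 2 : ℝ) ^ j := fun x =>
    (summable_geometric_of_lt_one (by norm_num) (by norm_num)).mul_left x
  have hcont : ∀ j : ℕ, Continuous (F ((q * j : ℝ) : ℂ)) := fun j => (F_diff _).continuous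
  have hcont0 : Continuous (F 0) := (F_diff _).continuous
  have hh : ∀ v : ℝ, Real.cos v < 0 → HasSum
      (fun j : ℕ => ∫ u : ℝ in Ioi c, z ^ j * F ((q * j : ℝ) : ℂ) (u + (v : ℝ) * Complex.I))
      (∫ u : ℝ in Ioi c, H q z (u + (v : ℝ) * Complex.I)) := by
    intro v hv
    refine hasSum_integral_of_dominated_convergence
      (fun j u => ‖F 0 (u + (v : ℝ) * Complex.I)‖ * (1 / 2) ^ j) (fun j => ?_) (fun j => ?_)
      (ae_of_all _ fun u => hs _) ?_ ?_
    · have := hcont j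
      fun_prop
    · filter_upwards [ae_restrict_mem measurableSet_Ioi] with u hu
      exact term_norm q hq z _ c hc (by simpa using (le_of_lt hu)) j
    · simp only [tsum_mul_left]
      exact (F_int 0 v c hv).norm.mul_const _
    · filter_upwards [ae_restrict_mem measurableSet_Ioi] with u hu
      exact term_sum q hq z _ c hc (by simpa using (le_of_lt hu))
  have h3 : HasSum (fun j : ℕ => ∫ v in (-θ)..θ, z ^ j * F ((q * j : ℝ) : ℂ) (c + v * Complex.I))
      (∫ v in (-θ)..θ, H q z (c + v * Complex.I)) := by
    refine intervalIntegral.hasSum_integral_of_dominated_convergence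
      (fun j v => ‖F 0 (c + (v : ℝ) * Complex.I)‖ * (1 / 2) ^ j) (fun j => ?_) (fun j => ?_)
      (ae_of_all _ fun u _ => hs _) ?_ ?_
    · have := hcont j
      fun_prop
    · exact ae_of_all _ fun v _ => term_norm q hq z _ c hc (by simp) j
    · simp only [tsum_mul_left]
      exact Continuous.intervalIntegrable (by fun_prop) _ _
    · exact ae_of_all _ fun v _ => term_sum q hq z _ c hc (by simp)
  have h := ((hh θ hθ).sub (hh (-θ) (by simpa))).add (h3.mul_left Complex.I)
  refine h.congr_fun fun j => ?_
  simp only [integral_const_mul, intervalIntegral.integral_const_mul]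
  unfold J
  ring

lemma exists_c (q : ℝ) (hq : 0 < q) (z : ℂ) : ∃ c : ℝ, 0 ≤ c ∧ ‖z‖ * rexp (-(q * c)) ≤ 1 / 2 := by
  have h : Tendsto (fun c : ℝ => ‖z‖ * rexp (-(q * c))) atTop (𝓝 (‖z‖ * 0)) :=
    ((Real.tendsto_exp_neg_atTop_nhds_zero.comp (tendsto_id.const_mul_atTop hq))).const_mul _
  rw [mul_zero] at h
  have h2 := h.eventually (ge_mem_nhds (by norm_num : (0 : ℝ) < 1 / 2))
  obtain ⟨c, hc, hc0⟩ := (h2.and (eventually_ge_atTop 0)).exists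
  exact ⟨c, hc0, hc⟩

lemma ml_sum (q : ℝ) (hq : 0 < q) (z : ℂ) (θ c : ℝ) (h1 : π / 2 < θ) (h2 : θ ≤ π)
    (hc : ‖z‖ * rexp (-(q * c)) ≤ 1 / 2) :
    HasSum (fun i : ℕ => 2 * π * Complex.I * (z * (z ^ i / (Real.Gamma (q * i + q) : ℂ))))
      (J θ c (H q z)) := by
  have hk : Real.cos θ < 0 := Real.cos_neg_of_pi_div_two_lt_of_lt h1 (by linarith [Real.pi_pos])
  have h := J_sum q hq z θ c hk hc
  simp only [hankel _ θ c h1 h2] at h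
  rw [← hasSum_nat_add_iff' 1] at h
  simp only [Finset.range_one, Finset.sum_singleton, Nat.cast_zero, mul_zero, Complex.ofReal_zero,
    Complex.Gamma_zero, inv_zero, sub_zero] at h
  refine h.congr_fun fun i => ?_
  rw [← Complex.Gamma_ofReal, div_eq_mul_inv, pow_succ]
  have : (q * ((i + 1 : ℕ) : ℝ)) = q * i + q := by push_cast; ring
  rw [this]
  ring

lemma ml_summable (q : ℝ) (hq : 0 < q) (z : ℂ) :
    Summable (fun i : ℕ => z ^ i / (Real.Gamma (q * i + q) : ℂ)) := by
  by_cases hz : z = 0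
  · subst hz
    refine summable_of_ne_finset_zero (s := {0}) fun i hi => ?_
    rw [zero_pow (by simpa using hi), zero_div]
  obtain ⟨c, -, hc⟩ := exists_c q hq z
  have h := (ml_sum q hq z π c (by linarith [Real.pi_pos]) le_rfl hc).summable
  have hπ : (π : ℂ) ≠ 0 := by exact_mod_cast Real.pi_ne_zero
  rw [summable_mul_left_iff (by simp [hπ]), summable_mul_left_iff hz] at h
  exact h

lemma ml_continuous (q : ℝ) (hq : 0 < q) : Continuous (mittagLeffler q q) := by
  rw [continuous_iff_continuousAt]
  intro z₀
  have hs := (ml_summable q hq ((‖z₀‖ + 1 : ℝ) : ℂ)).norm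
  have : ContinuousOn (mittagLeffler q q) (Metric.ball z₀ 1) := by
    unfold mittagLeffler
    refine continuousOn_tsum (fun i => by fun_prop) hs fun i z hz => ?_
    rw [norm_div, norm_div, norm_pow, norm_pow, Complex.norm_real (‖z₀‖ + 1),
      Real.norm_of_nonneg (by positivity)]
    gcongr
    rw [Metric.mem_ball, dist_eq_norm] at hz
    have := norm_le_norm_add_norm_sub z₀ z
    rw [norm_sub_rev] at hz
    linarith
  exact this.continuousAt (Metric.ball_mem_nhds z₀ one_pos)

lemma H_norm (q : ℝ) (z : ℂ) (δ : ℝ) (hδ : 0 < δ) (hz : z ≠ 0) (u v : ℝ)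
    (hw : δ * ‖z‖ ≤ ‖Complex.exp (q * (u + v * Complex.I)) - z‖) :
    ‖H q z (u + v * Complex.I)‖ ≤ rexp (Real.cos v * rexp u + (1 + q) * u) * (δ * ‖z‖)⁻¹ := by
  have hz' : 0 < ‖z‖ := norm_pos_iff.2 hz
  have e : 1 - z * Complex.exp (-(q * (u + v * Complex.I))) =
      (Complex.exp (q * (u + v * Complex.I)) - z) * Complex.exp (-(q * (u + v * Complex.I))) := by
    rw [sub_mul, ← Complex.exp_add, add_neg_cancel, Complex.exp_zero]
  have e2 : ‖Complex.exp (-(q * (u + v * Complex.I)))‖ = rexp (-(q * u)) := by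
    rw [Complex.norm_exp]; simp
  rw [H, e, mul_inv, norm_mul, norm_mul, norm_inv, norm_inv, e2, F_norm, ← Real.exp_neg]
  have : rexp (Real.cos v * rexp u + (1 + q) * u) =
    rexp (Real.cos v * rexp u + (1 - (0 : ℂ).re) * u) * rexp ((0 : ℂ).im * v) * rexp (- -(q * u)) := by
    rw [← Real.exp_add, ← Real.exp_add]; simp; ring
  rw [this, mul_comm _ (rexp (- -(q * u))), ← mul_assoc]
  gcongr

lemma ml_bound (q : ℝ) (hq : 0 < q) (θ δ : ℝ) (h1 : π / 2 < θ) (h2 : θ ≤ π) (hδ : 0 < δ) :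
    ∃ C : ℝ, 0 ≤ C ∧ ∀ z : ℂ, z ≠ 0 → (∀ w : ℂ, |w.im| ≤ θ → δ * ‖z‖ ≤ ‖Complex.exp (q * w) - z‖) →
      ‖mittagLeffler q q z‖ ≤ C / ‖z‖ ^ 2 := by
  have hk : Real.cos θ < 0 := Real.cos_neg_of_pi_div_two_lt_of_lt h1 (by linarith [Real.pi_pos])
  have hθ : 0 ≤ θ := by linarith [Real.pi_pos]
  set A := ∫ u : ℝ in Ioi 0, rexp (Real.cos θ * rexp u + (1 + q) * u) with hA
  have hA0 : 0 ≤ A := integral_nonneg fun u => (Real.exp_pos _).le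
  refine ⟨(A + A + rexp 1 * |θ - -θ|) / (2 * π * δ), by positivity, fun z hz hw => ?_⟩
  have hz' : 0 < ‖z‖ := norm_pos_iff.2 hz
  have hdiff : ∀ w : ℂ, |w.im| ≤ θ → DifferentiableAt ℂ (H q z) w := by
    intro w hwθ
    have hne : 1 - z * Complex.exp (-(q * w)) ≠ 0 := by
      intro h0
      have h3 := hw w hwθ
      have h4 : Complex.exp (q * w) - z = 0 := by
        have : Complex.exp (q * w) - z =
            Complex.exp (q * w) * (1 - z * Complex.exp (-(q * w))) := by
          rw [mul_sub, mul_left_comm, ← Complex.exp_add, add_neg_cancel, Complex.exp_zero]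
          ring
        rw [this, h0, mul_zero]
      rw [h4, norm_zero] at h3
      exact absurd h3 (not_le.2 (by positivity))
    have := F_diff 0 w
    unfold H
    fun_prop (disch := exact hne)
  have hb : ∀ u v : ℝ, |v| ≤ θ →
      ‖H q z (u + v * Complex.I)‖ ≤ rexp (Real.cos v * rexp u + (1 + q) * u) * (δ * ‖z‖)⁻¹ :=
    fun u v hv => H_norm q z δ hδ hz u v (hw _ (by simpa using hv))
  have hcont : ∀ v : ℝ, |v| ≤ θ → Continuous fun u : ℝ => H q z (u + v * Complex.I) := by
    intro v hv
    rw [continuous_iff_continuousAt]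
    intro u
    have h5 : ContinuousAt (H q z) (u + v * Complex.I) :=
      (hdiff _ (by simpa using hv)).continuousAt
    exact ContinuousAt.comp (f := fun u : ℝ => (u : ℂ) + v * Complex.I) h5 (by fun_prop)
  have hint : ∀ v : ℝ, |v| = θ →
      IntegrableOn (fun u : ℝ => H q z (u + v * Complex.I)) (Ioi 0) ∧
      ‖∫ u : ℝ in Ioi 0, H q z (u + v * Complex.I)‖ ≤ A * (δ * ‖z‖)⁻¹ := by
    intro v hv
    have hcos : Real.cos v = Real.cos θ := by rw [← hv, Real.cos_abs]
    have hb' := fun u => hb u v hv.le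
    rw [hcos] at hb'
    have hi := (int_Ioi _ hk (1 + q) 0).mul_const (δ * ‖z‖)⁻¹
    refine ⟨hi.mono' (hcont v hv.le).aestronglyMeasurable (ae_of_all _ hb'), ?_⟩
    rw [hA, ← integral_mul_const]
    exact norm_integral_le_of_norm_le hi (ae_of_all _ hb')
  have a1 := hint θ (abs_of_nonneg hθ)
  have a2 := hint (-θ) (by rw [abs_neg, abs_of_nonneg hθ])
  have a3 : ‖∫ v in (-θ)..θ, H q z ((0 : ℝ) + v * Complex.I)‖ ≤
      rexp 1 * (δ * ‖z‖)⁻¹ * |θ - -θ| := by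
    refine intervalIntegral.norm_integral_le_of_norm_le_const fun v hv => ?_
    rw [uIoc_of_le (by linarith)] at hv
    refine (hb 0 v (abs_le.2 ⟨hv.1.le, hv.2⟩)).trans ?_
    gcongr
    simpa using Real.cos_le_one v
  obtain ⟨c, hc0, hc⟩ := exists_c q hq z
  have hsum := (ml_sum q hq z θ c h1 h2 hc).tsum_eq
  rw [tsum_mul_left, tsum_mul_left, ← J_shift θ 0 c hθ hc0 _ hdiff a1.1 a2.1] at hsum
  have hJ : ‖J θ 0 (H q z)‖ ≤ (A + A + rexp 1 * |θ - -θ|) * (δ * ‖z‖)⁻¹ := by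
    unfold J
    refine (norm_add_le _ _).trans ?_
    refine (add_le_add (norm_sub_le _ _) (norm_mul_le _ _)).trans ?_
    rw [Complex.norm_I, one_mul]
    refine (add_le_add (add_le_add a1.2 a2.2) a3).trans (le_of_eq ?_)
    ring
  rw [← hsum] at hJ
  change ‖2 * π * Complex.I * (z * mittagLeffler q q z)‖ ≤ _ at hJ
  simp only [norm_mul, Complex.norm_I, Complex.norm_real, Real.norm_of_nonneg Real.pi_pos.le,
    Complex.norm_ofNat, mul_one] at hJ
  rw [div_div, le_div_iff₀ (by positivity)]
  rw [← div_eq_mul_inv, le_div_iff₀ (by positivity)] at hJ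
  refine le_trans (le_of_eq ?_) hJ
  ring

lemma sector (q θ : ℝ) (hq : 0 < q) (lam : ℂ) (hψ : q * θ + |Complex.arg lam| < π) (hθ : 0 ≤ θ) :
    ∃ δ : ℝ, 0 < δ ∧ ∀ (t : ℝ), 0 < t → ∀ w : ℂ, |w.im| ≤ θ →
      δ * ‖-(lam * t)‖ ≤ ‖Complex.exp (q * w) - -(lam * t)‖ := by
  set k := Real.cos (q * θ + |Complex.arg lam|) with hk
  have hψ0 : 0 ≤ q * θ + |Complex.arg lam| := by positivity
  have hk1 : -1 < k := by
    rw [hk, ← Real.cos_pi]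
    exact Real.cos_lt_cos_of_nonneg_of_le_pi hψ0 le_rfl hψ
  refine ⟨√((1 + k) / 2), Real.sqrt_pos.2 (by linarith), fun t ht w hw => ?_⟩
  set m := ‖lam‖ * t with hm
  set ρ := rexp (q * w.re) with hρ
  set β := q * w.im - Complex.arg lam with hβ
  have hm0 : 0 ≤ m := by positivity
  have hρ0 : 0 < ρ := Real.exp_pos _
  have e : Complex.exp (q * w) - -(lam * t) =
      Complex.exp (Complex.arg lam * Complex.I) * (ρ * Complex.exp (β * Complex.I) + m) := by
    rw [mul_add, mul_left_comm, ← Complex.exp_add, hρ, Complex.ofReal_exp, ← Complex.exp_add, hm,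
      sub_neg_eq_add]
    congr 1
    · congr 1
      conv_lhs => rw [← Complex.re_add_im w]
      rw [hβ]; push_cast; ring
    · conv_lhs => rw [← Complex.norm_mul_exp_arg_mul_I lam]
      push_cast; ring
  have hcos : k ≤ Real.cos β := by
    rw [hk, ← Real.cos_abs β]
    refine Real.cos_le_cos_of_nonneg_of_le_pi (abs_nonneg _) hψ.le ?_
    rw [hβ]
    refine (abs_sub _ _).trans ?_
    rw [abs_mul, abs_of_pos hq]
    gcongr
  have hsq : ‖(ρ * Complex.exp (β * Complex.I) + m : ℂ)‖ ^ 2 = ρ ^ 2 + 2 * ρ * m * Real.cos β + m ^ 2 := by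
    rw [← Complex.normSq_eq_norm_sq, Complex.normSq_apply]
    simp [Complex.exp_re, Complex.exp_im]
    nlinarith [Real.sin_sq_add_cos_sq β]
  rw [e, norm_mul, Complex.norm_exp_ofReal_mul_I, one_mul, norm_neg, norm_mul, Complex.norm_real,
    Real.norm_of_nonneg ht.le]
  refine (sq_le_sq₀ (by positivity) (norm_nonneg _)).1 ?_
  rw [hsq, mul_pow, Real.sq_sqrt (by linarith)]
  have h1 : ρ * m * k ≤ ρ * m * Real.cos β := by gcongr
  have hk2 : k ≤ 1 := Real.cos_le_one _
  change (1 + k) / 2 * m ^ 2 ≤ _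
  nlinarith [mul_nonneg (by linarith : 0 ≤ 1 - k) (sq_nonneg (ρ - m)),
    mul_nonneg (by linarith : 0 ≤ 1 + k) (by positivity : 0 ≤ ρ ^ 2 + 2 * (ρ * m))]

end FM

/-- BIBO stability of the fractional transfer function `1/(s^q + λ)`:
if `0 < q < 2` and the pole `λ ≠ 0` satisfies `|arg λ| < π (1 - q/2)`, then
the impulse response `t ↦ t^{q-1} E_{q,q}(-λ t^q)` is integrable on `(0, ∞)`. -/
theorem fractional_mode_bibo (q : ℝ) (hq0 : 0 < q) (hq2 : q < 2)
    (lambda : ℂ) (hl : lambda ≠ 0)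
    (harg : |Complex.arg lambda| < π * (1 - q / 2)) :
    IntegrableOn (fun t : ℝ => ((t ^ (q - 1) : ℝ) : ℂ) *
        mittagLeffler q q (-(lambda * (t ^ q : ℝ)))) (Ioi 0) := by
  obtain ⟨θ, hθ1, hθ2⟩ : ∃ θ, π / 2 < θ ∧ θ < min π ((π - |Complex.arg lambda|) / q) := by
    refine exists_between (lt_min (by linarith [Real.pi_pos]) ?_)
    rw [lt_div_iff₀ hq0]
    linarith
  have hθπ : θ ≤ π := (hθ2.trans_le (min_le_left _ _)).le
  have hθq := hθ2.trans_le (min_le_right _ _)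
  rw [lt_div_iff₀ hq0] at hθq
  have hθ0 : 0 ≤ θ := by linarith [Real.pi_pos]
  obtain ⟨δ, hδ, hsec⟩ := FM.sector q θ hq0 lambda (by linarith) hθ0
  obtain ⟨C, hC, hbd⟩ := FM.ml_bound q hq0 θ δ hθ1 hθπ hδ
  have hmlc := FM.ml_continuous q hq0
  have hrp : Continuous fun t : ℝ => t ^ q := Real.continuous_rpow_const hq0.le
  have hg : Continuous fun t : ℝ => mittagLeffler q q (-(lambda * (t ^ q : ℝ))) := by
    fun_prop
  have hcont : ContinuousOn (fun t : ℝ => ((t ^ (q - 1) : ℝ) : ℂ) *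
      mittagLeffler q q (-(lambda * (t ^ q : ℝ)))) (Ioi 0) := by
    refine ContinuousOn.mul ?_ hg.continuousOn
    refine Complex.continuous_ofReal.comp_continuousOn ?_
    exact fun t ht => (Real.continuousAt_rpow_const t _ (Or.inl (ne_of_gt ht))).continuousWithinAt
  have hmeas := hcont.aestronglyMeasurable (μ := volume) measurableSet_Ioi
  rw [← Ioc_union_Ioi_eq_Ioi (zero_le_one' ℝ)]
  refine IntegrableOn.union ?_ ?_
  · obtain ⟨M, hM⟩ := isCompact_Icc.exists_bound_of_continuousOn (s := Icc (0:ℝ) 1) hg.continuousOn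
    have hi : IntegrableOn (fun t : ℝ => t ^ (q - 1)) (Ioc 0 1) := by
      have := intervalIntegral.intervalIntegrable_rpow' (a := 0) (b := 1) (by linarith : -1 < q - 1)
      rwa [intervalIntegrable_iff_integrableOn_Ioc_of_le zero_le_one] at this
    refine (hi.mul_const M).mono' (hmeas.mono_set Ioc_subset_Ioi_self) ?_
    filter_upwards [ae_restrict_mem measurableSet_Ioc] with t ht
    have : 0 ≤ t ^ (q - 1) := Real.rpow_nonneg ht.1.le _
    rw [norm_mul, Complex.norm_real, Real.norm_of_nonneg this]
    gcongr
    exact hM t (Ioc_subset_Icc_self ht)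
  · have hi := (integrableOn_Ioi_rpow_of_lt (by linarith : -q - 1 < -1) one_pos).mul_const
      (C / ‖lambda‖ ^ 2)
    refine hi.mono' (hmeas.mono_set (Ioi_subset_Ioi zero_le_one)) ?_
    filter_upwards [ae_restrict_mem measurableSet_Ioi] with t ht
    have ht0 : 0 < t := lt_trans one_pos ht
    have hl' : 0 < ‖lambda‖ := norm_pos_iff.2 hl
    have htq : 0 < t ^ q := Real.rpow_pos_of_pos ht0 _
    have hne : -(lambda * ((t ^ q : ℝ) : ℂ)) ≠ 0 :=
      neg_ne_zero.2 (mul_ne_zero hl (by exact_mod_cast htq.ne'))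
    have h := hbd _ hne (hsec (t ^ q) htq)
    have h0 : 0 ≤ t ^ (q - 1) := Real.rpow_nonneg ht0.le _
    rw [norm_mul, Complex.norm_real, Real.norm_of_nonneg h0]
    refine (mul_le_mul_of_nonneg_left h h0).trans (le_of_eq ?_)
    rw [norm_neg, norm_mul, Complex.norm_real, Real.norm_of_nonneg htq.le]
    have e : t ^ (-q - 1) = t ^ (q - 1) / (t ^ q) ^ 2 := by
      rw [← Real.rpow_natCast, ← Real.rpow_mul ht0.le, ← Real.rpow_sub ht0]
      congr 1
      push_cast
      ring
    rw [e]
    field_simp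
end

section
/- Let A be an n × n complex matrix and let δ be a real number with 0 ≤ δ < π/2. Form the 2n × 2n block matrix A₁ = [[A·cos δ, −A·sin δ], [A·sin δ, A·cos δ]] (equivalently, the Kronecker product of A with the 2 × 2 rotation matrix of angle δ). Then every root of the characteristic polynomial of A₁ has negative real part if and only if every eigenvalue λ of A is nonzero and satisfies |arg λ| > π/2 + δ. -/
open Real Matrix

lemma bmss_det (n : ℕ) (P Q : Matrix (Fin n) (Fin n) ℂ) :
    (Matrix.fromBlocks P Q (-Q) P).det =
      (P - Complex.I • Q).det * (P + Complex.I • Q).det := by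
  have h : Matrix.fromBlocks 1 (Complex.I • (1 : Matrix (Fin n) (Fin n) ℂ)) 0 1 *
      Matrix.fromBlocks P Q (-Q) P *
      Matrix.fromBlocks 1 (-(Complex.I • (1 : Matrix (Fin n) (Fin n) ℂ))) 0 1 =
      Matrix.fromBlocks (P - Complex.I • Q) 0 (-Q) (P + Complex.I • Q) := by
    rw [Matrix.fromBlocks_multiply, Matrix.fromBlocks_multiply]
    congr 1
    · simp [sub_eq_add_neg]
    · simp [smul_smul]; abel
    · simp
    · simp [add_comm]
  have h2 := congrArg Matrix.det h
  rw [Matrix.det_mul, Matrix.det_mul, Matrix.det_fromBlocks_zero₂₁,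
    Matrix.det_fromBlocks_zero₂₁, Matrix.det_fromBlocks_zero₁₂] at h2
  simpa using h2

lemma bmss_scale (n : ℕ) (A : Matrix (Fin n) (Fin n) ℂ) (μ c d : ℂ) (hcd : c * d = 1) :
    (Matrix.scalar (Fin n) μ - c • A).det = c ^ n * A.charpoly.eval (d * μ) := by
  rw [Matrix.eval_charpoly]
  have : Matrix.scalar (Fin n) μ - c • A = c • (Matrix.scalar (Fin n) (d * μ) - A) := by
    rw [smul_sub]
    congr 1
    ext i j
    by_cases hij : i = j
    · subst hij; simp [← mul_assoc, hcd]
    · simp [hij]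
  rw [this, Matrix.det_smul, Fintype.card_fin]

lemma bmss_root (n : ℕ) (A : Matrix (Fin n) (Fin n) ℂ) (δ : ℝ) (μ : ℂ) :
    (Matrix.fromBlocks ((Real.cos δ : ℂ) • A) (-((Real.sin δ : ℂ) • A))
            ((Real.sin δ : ℂ) • A) ((Real.cos δ : ℂ) • A)).charpoly.IsRoot μ ↔
      A.charpoly.IsRoot (((Real.cos δ : ℂ) - Complex.I * Real.sin δ) * μ) ∨
      A.charpoly.IsRoot (((Real.cos δ : ℂ) + Complex.I * Real.sin δ) * μ) := by
  have hcs : (Real.cos δ : ℂ) ^ 2 + (Real.sin δ : ℂ) ^ 2 = 1 := by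
    exact_mod_cast Real.cos_sq_add_sin_sq δ
  generalize (Real.cos δ : ℂ) = c at *
  generalize (Real.sin δ : ℂ) = s at *
  have h1 : (c + Complex.I * s) * (c - Complex.I * s) = 1 := by
    linear_combination hcs - s ^ 2 * Complex.I_sq
  have h2 : (c - Complex.I * s) * (c + Complex.I * s) = 1 := by rw [mul_comm, h1]
  have e : Matrix.scalar (Fin n ⊕ Fin n) μ -
      Matrix.fromBlocks (c • A) (-(s • A)) (s • A) (c • A) =
      Matrix.fromBlocks (Matrix.scalar (Fin n) μ - c • A) (s • A) (-(s • A))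
        (Matrix.scalar (Fin n) μ - c • A) := by
    ext i j
    rcases i with i | i <;> rcases j with j | j <;> simp [Matrix.diagonal_apply]
  have e1 : Matrix.scalar (Fin n) μ - c • A - Complex.I • (s • A) =
      Matrix.scalar (Fin n) μ - (c + Complex.I * s) • A := by
    rw [add_smul, smul_smul]; abel
  have e2 : Matrix.scalar (Fin n) μ - c • A + Complex.I • (s • A) =
      Matrix.scalar (Fin n) μ - (c - Complex.I * s) • A := by
    rw [sub_smul, smul_smul]; abel
  rw [Polynomial.IsRoot, Matrix.eval_charpoly, e, bmss_det, e1, e2,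
    bmss_scale n A μ _ _ h1, bmss_scale n A μ _ _ h2]
  have n1 := left_ne_zero_of_mul_eq_one h1
  have n2 := left_ne_zero_of_mul_eq_one h2
  simp [n1, n2, Polynomial.IsRoot]

/-- The two rotations of `lam` by `±δ` lie in the open left half plane iff `lam` is in the sector. -/
lemma bmss_sector (δ : ℝ) (hδ0 : 0 ≤ δ) (hδ : δ < π / 2) (lam : ℂ) :
    ((((Real.cos δ : ℂ) + Complex.I * Real.sin δ) * lam).re < 0 ∧
      (((Real.cos δ : ℂ) - Complex.I * Real.sin δ) * lam).re < 0) ↔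
      (lam ≠ 0 ∧ |Complex.arg lam| > π / 2 + δ) := by
  by_cases h0 : lam = 0
  · simp [h0]
  have hr : 0 < ‖lam‖ := norm_pos_iff.mpr h0
  have hre := Complex.norm_mul_cos_arg lam
  have him := Complex.norm_mul_sin_arg lam
  have r1 : (((Real.cos δ : ℂ) + Complex.I * Real.sin δ) * lam).re =
      ‖lam‖ * Real.cos (Complex.arg lam + δ) := by
    rw [Real.cos_add]
    simp [-Complex.ofReal_cos, -Complex.ofReal_sin]
    linear_combination (-Real.cos δ) * hre + Real.sin δ * him
  have r2 : (((Real.cos δ : ℂ) - Complex.I * Real.sin δ) * lam).re =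
      ‖lam‖ * Real.cos (Complex.arg lam - δ) := by
    rw [Real.cos_sub]
    simp [-Complex.ofReal_cos, -Complex.ofReal_sin]
    linear_combination (-Real.cos δ) * hre - Real.sin δ * him
  have neg : ∀ x : ℝ, ‖lam‖ * x < 0 ↔ x < 0 := fun x => by
    constructor
    · intro h; by_contra hx; push Not at hx; nlinarith [mul_nonneg hr.le hx]
    · intro h; exact mul_neg_of_pos_of_neg hr h
  rw [r1, r2, neg, neg]
  have a1 := Complex.neg_pi_lt_arg lam
  have a2 := Complex.arg_le_pi lam
  generalize Complex.arg lam = t at *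
  simp only [ne_eq, h0, not_false_eq_true, true_and]
  constructor
  · rintro ⟨h1, h2⟩
    by_contra hc
    push Not at hc
    obtain ⟨b1, b2⟩ := abs_le.mp hc
    rcases le_total 0 t with ht | ht
    · have := Real.cos_nonneg_of_neg_pi_div_two_le_of_le (x := t - δ) (by linarith) (by linarith)
      linarith
    · have := Real.cos_nonneg_of_neg_pi_div_two_le_of_le (x := t + δ) (by linarith) (by linarith)
      linarith
  · intro h
    rcases lt_abs.mp h with h | h
    · exact ⟨Real.cos_neg_of_pi_div_two_lt_of_lt (by linarith) (by linarith),
        Real.cos_neg_of_pi_div_two_lt_of_lt (by linarith) (by linarith)⟩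
    · rw [← Real.cos_neg (t + δ), ← Real.cos_neg (t - δ)]
      exact ⟨Real.cos_neg_of_pi_div_two_lt_of_lt (by linarith) (by linarith),
        Real.cos_neg_of_pi_div_two_lt_of_lt (by linarith) (by linarith)⟩

/-- Matrix sector-stability test: for an `n × n` complex matrix `A` and
`0 ≤ δ < π/2`, all roots of the characteristic polynomial of the block matrix
`A₁ = [[A cos δ, -A sin δ], [A sin δ, A cos δ]]` have negative real part if and
only if every eigenvalue `λ` of `A` is nonzero and satisfies
`|arg λ| > π/2 + δ`. -/
theorem block_matrix_sector_stability (n : ℕ) (A : Matrix (Fin n) (Fin n) ℂ)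
    (δ : ℝ) (hδ0 : 0 ≤ δ) (hδ : δ < π / 2) :
    (∀ μ : ℂ,
        (Matrix.fromBlocks ((Real.cos δ : ℂ) • A) (-((Real.sin δ : ℂ) • A))
            ((Real.sin δ : ℂ) • A) ((Real.cos δ : ℂ) • A)).charpoly.IsRoot μ →
          μ.re < 0) ↔
      (∀ lam : ℂ, A.charpoly.IsRoot lam →
          lam ≠ 0 ∧ |Complex.arg lam| > π / 2 + δ) := by
  have hcs : (Real.cos δ : ℂ) ^ 2 + (Real.sin δ : ℂ) ^ 2 = 1 := by
    exact_mod_cast Real.cos_sq_add_sin_sq δ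
  have h1 : ((Real.cos δ : ℂ) + Complex.I * Real.sin δ) *
      ((Real.cos δ : ℂ) - Complex.I * Real.sin δ) = 1 := by
    linear_combination hcs - (Real.sin δ : ℂ) ^ 2 * Complex.I_sq
  have h2 := (mul_comm _ _).trans h1
  constructor
  · intro h lam hl
    rw [← bmss_sector δ hδ0 hδ lam]
    constructor
    · apply h
      rw [bmss_root]
      left
      rwa [← mul_assoc, h2, one_mul]
    · apply h
      rw [bmss_root]
      right
      rwa [← mul_assoc, h1, one_mul]
  · intro h μ hμ
    rw [bmss_root] at hμ
    rcases hμ with hμ | hμ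
    · have := ((bmss_sector δ hδ0 hδ _).mpr (h _ hμ)).1
      rwa [← mul_assoc, h1, one_mul] at this
    · have := ((bmss_sector δ hδ0 hδ _).mpr (h _ hμ)).2
      rwa [← mul_assoc, h2, one_mul] at this
end

section
/- Let α > 0 and β > 0 be real numbers, let f : ℝ → ℝ be continuous on [0, T] for some T > 0, and let t ∈ (0, T]. Then (1/Γ(α)) ∫_0^t (t − τ)^{α−1} [ (1/Γ(β)) ∫_0^τ (τ − u)^{β−1} f(u) du ] dτ = (1/Γ(α+β)) ∫_0^t (t − u)^{α+β−1} f(u) du. (Additive index law / semigroup property of the Riemann–Liouville fractional integral: I^α I^β f = I^{α+β} f.) -/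
open Real Set intervalIntegral

open MeasureTheory in
lemma rl_beta (α β a : ℝ) (hα : 0 < α) (hβ : 0 < β) (ha : 0 < a) :
    ∫ x in (0 : ℝ)..a, x ^ (β - 1) * (a - x) ^ (α - 1) =
      Gamma α * Gamma β / Gamma (α + β) * a ^ (α + β - 1) := by
  have h := Complex.betaIntegral_scaled (β : ℂ) (α : ℂ) ha
  rw [Complex.betaIntegral_eq_Gamma_mul_div _ _ (by simpa using hβ) (by simpa using hα)] at h
  rw [← Complex.ofReal_add, Complex.Gamma_ofReal, Complex.Gamma_ofReal, Complex.Gamma_ofReal] at h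
  have e : ∫ x in (0 : ℝ)..a, (x : ℂ) ^ ((β : ℂ) - 1) * ((a : ℂ) - x) ^ ((α : ℂ) - 1) =
      ((∫ x in (0 : ℝ)..a, x ^ (β - 1) * (a - x) ^ (α - 1) : ℝ) : ℂ) := by
    rw [← intervalIntegral.integral_ofReal]
    apply intervalIntegral.integral_congr
    intro x hx
    rw [uIcc_of_le ha.le] at hx
    simp only
    rw [Complex.ofReal_mul, Complex.ofReal_cpow hx.1, Complex.ofReal_cpow (sub_nonneg.2 hx.2)]
    push_cast
    rfl
  have e2 : (a : ℂ) ^ (((β + α : ℝ) : ℂ) - 1) = ((a ^ (β + α - 1) : ℝ) : ℂ) := by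
    rw [Complex.ofReal_cpow ha.le]; push_cast; rfl
  rw [e, e2] at h
  have h' : ∫ x in (0 : ℝ)..a, x ^ (β - 1) * (a - x) ^ (α - 1) =
      a ^ (β + α - 1) * (Gamma β * Gamma α / Gamma (β + α)) := by exact_mod_cast h
  rw [h', add_comm β α]; ring

/-- The one-sided power kernel. -/
noncomputable def rlK (a x : ℝ) : ℝ := (Ioi (0 : ℝ)).indicator (fun x => x ^ (a - 1)) x

lemma rlK_meas (a : ℝ) : Measurable (rlK a) := by
  unfold rlK
  exact Measurable.indicator (by fun_prop) measurableSet_Ioi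

lemma rlK_nonneg (a x : ℝ) : 0 ≤ rlK a x :=
  indicator_nonneg (fun _ hx => rpow_nonneg (le_of_lt hx) _) _

lemma rlK_pos (a : ℝ) {x : ℝ} (hx : 0 < x) : rlK a x = x ^ (a - 1) := by
  simp [rlK, hx]

lemma rlK_neg (a : ℝ) {x : ℝ} (hx : x ≤ 0) : rlK a x = 0 := by
  simp [rlK, hx]

open MeasureTheory in
lemma rlK_conv (α β t u : ℝ) (hα : 0 < α) (hβ : 0 < β) :
    ∫ τ, rlK α (t - τ) * rlK β (τ - u) =
      Gamma α * Gamma β / Gamma (α + β) * rlK (α + β) (t - u) := by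
  rcases le_or_gt t u with h | h
  · rw [rlK_neg _ (sub_nonpos.2 h), mul_zero]
    apply integral_eq_zero_of_ae
    refine Filter.Eventually.of_forall fun τ => ?_
    rcases le_or_gt t τ with h' | h'
    · simp [rlK_neg α (sub_nonpos.2 h')]
    · simp [rlK_neg β (sub_nonpos.2 (h'.le.trans h))]
  · have e : (fun τ => rlK α (t - τ) * rlK β (τ - u)) =
        (Ioo u t).indicator fun τ => (τ - u) ^ (β - 1) * (t - u - (τ - u)) ^ (α - 1) := by
      funext τ
      by_cases hτ : τ ∈ Ioo u t
      · rw [indicator_of_mem hτ, rlK_pos _ (sub_pos.2 hτ.2), rlK_pos _ (sub_pos.2 hτ.1)]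
        rw [mul_comm, sub_sub_sub_cancel_right]
      · rw [indicator_of_notMem hτ]
        rcases le_or_gt t τ with h' | h'
        · simp [rlK_neg α (sub_nonpos.2 h')]
        · have : τ ≤ u := by by_contra hc; exact hτ ⟨not_le.1 hc, h'⟩
          simp [rlK_neg β (sub_nonpos.2 this)]
    rw [e, MeasureTheory.integral_indicator measurableSet_Ioo, ← integral_Ioc_eq_integral_Ioo,
      ← intervalIntegral.integral_of_le h.le,
      intervalIntegral.integral_comp_sub_right
        (fun x => x ^ (β - 1) * (t - u - x) ^ (α - 1)), sub_self,
      rl_beta α β _ hα hβ (sub_pos.2 h), rlK_pos _ (sub_pos.2 h)]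

open MeasureTheory in
lemma rlK_conv_int (α β t u : ℝ) (hα : 0 < α) (hβ : 0 < β) :
    Integrable (fun τ => rlK α (t - τ) * rlK β (τ - u)) := by
  rcases le_or_gt t u with h | h
  · refine (integrable_zero ℝ ℝ volume).congr (Filter.Eventually.of_forall ?_)
    intro τ
    rcases le_or_gt t τ with h' | h'
    · simp [rlK_neg α (sub_nonpos.2 h')]
    · simp [rlK_neg β (sub_nonpos.2 (h'.le.trans h))]
  · by_contra hc
    have h1 := rlK_conv α β t u hα hβ
    rw [integral_undef hc, rlK_pos _ (sub_pos.2 h)] at h1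
    have := Gamma_pos_of_pos hα
    have := Gamma_pos_of_pos hβ
    have := Gamma_pos_of_pos (add_pos hα hβ)
    have := rpow_pos_of_pos (sub_pos.2 h) (α + β - 1)
    have : 0 < Gamma α * Gamma β / Gamma (α + β) * (t - u) ^ (α + β - 1) := by positivity
    linarith

open MeasureTheory in
/-- Interval integral against the kernel as a full integral. -/
lemma rlK_int_eq (a s t : ℝ) (hs : 0 ≤ s) (hst : s ≤ t) (f : ℝ → ℝ) :
    ∫ u, rlK a (s - u) * (Ioc 0 t).indicator f u = ∫ u in (0 : ℝ)..s, (s - u) ^ (a - 1) * f u := by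
  rw [intervalIntegral.integral_of_le hs, integral_Ioc_eq_integral_Ioo,
    ← MeasureTheory.integral_indicator measurableSet_Ioo]
  congr 1
  funext u
  by_cases hu : u ∈ Ioo 0 s
  · rw [indicator_of_mem hu, rlK_pos _ (sub_pos.2 hu.2),
      indicator_of_mem (show u ∈ Ioc 0 t from ⟨hu.1, hu.2.le.trans hst⟩)]
  · rw [indicator_of_notMem hu]
    rcases le_or_gt s u with h' | h'
    · simp [rlK_neg a (sub_nonpos.2 h')]
    · have : u ≤ 0 := by by_contra hc; exact hu ⟨not_le.1 hc, h'⟩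
      rw [indicator_of_notMem (fun h => absurd h.1 (not_lt.2 this)), mul_zero]

open MeasureTheory in
lemma rlK_int_f (a t : ℝ) (ha : 0 < a) (ht : 0 ≤ t) (f : ℝ → ℝ) (hf : ContinuousOn f (Icc 0 t)) :
    Integrable (fun u => rlK a (t - u) * (Ioc 0 t).indicator f u) := by
  have h1 : IntervalIntegrable (fun u => (t - u) ^ (a - 1)) volume 0 t := by
    have := (intervalIntegral.intervalIntegrable_rpow' (a := 0) (b := t)
      (show -1 < a - 1 by linarith)).comp_sub_left t
    simpa using this.symm
  have h2 : IntervalIntegrable (fun u => (t - u) ^ (a - 1) * f u) volume 0 t :=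
    h1.mul_continuousOn (by rwa [uIcc_of_le ht])
  rw [intervalIntegrable_iff_integrableOn_Ioo_of_le ht,
    ← integrable_indicator_iff measurableSet_Ioo] at h2
  refine h2.congr (Filter.Eventually.of_forall ?_)
  intro u
  simp only
  by_cases hu : u ∈ Ioo 0 t
  · rw [indicator_of_mem hu, rlK_pos _ (sub_pos.2 hu.2),
      indicator_of_mem (show u ∈ Ioc 0 t from ⟨hu.1, hu.2.le⟩)]
  · rw [indicator_of_notMem hu]
    rcases le_or_gt t u with h' | h'
    · simp [rlK_neg a (sub_nonpos.2 h')]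
    · have : u ≤ 0 := by by_contra hc; exact hu ⟨not_le.1 hc, h'⟩
      rw [indicator_of_notMem (fun h => absurd h.1 (not_lt.2 this)), mul_zero]

open MeasureTheory in
lemma rl_main (α β t : ℝ) (hα : 0 < α) (hβ : 0 < β) (ht : 0 < t)
    (f : ℝ → ℝ) (hf : ContinuousOn f (Icc 0 t)) :
    ∫ τ in (0 : ℝ)..t, (t - τ) ^ (α - 1) * ∫ u in (0 : ℝ)..τ, (τ - u) ^ (β - 1) * f u =
      Gamma α * Gamma β / Gamma (α + β) *
        ∫ u in (0 : ℝ)..t, (t - u) ^ (α + β - 1) * f u := by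
  set g := (Ioc 0 t).indicator f with hg
  have hgm : AEStronglyMeasurable g volume :=
    (aestronglyMeasurable_indicator_iff measurableSet_Ioc).2
      ((hf.mono Ioc_subset_Icc_self).aestronglyMeasurable measurableSet_Ioc)
  have hI : Integrable (Function.uncurry fun τ u : ℝ => rlK α (t - τ) * (rlK β (τ - u) * g u))
      (volume.prod volume) := by
    have hm : AEStronglyMeasurable
        (Function.uncurry fun τ u : ℝ => rlK α (t - τ) * (rlK β (τ - u) * g u))
        (volume.prod volume) := by
      refine AEStronglyMeasurable.mul (f := fun p : ℝ × ℝ => rlK α (t - p.1))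
        (g := fun p : ℝ × ℝ => rlK β (p.1 - p.2) * g p.2) ?_
        (AEStronglyMeasurable.mul (f := fun p : ℝ × ℝ => rlK β (p.1 - p.2))
          (g := fun p : ℝ × ℝ => g p.2) ?_ hgm.comp_snd)
      · exact ((rlK_meas α).comp (by fun_prop)).aestronglyMeasurable
      · exact ((rlK_meas β).comp (by fun_prop)).aestronglyMeasurable
    rw [integrable_prod_iff' hm]
    constructor
    · refine Filter.Eventually.of_forall fun u => ?_
      simp only [Function.uncurry, ← mul_assoc]
      exact (rlK_conv_int α β t u hα hβ).mul_const _
    · have e : ∀ u, ∫ τ, ‖Function.uncurry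
          (fun τ u : ℝ => rlK α (t - τ) * (rlK β (τ - u) * g u)) (τ, u)‖ =
          Gamma α * Gamma β / Gamma (α + β) * ‖rlK (α + β) (t - u) * g u‖ := by
        intro u
        simp only [Function.uncurry, ← mul_assoc, norm_mul, Real.norm_of_nonneg (rlK_nonneg _ _)]
        rw [MeasureTheory.integral_mul_const, rlK_conv α β t u hα hβ]
      simp only [e]
      exact (rlK_int_f _ _ (add_pos hα hβ) ht.le f hf).norm.const_mul _
  have hs := integral_integral_swap hI
  have hL : ∫ τ, ∫ u, rlK α (t - τ) * (rlK β (τ - u) * g u) =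
      ∫ τ in (0 : ℝ)..t, (t - τ) ^ (α - 1) * ∫ u in (0 : ℝ)..τ, (τ - u) ^ (β - 1) * f u := by
    rw [← rlK_int_eq α t t ht.le le_rfl
      (fun τ => ∫ u in (0 : ℝ)..τ, (τ - u) ^ (β - 1) * f u)]
    congr 1
    funext τ
    rw [MeasureTheory.integral_const_mul]
    by_cases hτ : τ ∈ Ioc 0 t
    · rw [indicator_of_mem hτ, rlK_int_eq β τ t hτ.1.le hτ.2 f]
    · rw [indicator_of_notMem hτ]
      rcases le_or_gt t τ with h' | h'
      · simp [rlK_neg α (sub_nonpos.2 h')]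
      · have h0 : τ ≤ 0 := by by_contra hc; exact hτ ⟨not_le.1 hc, h'.le⟩
        congr 1
        apply integral_eq_zero_of_ae
        refine Filter.Eventually.of_forall fun u => ?_
        by_cases hu : u ∈ Ioc 0 t
        · simp [rlK_neg β (show τ - u ≤ 0 by linarith [hu.1])]
        · simp [hg, indicator_of_notMem hu]
  have hR : ∫ u, ∫ τ, rlK α (t - τ) * (rlK β (τ - u) * g u) =
      Gamma α * Gamma β / Gamma (α + β) *
        ∫ u in (0 : ℝ)..t, (t - u) ^ (α + β - 1) * f u := by
    simp only [← mul_assoc, MeasureTheory.integral_mul_const, rlK_conv α β t _ hα hβ]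
    simp only [mul_assoc, MeasureTheory.integral_const_mul]
    rw [rlK_int_eq (α + β) t t ht.le le_rfl f]
  rw [← hL, hs, hR]

/-- Additive index law (semigroup property) of the Riemann–Liouville fractional
integral: for `α, β > 0`, `f` continuous on `[0, T]` and `t ∈ (0, T]`,
`I^α (I^β f) (t) = I^{α+β} f (t)`. -/
theorem riemann_liouville_semigroup (α β T : ℝ) (hα : 0 < α) (hβ : 0 < β)
    (hT : 0 < T) (f : ℝ → ℝ) (hf : ContinuousOn f (Icc 0 T))
    (t : ℝ) (ht : t ∈ Ioc 0 T) :
    (1 / Real.Gamma α) * ∫ τ in (0 : ℝ)..t, (t - τ) ^ (α - 1) *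
        ((1 / Real.Gamma β) * ∫ u in (0 : ℝ)..τ, (τ - u) ^ (β - 1) * f u) =
      (1 / Real.Gamma (α + β)) *
        ∫ u in (0 : ℝ)..t, (t - u) ^ (α + β - 1) * f u := by
  have h := rl_main α β t hα hβ ht.1 f (hf.mono (Icc_subset_Icc_right ht.2))
  simp only [mul_left_comm _ (1 / Real.Gamma β)]
  rw [intervalIntegral.integral_const_mul, h]
  have := (Gamma_pos_of_pos hα).ne'
  have := (Gamma_pos_of_pos hβ).ne'
  field_simp
end

section
/- Let r > 0 be a real number, let f : ℝ → ℝ be measurable and bounded on [0, ∞), and let s > 0 be real. Then ∫_0^∞ e^{−st} [ (1/Γ(r)) ∫_0^t (t − τ)^{r−1} f(τ) dτ ] dt = s^{−r} · ∫_0^∞ e^{−st} f(t) dt. (Laplace transform rule for the fractional integral: L{I^r f}(s) = s^{−r} F(s), the zero-initial-condition case of the Laplace transform formula for fractional differintegrals.) -/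
open Real Set MeasureTheory intervalIntegral

/-- Laplace transform rule for the Riemann–Liouville fractional integral:
for `r > 0`, `f` measurable and bounded on `[0, ∞)` and real `s > 0`,
`L{I^r f}(s) = s^{-r} F(s)`. -/
theorem laplace_fractional_integral (r : ℝ) (hr : 0 < r) (f : ℝ → ℝ)
    (hmeas : Measurable f) (hbdd : ∃ C : ℝ, ∀ t ≥ (0 : ℝ), |f t| ≤ C)
    (s : ℝ) (hs : 0 < s) :
    ∫ t in Ioi (0 : ℝ), Real.exp (-(s * t)) *
        ((1 / Real.Gamma r) * ∫ τ in (0 : ℝ)..t, (t - τ) ^ (r - 1) * f τ) =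
      s ^ (-r) * ∫ t in Ioi (0 : ℝ), Real.exp (-(s * t)) * f t := by
  obtain ⟨C, hC⟩ := hbdd
  have hG : 0 < Real.Gamma r := Real.Gamma_pos_of_pos hr
  have key := Real.integral_rpow_mul_exp_neg_mul_Ioi hr hs
  have hg : IntegrableOn (fun t : ℝ => t ^ (r - 1) * Real.exp (-(s * t))) (Ioi 0) := by
    by_contra h
    rw [integral_undef h] at key
    have : 0 < (1 / s) ^ r * Real.Gamma r := by positivity
    linarith
  have he : IntegrableOn (fun t : ℝ => Real.exp (-(s * t))) (Ioi 0) := by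
    simpa only [neg_mul] using integrableOn_exp_mul_Ioi (neg_lt_zero.mpr hs) 0
  have hf : IntegrableOn (fun t : ℝ => Real.exp (-(s * t)) * f t) (Ioi 0) := by
    refine Integrable.mul_bdd (c := C) he hmeas.aestronglyMeasurable ?_
    filter_upwards [ae_restrict_mem measurableSet_Ioi] with t ht
    exact hC t (le_of_lt ht)
  have conv := integral_posConvolution (μ := volume) (ν := volume) hf hg
    (ContinuousLinearMap.mul ℝ ℝ)
  simp only [ContinuousLinearMap.mul_apply'] at conv
  rw [key] at conv
  have h1 : ∀ t : ℝ, Real.exp (-(s * t)) *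
        ((1 / Real.Gamma r) * ∫ τ in (0 : ℝ)..t, (t - τ) ^ (r - 1) * f τ) =
      (1 / Real.Gamma r) * ∫ τ in (0 : ℝ)..t, Real.exp (-(s * τ)) * f τ *
        ((t - τ) ^ (r - 1) * Real.exp (-(s * (t - τ)))) := by
    intro t
    rw [mul_left_comm, ← intervalIntegral.integral_const_mul]
    congr 2
    funext τ
    have : Real.exp (-(s * t)) = Real.exp (-(s * τ)) * Real.exp (-(s * (t - τ))) := by
      rw [← Real.exp_add]; ring_nf
    rw [this]; ring
  simp_rw [h1]
  rw [MeasureTheory.integral_const_mul, conv, Real.rpow_neg hs.le, one_div s,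
    Real.inv_rpow hs.le]
  field_simp
end

section
/- Consider the polynomial P(w) = (4/5)·w^22 + (1/2)·w^9 + 1 over ℂ (obtained from the characteristic pseudo-polynomial 0.8 s^{2.2} + 0.5 s^{0.9} + 1 by the substitution w = s^{1/10}). There exists a root w of P with |arg w| < π/10, and every root w of P with |arg w| < π/10 satisfies |arg w| > π/20. (Hence the fractional-order system 0.8 D^{2.2} y + 0.5 D^{0.9} y + y = u is stable: all roots on the first Riemann sheet lie in the stable sector.) -/
open Real

lemma aux_key (r t : ℝ) (hr : 0 < r) (h1 : π / 22 ≤ t) (h2 : t ≤ π / 20)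
    (him : (4 / 5) * (r ^ 22 * sin (22 * t)) + (1 / 2) * (r ^ 9 * sin (9 * t)) = 0) :
    (4 / 5) * (r ^ 22 * cos (22 * t)) + (1 / 2) * (r ^ 9 * cos (9 * t)) + 1 < 0 := by
  have hp1 := Real.pi_gt_d2
  have hp2 := Real.pi_lt_d2
  have e1 : sin (22 * t) = - sin (22 * t - π) := by rw [Real.sin_sub_pi]; ring
  have e2 : cos (22 * t) = - cos (22 * t - π) := by rw [Real.cos_sub_pi]; ring
  have e3 : sin (9 * t) = cos (π / 2 - 9 * t) := by rw [Real.cos_pi_div_two_sub]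
  have e4 : cos (9 * t) = sin (π / 2 - 9 * t) := by rw [Real.sin_pi_div_two_sub]
  rw [e1, e3] at him
  rw [e2, e4]
  have a1 : sin (22 * t - π) ≤ 0.315 := by
    have := Real.sin_le (x := 22 * t - π) (by linarith)
    linarith
  have a2 : 0.95 ≤ cos (22 * t - π) := by
    have := Real.one_sub_sq_div_two_le_cos (x := 22 * t - π)
    have h0 : 0 ≤ 22 * t - π := by linarith
    have h3 : 22 * t - π ≤ 0.315 := by linarith
    nlinarith
  have a3 : 0.957 ≤ cos (π / 2 - 9 * t) := by
    have := Real.one_sub_sq_div_two_le_cos (x := π / 2 - 9 * t)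
    have h0 : 0 ≤ π / 2 - 9 * t := by linarith
    have h3 : π / 2 - 9 * t ≤ 0.287 := by linarith
    nlinarith
  have a4 : sin (π / 2 - 9 * t) ≤ 0.287 := by
    have := Real.sin_le (x := π / 2 - 9 * t) (by linarith)
    linarith
  generalize sin (22 * t - π) = s at *
  generalize cos (22 * t - π) = c at *
  generalize cos (π / 2 - 9 * t) = s' at *
  generalize sin (π / 2 - 9 * t) = c' at *
  have r9 : 0 < r ^ 9 := by positivity
  have r22 : 0 < r ^ 22 := by positivity
  have hA : 3 * ((1 / 2) * r ^ 9) ≤ (4 / 5) * r ^ 22 := by nlinarith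
  have h13 : 1.875 ≤ r ^ 13 := by
    have : r ^ 22 = r ^ 9 * r ^ 13 := by ring
    rw [this] at hA
    by_contra hlt
    push Not at hlt
    nlinarith
  have hr1 : 1.04 ≤ r := by
    by_contra hlt
    push Not at hlt
    have := pow_le_pow_left₀ hr.le hlt.le 13
    norm_num at this h13
    linarith
  have h9 : 1.4 ≤ r ^ 9 := by
    have := pow_le_pow_left₀ (by norm_num) hr1 9
    norm_num at this ⊢
    linarith
  nlinarith [mul_le_mul_of_nonneg_left a2 r22.le, mul_le_mul_of_nonneg_left a4 r9.le]

lemma aux_pow (r t : ℝ) :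
    (4 / 5) * ((r : ℂ) * (Complex.cos t + Complex.sin t * Complex.I)) ^ 22
      + (1 / 2) * ((r : ℂ) * (Complex.cos t + Complex.sin t * Complex.I)) ^ 9 + 1
    = (((4 / 5) * (r ^ 22 * cos (22 * t)) + (1 / 2) * (r ^ 9 * cos (9 * t)) + 1 : ℝ) : ℂ)
      + (((4 / 5) * (r ^ 22 * sin (22 * t)) + (1 / 2) * (r ^ 9 * sin (9 * t)) : ℝ) : ℂ)
        * Complex.I := by
  rw [mul_pow, mul_pow, Complex.cos_add_sin_mul_I_pow, Complex.cos_add_sin_mul_I_pow]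
  push_cast
  ring

lemma aux_exists : ∃ r t : ℝ, 0 < r ∧ π / 20 ≤ t ∧ t ≤ 3 * π / 44 ∧
    (4 / 5) * (r ^ 22 * sin (22 * t)) + (1 / 2) * (r ^ 9 * sin (9 * t)) = 0 ∧
    (4 / 5) * (r ^ 22 * cos (22 * t)) + (1 / 2) * (r ^ 9 * cos (9 * t)) + 1 = 0 := by
  have hp := Real.pi_pos
  have hs : ∀ t ∈ Set.Icc (π / 20) (3 * π / 44), sin (22 * t) < 0 := by
    intro t ht
    have : 0 < sin (22 * t - π) :=
      Real.sin_pos_of_pos_of_lt_pi (by linarith [ht.1]) (by linarith [ht.2])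
    rw [Real.sin_sub_pi] at this
    linarith
  have hs9 : ∀ t ∈ Set.Icc (π / 20) (3 * π / 44), 0 < sin (9 * t) := by
    intro t ht
    exact Real.sin_pos_of_pos_of_lt_pi (by linarith [ht.1]) (by linarith [ht.2])
  let q : ℝ → ℝ := fun t => (5 / 8) * sin (9 * t) / (-sin (22 * t))
  let ρ : ℝ → ℝ := fun t => (q t) ^ ((1 : ℝ) / 13)
  have hq : ∀ t ∈ Set.Icc (π / 20) (3 * π / 44), 0 < q t := fun t ht =>
    div_pos (by linarith [hs9 t ht]) (by linarith [hs t ht])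
  have hρ : ∀ t ∈ Set.Icc (π / 20) (3 * π / 44), 0 < ρ t := fun t ht =>
    Real.rpow_pos_of_pos (hq t ht) _
  have hρ13 : ∀ t ∈ Set.Icc (π / 20) (3 * π / 44), ρ t ^ 13 = q t := by
    intro t ht
    simp only [ρ]
    rw [← Real.rpow_natCast, ← Real.rpow_mul (hq t ht).le]
    norm_num
  have him : ∀ t ∈ Set.Icc (π / 20) (3 * π / 44),
      (4 / 5) * (ρ t ^ 22 * sin (22 * t)) + (1 / 2) * (ρ t ^ 9 * sin (9 * t)) = 0 := by
    intro t ht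
    have e : ρ t ^ 22 = ρ t ^ 9 * ρ t ^ 13 := by ring
    rw [e, hρ13 t ht]
    have hne := (hs t ht).ne
    have hqs : q t * sin (22 * t) = -((5 / 8) * sin (9 * t)) := by
      simp only [q]
      rw [div_neg, neg_mul, div_mul_cancel₀ _ hne]
    linear_combination (4 / 5) * ρ t ^ 9 * hqs
  have hqc : ContinuousOn q (Set.Icc (π / 20) (3 * π / 44)) := by
    apply ContinuousOn.div
    · fun_prop
    · fun_prop
    · intro t ht
      exact neg_ne_zero.mpr (hs t ht).ne
  have hρc : ContinuousOn ρ (Set.Icc (π / 20) (3 * π / 44)) :=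
    hqc.rpow_const (fun t ht => Or.inl (hq t ht).ne')
  let F : ℝ → ℝ := fun t =>
    (4 / 5) * (ρ t ^ 22 * cos (22 * t)) + (1 / 2) * (ρ t ^ 9 * cos (9 * t)) + 1
  have hFc : ContinuousOn F (Set.Icc (π / 20) (3 * π / 44)) := by
    simp only [F]
    fun_prop
  have hle : π / 20 ≤ 3 * π / 44 := by linarith
  have hF1 : F (π / 20) < 0 :=
    aux_key _ _ (hρ _ ⟨le_refl _, hle⟩) (by linarith) le_rfl (him _ ⟨le_refl _, hle⟩)
  have hF2 : 0 < F (3 * π / 44) := by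
    have hm : 3 * π / 44 ∈ Set.Icc (π / 20) (3 * π / 44) := ⟨hle, le_refl _⟩
    have e1 : 22 * (3 * π / 44) = π / 2 + π := by ring
    have hc : cos (22 * (3 * π / 44)) = 0 := by
      rw [e1, Real.cos_add_pi, Real.cos_pi_div_two, neg_zero]
    have hsn : sin (22 * (3 * π / 44)) = -1 := by
      rw [e1, Real.sin_add_pi, Real.sin_pi_div_two]
    have h13 : ρ (3 * π / 44) ^ 13 ≤ 1 := by
      rw [hρ13 _ hm]
      simp only [q]
      rw [hsn]
      have := Real.sin_le_one (9 * (3 * π / 44))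
      norm_num
      linarith
    have h1 : ρ (3 * π / 44) ≤ 1 := by
      by_contra h
      push Not at h
      have := one_lt_pow₀ h (n := 13) (by norm_num)
      linarith
    have h9 : ρ (3 * π / 44) ^ 9 ≤ 1 := pow_le_one₀ (hρ _ hm).le h1
    have h9' : 0 < ρ (3 * π / 44) ^ 9 := pow_pos (hρ _ hm) _
    have hcc := Real.neg_one_le_cos (9 * (3 * π / 44))
    simp only [F]
    rw [hc]
    nlinarith
  obtain ⟨t, ht, hFt⟩ := intermediate_value_Icc hle hFc ⟨hF1.le, hF2.le⟩
  exact ⟨ρ t, t, hρ t ht, ht.1, ht.2, him t ht, hFt⟩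

/-- Stability of the fractional-order system `0.8 D^{2.2} y + 0.5 D^{0.9} y + y = u`:
for the polynomial `P(w) = (4/5) w²² + (1/2) w⁹ + 1` (obtained by `w = s^{1/10}`),
there is a root with `|arg w| < π/10`, and every root on the first Riemann sheet
`|arg w| < π/10` lies in the stable sector `|arg w| > π/20`. -/
theorem example4_stability :
    (∃ w : ℂ, (4 / 5) * w ^ 22 + (1 / 2) * w ^ 9 + 1 = 0 ∧
        |Complex.arg w| < π / 10) ∧
      ∀ w : ℂ, (4 / 5) * w ^ 22 + (1 / 2) * w ^ 9 + 1 = 0 →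
        |Complex.arg w| < π / 10 → |Complex.arg w| > π / 20 := by
  have hp := Real.pi_pos
  constructor
  · obtain ⟨r, t, hr, h1, h2, him, hre⟩ := aux_exists
    refine ⟨(r : ℂ) * (Complex.cos t + Complex.sin t * Complex.I), ?_, ?_⟩
    · rw [aux_pow, him, hre]
      simp
    · rw [Complex.arg_mul_cos_add_sin_mul_I hr ⟨by linarith, by linarith⟩, abs_lt]
      constructor <;> linarith
  · intro w hw _
    by_contra hcon
    push Not at hcon
    have hw0 : w ≠ 0 := by
      rintro rfl
      norm_num at hw
    have hr : 0 < ‖w‖ := norm_pos_iff.mpr hw0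
    rw [← Complex.norm_mul_cos_add_sin_mul_I w, aux_pow] at hw
    have hre := congrArg Complex.re hw
    have him := congrArg Complex.im hw
    simp only [Complex.add_re, Complex.add_im, Complex.ofReal_re, Complex.ofReal_im,
      Complex.re_ofReal_mul, Complex.im_ofReal_mul, Complex.I_re, Complex.I_im, mul_zero,
      mul_one, add_zero, zero_add, Complex.zero_re, Complex.zero_im] at hre him
    generalize ‖w‖ = r at *
    generalize Complex.arg w = t at *
    have hre' : (4 / 5) * (r ^ 22 * cos (22 * |t|)) + (1 / 2) * (r ^ 9 * cos (9 * |t|)) + 1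
        = 0 := by
      rcases abs_choice t with h | h <;> rw [h]
      · exact hre
      · simpa only [mul_neg, Real.cos_neg] using hre
    have him' : (4 / 5) * (r ^ 22 * sin (22 * |t|)) + (1 / 2) * (r ^ 9 * sin (9 * |t|))
        = 0 := by
      rcases abs_choice t with h | h <;> rw [h]
      · exact him
      · simp only [mul_neg, Real.sin_neg]
        linarith
    have hnn := abs_nonneg t
    generalize |t| = u at *
    rcases le_or_gt (π / 22) u with hu | hu
    · have := aux_key r u hr hu hcon him'
      linarith
    · have r9 : 0 < r ^ 9 := by positivity
      have r22 : 0 < r ^ 22 := by positivity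
      rcases hnn.eq_or_lt with h0 | h0
      · rw [← h0] at hre'
        simp only [mul_zero, Real.cos_zero, mul_one] at hre'
        linarith
      · have s1 : 0 < sin (22 * u) :=
          Real.sin_pos_of_pos_of_lt_pi (by linarith) (by linarith)
        have s2 : 0 < sin (9 * u) :=
          Real.sin_pos_of_pos_of_lt_pi (by linarith) (by linarith)
        have := mul_pos r9 s2
        have := mul_pos r22 s1
        linarith
end

section
/- Consider the polynomial P(w) = (3969/100)·w^5 + (1246/100)·w^4 + 65068/1000 over ℂ (obtained from the closed-loop characteristic pseudo-polynomial 39.69 s^{1.25} + 12.46 s + 65.068 by the substitution w = s^{1/4}). There exists a root w of P with |arg w| < π/4, and every root w of P with |arg w| < π/4 satisfies |arg w| > π/8. (Hence the fractional-order closed-loop control system with transfer function (12.46 s + 64.47)/(39.69 s^{1.25} + 12.46 s + 65.068) is stable.) -/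
open Real

lemma polar_pow (r t : ℝ) (n : ℕ) :
    ((r : ℂ) * Complex.exp (t * Complex.I)) ^ n
      = (r : ℂ) ^ n * (((Real.cos (n * t) : ℝ) : ℂ) + ((Real.sin (n * t) : ℝ) : ℂ) * Complex.I) := by
  rw [mul_pow, ← Complex.exp_nat_mul]
  congr 1
  push_cast
  rw [← Complex.exp_mul_I]
  congr 1
  ring

lemma exists_angle : ∃ t : ℝ, π / 5 < t ∧ t < π / 4 ∧
    (1246 / 100) ^ 5 * sin (4 * t) ^ 4 * sin t
      + 65068 / 1000 * (3969 / 100) ^ 4 * sin (5 * t) ^ 5 = 0 := by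
  have hpi := Real.pi_pos
  have hc : ContinuousOn (fun t : ℝ => (1246 / 100) ^ 5 * sin (4 * t) ^ 4 * sin t
      + 65068 / 1000 * (3969 / 100) ^ 4 * sin (5 * t) ^ 5) (Set.Icc (π / 5) (π / 4)) := by
    fun_prop
  have h := intermediate_value_Ioo' (by linarith : π / 5 ≤ π / 4) hc
  have h0 : (0 : ℝ) ∈ Set.Ioo
      ((1246 / 100) ^ 5 * sin (4 * (π / 4)) ^ 4 * sin (π / 4)
        + 65068 / 1000 * (3969 / 100) ^ 4 * sin (5 * (π / 4)) ^ 5)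
      ((1246 / 100) ^ 5 * sin (4 * (π / 5)) ^ 4 * sin (π / 5)
        + 65068 / 1000 * (3969 / 100) ^ 4 * sin (5 * (π / 5)) ^ 5) := by
    have e1 : 4 * (π / 4) = π := by ring
    have e2 : 5 * (π / 4) = π / 4 + π := by ring
    have e3 : 5 * (π / 5) = π := by ring
    have p1 : 0 < sin (π / 4) := sin_pos_of_pos_of_lt_pi (by linarith) (by linarith)
    have p2 : 0 < sin (π / 5) := sin_pos_of_pos_of_lt_pi (by linarith) (by linarith)
    have p3 : 0 < sin (4 * (π / 5)) := sin_pos_of_pos_of_lt_pi (by linarith) (by linarith)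
    rw [e1, e2, e3, sin_add_pi, sin_pi]
    constructor
    · have : 0 < sin (π / 4) ^ 5 := by positivity
      have e : (-sin (π / 4)) ^ 5 = - sin (π / 4) ^ 5 := by ring
      rw [e]
      norm_num
    · norm_num
      positivity
  obtain ⟨t, ht, h⟩ := h h0
  exact ⟨t, ht.1, ht.2, h⟩

lemma exists_root : ∃ w : ℂ, (3969 / 100) * w ^ 5 + (1246 / 100) * w ^ 4 + 65068 / 1000 = 0 ∧
        |Complex.arg w| < π / 4 := by
  obtain ⟨t, h1, h2, h⟩ := exists_angle
  have hpi := Real.pi_pos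
  have s4 : 0 < sin (4 * t) := sin_pos_of_pos_of_lt_pi (by linarith) (by linarith)
  have s5 : sin (5 * t) < 0 := by
    have := sin_pos_of_pos_of_lt_pi (x := 5 * t - π) (by linarith) (by linarith)
    rw [sin_sub_pi] at this
    linarith
  have hs5 : sin (5 * t) ≠ 0 := s5.ne
  obtain ⟨r, hr⟩ : ∃ r : ℝ, r = (1246 / 3969) * sin (4 * t) / (- sin (5 * t)) := ⟨_, rfl⟩
  have hr0 : 0 < r := by
    rw [hr]
    have : 0 < - sin (5 * t) := by linarith
    positivity
  have a1 : sin (5 * t) = sin (4 * t) * cos t + cos (4 * t) * sin t := by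
    rw [← sin_add]; ring_nf
  have a2 : cos (5 * t) = cos (4 * t) * cos t - sin (4 * t) * sin t := by
    rw [← cos_add]; ring_nf
  have a3 := sin_sq_add_cos_sq (4 * t)
  have k : r * sin (5 * t) = - (1246 / 3969) * sin (4 * t) := by
    rw [hr, div_neg, neg_mul, div_mul_cancel₀ _ hs5, neg_mul]
  refine ⟨(r : ℂ) * Complex.exp (t * Complex.I), ?_, ?_⟩
  · rw [polar_pow, polar_pow]
    have kim : 3969 / 100 * r ^ 5 * sin (5 * t) + 1246 / 100 * r ^ 4 * sin (4 * t) = 0 := by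
      linear_combination (3969 / 100 * r ^ 4) * k
    have kre : 3969 / 100 * r ^ 5 * cos (5 * t) + 1246 / 100 * r ^ 4 * cos (4 * t)
        + 65068 / 1000 = 0 := by
      have b1 : (3969 / 100 * r * cos (5 * t) + 1246 / 100 * cos (4 * t)) * sin (5 * t)
          = 1246 / 100 * sin t := by
        have : cos (4 * t) * sin (5 * t) - sin (4 * t) * cos (5 * t) = sin t := by
          rw [a1, a2]; linear_combination sin t * a3
        linear_combination (3969 / 100 * cos (5 * t)) * k + 1246 / 100 * this
      have b2 : r ^ 4 * sin (5 * t) ^ 4 = (1246 / 3969) ^ 4 * sin (4 * t) ^ 4 := by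
        rw [← mul_pow, k]; ring
      have : (3969 / 100 * r ^ 5 * cos (5 * t) + 1246 / 100 * r ^ 4 * cos (4 * t)
        + 65068 / 1000) * sin (5 * t) ^ 5 = 0 := by
        linear_combination (r ^ 4 * sin (5 * t) ^ 4) * b1 + 1246 / 100 * sin t * b2
          + h / (3969 / 100) ^ 4
      exact (mul_eq_zero.mp this).resolve_right (pow_ne_zero _ hs5)
    have kim' := congrArg (fun x : ℝ => (x : ℂ)) kim
    have kre' := congrArg (fun x : ℝ => (x : ℂ)) kre
    push_cast at kim' kre' ⊢
    linear_combination kre' + Complex.I * kim'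
  · rw [Complex.exp_mul_I, Complex.arg_mul_cos_add_sin_mul_I hr0 ⟨by linarith, by linarith⟩,
      abs_of_pos (by linarith)]
    exact h2

lemma no_root (w : ℂ) (hw : (3969 / 100) * w ^ 5 + (1246 / 100) * w ^ 4 + 65068 / 1000 = 0) :
    |Complex.arg w| > π / 8 := by
  by_contra hn
  have hle : |Complex.arg w| ≤ π / 8 := not_lt.mp hn
  have hpi := Real.pi_pos
  have hw0 : w ≠ 0 := by
    rintro rfl
    norm_num at hw
  have hr : 0 < ‖w‖ := norm_pos_iff.mpr hw0
  rw [← Complex.norm_mul_exp_arg_mul_I w, polar_pow, polar_pow] at hw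
  obtain ⟨l, u⟩ := abs_le.mp hle
  generalize Complex.arg w = t at *
  generalize ‖w‖ = r at *
  have e : ((3969 / 100 * r ^ 5 * cos (5 * t) + 1246 / 100 * r ^ 4 * cos (4 * t)
        + 65068 / 1000 : ℝ) : ℂ)
      + ((3969 / 100 * r ^ 5 * sin (5 * t) + 1246 / 100 * r ^ 4 * sin (4 * t) : ℝ) : ℂ)
        * Complex.I = 0 := by
    rw [← hw]; push_cast; ring
  have re := congrArg Complex.re e
  have im := congrArg Complex.im e
  rw [← Complex.mk_eq_add_mul_I] at re im
  simp only [Complex.zero_re, Complex.zero_im] at re im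
  rcases lt_trichotomy t 0 with ht | ht | ht
  · have p4 : sin (4 * t) < 0 := sin_neg_of_neg_of_neg_pi_lt (by linarith) (by linarith)
    have p5 : sin (5 * t) < 0 := sin_neg_of_neg_of_neg_pi_lt (by linarith) (by linarith)
    have q4 := mul_neg_of_pos_of_neg (show 0 < 1246 / 100 * r ^ 4 by positivity) p4
    have q5 := mul_neg_of_pos_of_neg (show 0 < 3969 / 100 * r ^ 5 by positivity) p5
    linarith
  · subst ht
    simp only [mul_zero, cos_zero, mul_one] at re
    have : 0 < 3969 / 100 * r ^ 5 + 1246 / 100 * r ^ 4 + 65068 / 1000 := by positivity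
    linarith
  · have p4 : 0 < sin (4 * t) := sin_pos_of_pos_of_lt_pi (by linarith) (by linarith)
    have p5 : 0 < sin (5 * t) := sin_pos_of_pos_of_lt_pi (by linarith) (by linarith)
    have q4 := mul_pos (show 0 < 1246 / 100 * r ^ 4 by positivity) p4
    have q5 := mul_pos (show 0 < 3969 / 100 * r ^ 5 by positivity) p5
    linarith

/-- Stability of the fractional-order closed-loop system with characteristic
pseudo-polynomial `39.69 s^{1.25} + 12.46 s + 65.068`: for the polynomial
`P(w) = (3969/100) w⁵ + (1246/100) w⁴ + 65068/1000` (obtained by `w = s^{1/4}`),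
there is a root with `|arg w| < π/4`, and every root on the first Riemann sheet
`|arg w| < π/4` lies in the stable sector `|arg w| > π/8`. -/
theorem example6_stability :
    (∃ w : ℂ, (3969 / 100) * w ^ 5 + (1246 / 100) * w ^ 4 + 65068 / 1000 = 0 ∧
        |Complex.arg w| < π / 4) ∧
      ∀ w : ℂ, (3969 / 100) * w ^ 5 + (1246 / 100) * w ^ 4 + 65068 / 1000 = 0 →
        |Complex.arg w| < π / 4 → |Complex.arg w| > π / 8 := by
  exact ⟨exists_root, fun w hw _ => no_root w hw⟩
end

section
/- The polynomial λ^27 + 35·λ^19 + 3·λ^18 − 28·λ^17 + 105·λ^10 − 21·λ^8 + 4410 has a complex root λ with λ ≠ 0 and |arg λ| < π/20. (This is the characteristic equation det(diag(λ^{m q₁}, λ^{m q₂}, λ^{m q₃}) − J) = 0, with m = 10 and orders q = (0.8, 1.0, 0.9), at the scroll saddle points of the fractional-order Chen system; the existence of a root in the unstable sector |arg λ| < γπ/2 with γ = 1/10 is the necessary condition for the system to exhibit a double-scroll chaotic attractor.) -/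
open Real

/-- Gaussian integer approximating `10^120` times the root. -/
def chenW : GaussianInt :=
  ⟨1292840250220251955012980391596981509959609613312469278279693194878504203273501913265307776633080760791688190191190349964,
   203299907525813686232301016051091809617805041375331335487115819395795731972362019172836466058809873627734654215935828512⟩

/-- Homogenized value of the polynomial at the Gaussian integer. -/
def chenV : GaussianInt :=
  chenW ^ 27 + 35 * chenW ^ 19 * (10 ^ 120) ^ 8 + 3 * chenW ^ 18 * (10 ^ 120) ^ 9
    - 28 * chenW ^ 17 * (10 ^ 120) ^ 10 + 105 * chenW ^ 10 * (10 ^ 120) ^ 17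
    - 21 * chenW ^ 8 * (10 ^ 120) ^ 19 + 4410 * (10 ^ 120) ^ 27

lemma chenV_small : (chenV.re * chenV.re + chenV.im * chenV.im) * (10 ^ 108) ^ 2
    < ((10 ^ 120) ^ 27) ^ 2 := by
  decide +kernel

open Polynomial in
/-- A monic polynomial with a small value has a nearby root. -/
lemma exists_near_root (P : ℂ[X]) (hP : P.Monic) (z : ℂ) (δ : ℝ) (hδ : 0 < δ)
    (h : ‖P.eval z‖ < δ ^ P.natDegree) : ∃ r, P.eval r = 0 ∧ ‖z - r‖ < δ := by
  by_contra! hc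
  have hs : P.Splits := IsAlgClosed.splits P
  have key : ∀ s : Multiset ℂ, (∀ r ∈ s, δ ≤ ‖z - r‖) →
      δ ^ s.card ≤ ‖(s.map (fun a => z - a)).prod‖ := by
    intro s
    induction s using Multiset.induction_on with
    | empty => simp
    | cons a s ih =>
      intro hs
      have h1 := hs a (Multiset.mem_cons_self a s)
      have h2 := ih (fun r hr => hs r (Multiset.mem_cons_of_mem hr))
      rw [Multiset.card_cons, Multiset.map_cons, Multiset.prod_cons, norm_mul, pow_succ']
      exact mul_le_mul h1 h2 (by positivity) (norm_nonneg _)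
  have h1 := key P.roots (fun r hr => hc r (Polynomial.isRoot_of_mem_roots hr))
  rw [← hs.natDegree_eq_card_roots, ← hs.eval_eq_prod_roots_of_monic hP] at h1
  linarith

theorem chen_unstable_root :
    ∃ lam : ℂ, lam ^ 27 + 35 * lam ^ 19 + 3 * lam ^ 18 - 28 * lam ^ 17 +
        105 * lam ^ 10 - 21 * lam ^ 8 + 4410 = 0 ∧
      lam ≠ 0 ∧ |Complex.arg lam| < π / 20 := by
  obtain ⟨w, hw⟩ : ∃ w : ℂ, w = GaussianInt.toComplex chenW := ⟨_, rfl⟩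
  obtain ⟨N, hN⟩ : ∃ N : ℂ, N = 10 ^ 120 := ⟨_, rfl⟩
  have hN0 : N ≠ 0 := by rw [hN]; exact pow_ne_zero _ (by norm_num)
  obtain ⟨z, hz⟩ : ∃ z : ℂ, z = w / N := ⟨_, rfl⟩
  have hV : GaussianInt.toComplex chenV = w ^ 27 + 35 * w ^ 19 * N ^ 8 + 3 * w ^ 18 * N ^ 9
      - 28 * w ^ 17 * N ^ 10 + 105 * w ^ 10 * N ^ 17 - 21 * w ^ 8 * N ^ 19 + 4410 * N ^ 27 := by
    rw [hw, hN, chenV]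
    simp only [map_add, map_sub, map_mul, map_pow, map_ofNat]
  have hval : z ^ 27 + 35 * z ^ 19 + 3 * z ^ 18 - 28 * z ^ 17 + 105 * z ^ 10 - 21 * z ^ 8 + 4410
      = GaussianInt.toComplex chenV / N ^ 27 := by
    rw [hV, hz]
    field_simp
  have hsmall : ‖GaussianInt.toComplex chenV / N ^ 27‖ < (1 / 10 ^ 4 : ℝ) ^ 27 := by
    have h1 : ((chenV.re * chenV.re + chenV.im * chenV.im : ℤ) : ℝ) * (10 ^ 108) ^ 2
        < ((10 ^ 120) ^ 27) ^ 2 := by exact_mod_cast chenV_small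
    have h2 : ‖GaussianInt.toComplex chenV‖ ^ 2
        = ((chenV.re * chenV.re + chenV.im * chenV.im : ℤ) : ℝ) := by
      rw [← Complex.normSq_eq_norm_sq, Complex.normSq_apply]
      simp
    rw [← h2, ← mul_pow] at h1
    have h3 := lt_of_pow_lt_pow_left₀ 2 (by positivity) h1
    rw [norm_div, norm_pow, hN, norm_pow, Complex.norm_ofNat, div_lt_iff₀ (by positivity)]
    have h4 : (1 / 10 ^ 4 : ℝ) ^ 27 = 1 / 10 ^ 108 := by norm_num
    rw [h4, one_div, ← div_eq_inv_mul, lt_div_iff₀ (by positivity)]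
    exact h3
  obtain ⟨r, hr, hd⟩ : ∃ r : ℂ, r ^ 27 + 35 * r ^ 19 + 3 * r ^ 18 - 28 * r ^ 17 +
        105 * r ^ 10 - 21 * r ^ 8 + 4410 = 0 ∧ ‖z - r‖ < 1 / 10 ^ 4 := by
    let P : Polynomial ℂ := .X ^ 27 + .C 35 * .X ^ 19 + .C 3 * .X ^ 18 - .C 28 * .X ^ 17 +
        .C 105 * .X ^ 10 - .C 21 * .X ^ 8 + .C 4410
    have hdeg : P.natDegree = 27 := by
      simp only [P]; compute_degree!
    have hmon : P.Monic := by
      simp only [P]; monicity!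
    have hev : ∀ x : ℂ, P.eval x = x ^ 27 + 35 * x ^ 19 + 3 * x ^ 18 - 28 * x ^ 17 +
        105 * x ^ 10 - 21 * x ^ 8 + 4410 := by
      intro x
      simp only [P, Polynomial.eval_add, Polynomial.eval_sub, Polynomial.eval_mul,
        Polynomial.eval_pow, Polynomial.eval_X, Polynomial.eval_C]
    obtain ⟨r, h1, h2⟩ := exists_near_root P hmon z (1 / 10 ^ 4) (by positivity)
      (by rw [hdeg, hev, hval]; exact hsmall)
    exact ⟨r, by rw [← hev, h1], h2⟩
  have hzr : z = ⟨(chenW.re : ℝ) / 10 ^ 120, (chenW.im : ℝ) / 10 ^ 120⟩ := by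
    have h1 : N = ((10 ^ 120 : ℝ) : ℂ) := by rw [hN]; push_cast; rfl
    rw [hz, hw, h1]
    apply Complex.ext
    · rw [Complex.div_ofReal_re]; simp
    · rw [Complex.div_ofReal_im]; simp
  have hre := (Complex.abs_re_le_norm (z - r)).trans_lt hd
  have him := (Complex.abs_im_le_norm (z - r)).trans_lt hd
  rw [Complex.sub_re, abs_lt] at hre
  rw [Complex.sub_im, abs_lt] at him
  have hz1 : 1.2928 < z.re := by rw [hzr]; norm_num [chenW]
  have hz2 : 0.2032 < z.im := by rw [hzr]; norm_num [chenW]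
  have hz3 : z.im < 0.20331 := by rw [hzr]; norm_num [chenW]
  have r1 : 1.2927 < r.re := by norm_num at *; linarith
  have r2 : 0 < r.im := by norm_num at *; linarith
  have r3 : r.im < 0.20341 := by norm_num at *; linarith
  have hr0 : r ≠ 0 := by
    rintro rfl
    simp at r2
  refine ⟨r, hr, hr0, ?_⟩
  have harg : 0 ≤ r.arg := Complex.arg_nonneg_iff.2 r2.le
  rw [abs_of_nonneg harg, Complex.arg_of_re_nonneg (by norm_num at *; linarith)]
  have hp1 := Real.pi_gt_d4
  have hp2 := Real.pi_lt_d4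
  rw [Real.arcsin_lt_iff_lt_sin' ⟨by linarith, by linarith⟩]
  have hs : (0.156 : ℝ) < Real.sin (π / 20) := by
    have h1 := Real.sin_gt_sub_cube (x := π / 20) (by positivity)
    have h2 : (π / 20) ^ 3 ≤ (0.1571 : ℝ) ^ 3 := by
      apply pow_le_pow_left₀ (by positivity)
      norm_num at *; linarith
    norm_num at *; linarith
  refine lt_trans ?_ hs
  have hnp : 0 < ‖r‖ := norm_pos_iff.2 hr0
  rw [div_lt_iff₀ hnp]
  apply lt_of_pow_lt_pow_left₀ 2 (by positivity)
  rw [mul_pow, ← Complex.normSq_eq_norm_sq, Complex.normSq_apply]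
  norm_num at *
  nlinarith
end
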